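/- arXiv:math/9902052 — 3 statements merged into one kernel-verified Lean document; each statement's English description precedes it below -/
import Mathlib

section
/- For every H-harmonic function u on B_n there exists a unique Euclidean harmonic function v on B_n with v(0) = 0 such that u(rζ) = u(0) + ∫_0^1 v(rtζ)·[(1−t)(1−tr²)]^{n/2−1} dt/t for every 0 ≤ r < 1 and every ζ ∈ S^{n-1}. -/
/-!
The map `v ↦ ∫₀¹ v(rtζ) [(1-t)(1-tr²)]^(n/2-1) dt/t` acts on each ray separately. Write
`J_{k,a} φ(s) = ∫₀¹ t^(a-1) φ(ts) [(1-t)(1-ts²)]^k dt`, so that the theorem concerns `J_{k,0}` with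
`k = n/2-1`. The proof has three ingredients.

*Inversion along rays.* Integration by parts gives the recursion
`(s d/ds + a) J_{k,a} = k (1-s²) J_{k-1,a+1}` (`J1_step`), which lowers the exponent to `0` if `n` is
even and to `-1/2` if `n` is odd. `J_{0,a}` is inverted by the Euler operator `s d/ds + a`. For
exponent `-1/2` there is an Abel-type identity `J_{-1/2,a-1/2} (1-σ²) J_{-1/2,a} = π J_{0,a-1/2}`
(`J1_comp`). Consequently `J_{k,0}` is injective on `C¹` functions vanishing at `0` (`inj_main`), and
it maps the smooth functions on the ball vanishing at `0` onto themselves (`surj_main`). Uniqueness of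
`v` follows from injectivity alone, and surjectivity yields a smooth `v` with `u - u(0) = J_{k,0} v`.

*Intertwining.* With `k = n/2-1`, `J_{k,0}(|x|²Δv) = |x|²(1-|x|²)⁻² D J_{k,0} v` (`intertwine`). Since
`D(u - u(0)) = 0`, injectivity applied to `|x|²Δv` shows that `v` is harmonic (`harmonic_of_JE`).

*Regularity.* Surjectivity requires `u` to be smooth, while `u` is only assumed to be `C²`. Let
`P = |y-a|²/(1-|y|²)`. Green's formula for `D` applied to `u` and a function of `P` (`green`) shows that
averages of `u` against suitable smooth functions of `P` do not depend on the scale (`invariance`);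
letting the scale tend to `0` gives a mean value property (`mean_value`). Hence `u` is locally a
quotient of integrals depending smoothly on `a` (`regularity`).
-/

open MeasureTheory Metric Filter Topology Set
open scoped ContDiff ENNReal NNReal

noncomputable section

/-- `E n` is the Euclidean space `ℝⁿ`. -/
abbrev E (n : ℕ) := EuclideanSpace ℝ (Fin n)

/-- The normalized surface measure `σ` on the unit sphere `S^{n-1}` (total mass `1`). -/
noncomputable def sphMeasure (n : ℕ) : Measure (E n) :=
  ((μH[(n : ℝ) - 1] (sphere (0 : E n) 1))⁻¹) • ((μH[(n : ℝ) - 1]).restrict (sphere (0 : E n) 1))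

/-- The Euclidean Laplacian `Δu(x) = Σ ∂²u/∂x_i²`. -/
noncomputable def lap (n : ℕ) (u : E n → ℝ) (x : E n) : ℝ :=
  ∑ i : Fin n, fderiv ℝ (fun y => fderiv ℝ u y (EuclideanSpace.single i 1)) x (EuclideanSpace.single i 1)

/-- The normal derivation operator `Nu(x) = Σ x_i ∂u/∂x_i(x)`, i.e. the derivative of `u`
at `x` in the direction `x`. -/
noncomputable def Nder (n : ℕ) (u : E n → ℝ) (x : E n) : ℝ := fderiv ℝ u x x

/-- `u` is `H`-harmonic on `B_n` :
`Du(x) = (1-|x|²)²Δu(x) + 2(n-2)(1-|x|²)Nu(x) = 0` on the unit ball. -/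
def HHarmonic (n : ℕ) (u : E n → ℝ) : Prop :=
  ∀ x ∈ ball (0 : E n) 1,
    (1 - ‖x‖ ^ 2) ^ 2 * lap n u x + 2 * ((n : ℝ) - 2) * (1 - ‖x‖ ^ 2) * Nder n u x = 0

/-- The hyperbolic Poisson kernel `P_h(x,ξ) = ((1-|x|²)/|x-ξ|²)^{n-1}`. -/
noncomputable def Ph (n : ℕ) (x ξ : E n) : ℝ := ((1 - ‖x‖ ^ 2) / ‖x - ξ‖ ^ 2) ^ (n - 1)

/-- The Euclidean Poisson kernel `P_e(x,ξ) = (1-|x|²)/|x-ξ|ⁿ`. -/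
noncomputable def Pe (n : ℕ) (x ξ : E n) : ℝ := (1 - ‖x‖ ^ 2) / ‖x - ξ‖ ^ n

/-- `u` has a boundary distribution : for every smooth `Φ` on the sphere,
`∫ u(rζ)Φ(ζ)dσ(ζ)` has a finite limit as `r → 1⁻`. -/
def HasBoundaryDistribution (n : ℕ) (u : E n → ℝ) : Prop :=
  ∀ Φ : E n → ℝ, ContDiff ℝ ∞ Φ →
    ∃ L : ℝ, Tendsto (fun r : ℝ => ∫ ζ, u (r • ζ) * Φ ζ ∂(sphMeasure n)) (𝓝[<] (1 : ℝ)) (𝓝 L)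

/-! ### Weighted integrals over (0,1) -/

/-- The Jacobi weight `t^(a-1) (1-t)^k` on `(0,1)`. -/
def wt (k a t : ℝ) : ℝ := t ^ (a - 1) * (1 - t) ^ k

/-- `J1 k a φ s = ∫₀¹ t^(a-1) φ(ts) [(1-t)(1-ts²)]^k dt`. -/
def J1 (k a : ℝ) (φ : ℝ → ℝ) (s : ℝ) : ℝ :=
  ∫ t in Ioo (0 : ℝ) 1, wt k a t * (φ (t * s) * (1 - t * s ^ 2) ^ k)

lemma wt_nonneg {k a t : ℝ} (ht : t ∈ Ioo (0 : ℝ) 1) : 0 ≤ wt k a t := by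
  unfold wt
  have h1 := ht.1
  have h2 : 0 < 1 - t := by linarith [ht.2]
  positivity

lemma wt_int {k a : ℝ} (ha : 0 < a) (hk : -1 < k) : IntegrableOn (wt k a) (Ioo (0 : ℝ) 1) := by
  have h := (Complex.betaIntegral_convergent (u := (a : ℂ)) (v := ((k + 1 : ℝ) : ℂ))
    (by simpa using ha) (by simp; linarith)).norm
  rw [intervalIntegrable_iff_integrableOn_Ioo_of_le zero_le_one] at h
  refine h.congr_fun ?_ measurableSet_Ioo
  intro t ht
  have h1 := ht.1
  have h2 : 0 < 1 - t := by linarith [ht.2]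
  have e1 : (1 : ℂ) - (t : ℂ) = ((1 - t : ℝ) : ℂ) := by push_cast; rfl
  simp only [norm_mul, e1]
  rw [Complex.norm_cpow_eq_rpow_re_of_pos h1, Complex.norm_cpow_eq_rpow_re_of_pos h2]
  simp [wt]

lemma wtmul_int {w g : ℝ → ℝ} (hw : IntegrableOn w (Ioo (0 : ℝ) 1))
    (hg : ContinuousOn g (Icc (0 : ℝ) 1)) : IntegrableOn (fun t => w t * g t) (Ioo (0 : ℝ) 1) :=
  IntegrableOn.mul_continuousOn_of_subset hw hg measurableSet_Ioo isCompact_Icc Ioo_subset_Icc_self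

/-- Differentiation under the integral sign on `(0,1)`, for a derivative of the form
(integrable weight in `t`) × (jointly continuous function of `(x,t)`). -/
lemma leib {V : Type*} [NormedAddCommGroup V] [NormedSpace ℝ V] [ProperSpace V] {U : Set V}
    (hU : IsOpen U) {w : ℝ → ℝ} (hw : IntegrableOn w (Ioo (0 : ℝ) 1)) {F : V → ℝ → ℝ}
    {G : V → ℝ → (V →L[ℝ] ℝ)}
    (hG : ContinuousOn (fun p : V × ℝ => G p.1 p.2) (U ×ˢ Icc (0 : ℝ) 1))
    (hF : ∀ x ∈ U, IntegrableOn (F x) (Ioo (0 : ℝ) 1))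
    (hd : ∀ x ∈ U, ∀ t ∈ Ioo (0 : ℝ) 1, HasFDerivAt (fun y => F y t) (w t • G x t) x)
    {x₀ : V} (hx : x₀ ∈ U) :
    IntegrableOn (fun t => w t • G x₀ t) (Ioo (0 : ℝ) 1) ∧
    HasFDerivAt (fun x => ∫ t in Ioo (0 : ℝ) 1, F x t)
      (∫ t in Ioo (0 : ℝ) 1, w t • G x₀ t) x₀ := by
  obtain ⟨ε, hε, hεU⟩ := Metric.nhds_basis_closedBall.mem_iff.1 (hU.mem_nhds hx)
  have hK : IsCompact (closedBall x₀ ε ×ˢ Icc (0 : ℝ) 1) :=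
    (isCompact_closedBall x₀ ε).prod isCompact_Icc
  obtain ⟨C, hC⟩ := hK.exists_bound_of_continuousOn (hG.mono (prod_mono hεU le_rfl))
  have hGx : ContinuousOn (fun t => G x₀ t) (Icc (0 : ℝ) 1) :=
    hG.comp (f := fun t : ℝ => (x₀, t)) (by fun_prop) (fun t ht => ⟨hx, ht⟩)
  have hint : IntegrableOn (fun t => w t • G x₀ t) (Ioo (0 : ℝ) 1) :=
    IntegrableOn.smul_continuousOn_of_subset hw hGx measurableSet_Ioo isCompact_Icc
      Ioo_subset_Icc_self
  refine ⟨hint, ?_⟩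
  refine hasFDerivAt_integral_of_dominated_of_fderiv_le (𝕜 := ℝ)
    (s := closedBall x₀ ε) (bound := fun t => ‖w t‖ * C) (F' := fun x t => w t • G x t)
    (closedBall_mem_nhds x₀ hε) ?_ (hF x₀ hx) hint.aestronglyMeasurable ?_ ?_ ?_
  · filter_upwards [closedBall_mem_nhds x₀ hε] with x hx'
    exact (hF x (hεU hx')).aestronglyMeasurable
  · filter_upwards [ae_restrict_mem measurableSet_Ioo] with t ht x hx'
    rw [norm_smul]
    exact mul_le_mul_of_nonneg_left (hC (x, t) ⟨hx', Ioo_subset_Icc_self ht⟩) (norm_nonneg _)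
  · exact hw.norm.mul_const C
  · filter_upwards [ae_restrict_mem measurableSet_Ioo] with t ht x hx'
    exact hd x (hεU hx') t ht

/-! ### The ray transform and its recursion -/

lemma ion_add {α : Type*} [MeasurableSpace α] {μ : Measure α} {f g : α → ℝ} {s : Set α}
    (hf : IntegrableOn f s μ) (hg : IntegrableOn g s μ) :
    IntegrableOn (fun t => f t + g t) s μ := Integrable.add hf hg

lemma ion_sub {α : Type*} [MeasurableSpace α] {μ : Measure α} {f g : α → ℝ} {s : Set α}
    (hf : IntegrableOn f s μ) (hg : IntegrableOn g s μ) :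
    IntegrableOn (fun t => f t - g t) s μ := Integrable.sub hf hg

/-- The fundamental theorem of calculus on `[0,1]` for a primitive that need only be continuous
at the end points. -/
lemma ftc01 {T T' : ℝ → ℝ} (hc : ContinuousOn T (Icc 0 1))
    (hd : ∀ t ∈ Ioo (0 : ℝ) 1, HasDerivAt T (T' t) t) (hi : IntegrableOn T' (Ioo (0 : ℝ) 1)) :
    ∫ t in Ioo (0 : ℝ) 1, T' t = T 1 - T 0 := by
  rw [← integral_Ioc_eq_integral_Ioo, ← intervalIntegral.integral_of_le zero_le_one]
  exact intervalIntegral.integral_eq_sub_of_hasDerivAt_of_le zero_le_one hc hd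
    ((intervalIntegrable_iff_integrableOn_Ioo_of_le zero_le_one).2 hi)

/-- For `a = 0` the weight has a non-integrable factor `1/t`, compensated by `g 0 = 0`. -/
lemma wt_mul_int {k a : ℝ} (ha : 0 ≤ a) (hk : -1 < k) {g : ℝ → ℝ} {O : Set ℝ} (hO : IsOpen O)
    (hsub : Icc (0 : ℝ) 1 ⊆ O) (hg : ContinuousOn g O) (hg0 : DifferentiableAt ℝ g 0)
    (h0 : a = 0 → g 0 = 0) : IntegrableOn (fun t => wt k a t * g t) (Ioo (0 : ℝ) 1) := by
  rcases ha.eq_or_lt with rfl | ha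
  · have hO0 : O ∈ 𝓝 (0 : ℝ) := hO.mem_nhds (hsub (by simp))
    have hds : ContinuousOn (dslope g 0) O := (continuousOn_dslope hO0).2 ⟨hg, hg0⟩
    refine (wtmul_int (wt_int (k := k) one_pos hk) (hds.mono hsub)).congr_fun ?_ measurableSet_Ioo
    intro t ht
    have := sub_smul_dslope g 0 t
    rw [h0 rfl] at this
    simp only [sub_zero, smul_eq_mul] at this
    simp only [← this, wt]
    rw [show (1 : ℝ) - 1 = 0 by norm_num, Real.rpow_zero, zero_sub, Real.rpow_neg_one]
    field_simp [ht.1.ne']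
  · exact wtmul_int (wt_int ha hk) (hg.mono hsub)

lemma mul_mem_Ioo {s t : ℝ} (hs : s ∈ Ioo (-1 : ℝ) 1) (ht : t ∈ Icc (0 : ℝ) 1) :
    t * s ∈ Ioo (-1 : ℝ) 1 := by
  have : |t * s| < 1 := by
    rw [abs_mul, abs_of_nonneg ht.1]
    have := abs_lt.2 hs
    nlinarith [ht.1, ht.2, abs_nonneg s]
  exact abs_lt.1 this

lemma one_sub_pos {s t : ℝ} (hs : s ∈ Ioo (-1 : ℝ) 1) (ht : t ∈ Icc (0 : ℝ) 1) :
    0 < 1 - t * s ^ 2 := by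
  have : s ^ 2 < 1 := by nlinarith [hs.1, hs.2]
  nlinarith [ht.1, ht.2, sq_nonneg s]

lemma wt_succ {k a t : ℝ} (ht : 0 < t) : wt k a t * t = wt k (a + 1) t := by
  unfold wt
  rw [show a + 1 - 1 = (a - 1) + 1 by ring, Real.rpow_add_one ht.ne']
  ring

lemma wt_pred {k a t : ℝ} (ht : t < 1) : wt k a t = wt (k - 1) a t * (1 - t) := by
  unfold wt
  have : (1 - t) ^ k = (1 - t) ^ (k - 1) * (1 - t) := by
    rw [← Real.rpow_add_one (by linarith), sub_add_cancel]
  rw [this]; ring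

lemma rpow_pred {x k : ℝ} (hx : 0 < x) : x ^ k = x ^ (k - 1) * x := by
  rw [← Real.rpow_add_one hx.ne', sub_add_cancel]

lemma J1_integrand {k a : ℝ} (ha : 0 ≤ a) (hk : -1 < k) {φ : ℝ → ℝ}
    (hφ : ContDiffOn ℝ 1 φ (Ioo (-1) 1)) (h0 : a = 0 → φ 0 = 0) {l s : ℝ}
    (hs : s ∈ Ioo (-1 : ℝ) 1) :
    IntegrableOn (fun t => wt k a t * (φ (t * s) * (1 - t * s ^ 2) ^ l)) (Ioo (0 : ℝ) 1) := by
  set O : Set ℝ := {t | t * s ∈ Ioo (-1 : ℝ) 1 ∧ 0 < 1 - t * s ^ 2} with hOdef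
  have hO : IsOpen O :=
    (isOpen_Ioo.preimage (f := fun t : ℝ => t * s) (by fun_prop)).inter
      (isOpen_lt continuous_const (by fun_prop : Continuous fun t : ℝ => 1 - t * s ^ 2))
  have hcd : ContDiffOn ℝ 1 (fun t => φ (t * s) * (1 - t * s ^ 2) ^ l) O := by
    apply ContDiffOn.mul
    · exact hφ.comp (t := Ioo (-1) 1) (by fun_prop) (fun t ht => ht.1)
    · exact ContDiffOn.rpow_const_of_ne (by fun_prop) (fun t ht => ht.2.ne')
  have hsub : Icc (0 : ℝ) 1 ⊆ O := fun t ht => ⟨mul_mem_Ioo hs ht, one_sub_pos hs ht⟩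
  refine wt_mul_int ha hk hO hsub hcd.continuousOn ?_ ?_
  · exact (hcd.contDiffAt (hO.mem_nhds (hsub (by simp)))).differentiableAt (by norm_num)
  · intro h; simp [h0 h]

/-- The recursion lowering the exponent `k`: `(s d/ds + a) J_{k,a} φ = k (1-s²) J_{k-1,a+1} φ`. -/
lemma J1_step {k a : ℝ} (ha : 0 ≤ a) (hk : 0 < k) {φ : ℝ → ℝ}
    (hφ : ContDiffOn ℝ 1 φ (Ioo (-1) 1)) (h0 : a = 0 → φ 0 = 0) {s : ℝ}
    (hs : s ∈ Ioo (-1 : ℝ) 1) :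
    ∃ y' : ℝ, HasDerivAt (J1 k a φ) y' s ∧
      s * y' + a * J1 k a φ s = k * (1 - s ^ 2) * J1 (k - 1) (a + 1) φ s := by
  have hφ' : ContinuousOn (deriv φ) (Ioo (-1) 1) := hφ.continuousOn_deriv_of_isOpen isOpen_Ioo le_rfl
  have hφd : ∀ x ∈ Ioo (-1 : ℝ) 1, HasDerivAt φ (deriv φ x) x := fun x hx =>
    ((hφ.contDiffAt (isOpen_Ioo.mem_nhds hx)).differentiableAt (by norm_num)).hasDerivAt
  let g : ℝ → ℝ → ℝ := fun s t => deriv φ (t * s) * (1 - t * s ^ 2) ^ k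
    - φ (t * s) * (2 * k * s * (1 - t * s ^ 2) ^ (k - 1))
  have hgc : ContinuousOn (fun p : ℝ × ℝ => g p.1 p.2) (Ioo (-1 : ℝ) 1 ×ˢ Icc (0 : ℝ) 1) := by
    have m1 : MapsTo (fun p : ℝ × ℝ => p.2 * p.1) (Ioo (-1 : ℝ) 1 ×ˢ Icc (0 : ℝ) 1)
      (Ioo (-1 : ℝ) 1) := fun p hp => mul_mem_Ioo hp.1 hp.2
    have c1 : ∀ l : ℝ, ContinuousOn (fun p : ℝ × ℝ => (1 - p.2 * p.1 ^ 2) ^ l)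
        (Ioo (-1 : ℝ) 1 ×ˢ Icc (0 : ℝ) 1) := fun l =>
      ContinuousOn.rpow_const (by fun_prop) (fun p hp => Or.inl (one_sub_pos hp.1 hp.2).ne')
    have c2 := hφ'.comp (f := fun p : ℝ × ℝ => p.2 * p.1) (by fun_prop) m1
    have c3 := hφ.continuousOn.comp (f := fun p : ℝ × ℝ => p.2 * p.1) (by fun_prop) m1
    exact (c2.mul (c1 k)).sub (c3.mul ((by fun_prop : ContinuousOn
      (fun p : ℝ × ℝ => 2 * k * p.1) _).mul (c1 (k - 1))))
  have key := leib (V := ℝ) (U := Ioo (-1) 1) isOpen_Ioo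
    (w := wt k (a + 1)) (wt_int (by linarith) (by linarith))
    (F := fun s t => wt k a t * (φ (t * s) * (1 - t * s ^ 2) ^ k))
    (G := fun s t => ContinuousLinearMap.toSpanSingleton ℝ (g s t))
    ((ContinuousLinearMap.toSpanSingletonCLE (𝕜 := ℝ) (E := ℝ)).continuous.comp_continuousOn hgc)
    (fun x hx => J1_integrand ha (by linarith) hφ h0 hx)
    (by
      intro x hx t ht
      have htI := Ioo_subset_Icc_self ht
      have d1 : HasDerivAt (fun y => φ (t * y)) (deriv φ (t * x) * (t * 1)) x :=
        (hφd _ (mul_mem_Ioo hx htI)).comp x ((hasDerivAt_id x).const_mul t)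
      have d2 : HasDerivAt (fun y : ℝ => (1 - t * y ^ 2)) (-(t * (2 * x))) x := by
        simpa using ((hasDerivAt_pow 2 x).const_mul t).const_sub 1
      have d3 := (d1.mul (d2.rpow_const (p := k) (Or.inl (one_sub_pos hx htI).ne'))).const_mul
        (wt k a t)
      rw [hasDerivAt_iff_hasFDerivAt] at d3
      convert! d3 using 1
      ext
      simp only [g, ← wt_succ ht.1]
      simp
      ring) hs
  obtain ⟨ki, kd⟩ := key
  have kd' := kd.hasDerivAt
  rw [ContinuousLinearMap.integral_apply ki] at kd'
  have ki' : IntegrableOn (fun t => wt k (a + 1) t * g s t) (Ioo (0 : ℝ) 1) := by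
    refine IntegrableOn.congr_fun (ki.apply_continuousLinearMap (1 : ℝ)) ?_ measurableSet_Ioo
    intro t ht
    simp
  simp only [smul_apply, ContinuousLinearMap.toSpanSingleton_apply, smul_eq_mul,
    one_mul] at kd'
  refine ⟨_, kd', ?_⟩
  have i2 := J1_integrand (l := k) ha (by linarith : -1 < k) hφ h0 hs
  have i3 := J1_integrand (k := k - 1) (a := a + 1) (l := k - 1) (by linarith) (by linarith) hφ
    (fun h => by linarith) hs
  -- The difference of the two sides is the integral of the `t`-derivative of
  -- `t^a φ(ts) [(1-t)(1-ts²)]^k`, which vanishes at `t = 0` and `t = 1`.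
  have hT := ftc01 (T := fun t => t ^ a * φ (t * s) * ((1 - t) ^ k * (1 - t * s ^ 2) ^ k))
    (T' := fun t => s * (wt k (a + 1) t * g s t)
      + a * (wt k a t * (φ (t * s) * (1 - t * s ^ 2) ^ k))
      - k * (1 - s ^ 2) * (wt (k - 1) (a + 1) t * (φ (t * s) * (1 - t * s ^ 2) ^ (k - 1)))) ?_ ?_
      (ion_sub (ion_add (ki'.const_mul s) (i2.const_mul a)) (i3.const_mul (k * (1 - s ^ 2))))
  · rw [integral_sub ((ki'.const_mul s).fun_add (i2.const_mul a)) (i3.const_mul _),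
      integral_add (ki'.const_mul s) (i2.const_mul a), integral_const_mul, integral_const_mul,
      integral_const_mul] at hT
    have h1 : (1 : ℝ) ^ a * φ (1 * s) * ((1 - 1) ^ k * (1 - 1 * s ^ 2) ^ k)
      - (0 : ℝ) ^ a * φ (0 * s) * ((1 - 0) ^ k * (1 - 0 * s ^ 2) ^ k) = 0 := by
      rw [sub_self, Real.zero_rpow hk.ne']
      rcases ha.eq_or_lt with rfl | ha
      · simp [h0 rfl]
      · simp [Real.zero_rpow ha.ne']
    have hT' := hT.trans h1
    unfold J1
    linarith
  · refine ContinuousOn.mul (ContinuousOn.mul ?_ ?_) (ContinuousOn.mul ?_ ?_)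
    · exact (Real.continuous_rpow_const ha).continuousOn
    · exact hφ.continuousOn.comp (by fun_prop) (fun t ht => mul_mem_Ioo hs ht)
    · exact ((Real.continuous_rpow_const hk.le).comp (by fun_prop : Continuous fun t : ℝ => 1 - t)).continuousOn
    · exact ContinuousOn.rpow_const (by fun_prop) (fun p hp => Or.inl (one_sub_pos hs hp).ne')
  · intro t ht
    have htI := Ioo_subset_Icc_self ht
    have p1 : 0 < 1 - t := by linarith [ht.2]
    have p2 := one_sub_pos hs htI
    have d1 : HasDerivAt (fun y => φ (y * s)) (deriv φ (t * s) * (1 * s)) t :=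
        (hφd _ (mul_mem_Ioo hs htI)).comp t ((hasDerivAt_id t).mul_const s)
    have d2 : HasDerivAt (fun y : ℝ => (1 - y * s ^ 2)) (-(1 * s ^ 2)) t :=
      ((hasDerivAt_id t).mul_const (s ^ 2)).const_sub 1
    have d3 : HasDerivAt (fun y : ℝ => (1 - y)) (-1) t := (hasDerivAt_id t).const_sub 1
    have d4 := ((Real.hasDerivAt_rpow_const (p := a) (Or.inl ht.1.ne')).fun_mul d1).fun_mul
      ((d3.rpow_const (p := k) (Or.inl p1.ne')).fun_mul (d2.rpow_const (p := k) (Or.inl p2.ne')))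
    convert! d4 using 1
    simp only [g, wt, add_sub_cancel_right]
    rw [rpow_pred p1 (k := k), rpow_pred p2 (k := k), rpow_pred ht.1 (k := a)]
    ring

/-! ### The Abel kernel -/

/-- The Abel kernel of the composition of two half-order transforms. -/
def abelK (s p t : ℝ) : ℝ :=
  (1 - t ^ 2 * s ^ 2) / t * (√((1 - t) * (1 - t * s ^ 2)))⁻¹ *
    (√((t - p) * (1 - p * t * s ^ 2)))⁻¹

/-- In the variable `S = t s² + 1/t` the kernel is `dS / √((S-S₁)(S_p-S))`, whose integral
between the two zeros is `π`. -/
lemma abelK_int {s p : ℝ} (hs : s ∈ Ioo (-1 : ℝ) 1) (hp : p ∈ Ioo (0 : ℝ) 1) :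
    IntegrableOn (abelK s p) (Ioo p 1) ∧ (∀ t ∈ Ioo p 1, 0 ≤ abelK s p t) ∧
      ∫ t in Ioo p 1, abelK s p t = Real.pi * (√p)⁻¹ := by
  obtain ⟨hp0, hp1⟩ := hp
  have hs2 : s ^ 2 < 1 := by nlinarith [hs.1, hs.2]
  have hs0 := sq_nonneg s
  set D : ℝ := (p * s ^ 2 + 1 / p) - (s ^ 2 + 1) with hD
  have hDp : D = (1 - p) * (1 - p * s ^ 2) / p := by rw [hD]; field_simp; ring
  have hps : 0 < 1 - p * s ^ 2 := by nlinarith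
  have hDpos : 0 < D := by
    rw [hDp]
    have : 0 < 1 - p := by linarith
    positivity
  -- `X` is the variable `S` rescaled affinely to run from `1` at `t = p` to `-1` at `t = 1`, so
  -- that the kernel becomes, up to a factor, the derivative of `arcsin`.
  let X : ℝ → ℝ := fun t => (2 * (t * s ^ 2 + 1 / t) - (s ^ 2 + 1) - (p * s ^ 2 + 1 / p)) / D
  have hcont : ContinuousOn (fun t => -(√p)⁻¹ * Real.arcsin (X t)) (Icc p 1) := by
    refine continuousOn_const.mul (Real.continuous_arcsin.comp_continuousOn ?_)
    have : ∀ x ∈ Icc p 1, x ≠ 0 := fun x hx => by linarith [hx.1]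
    fun_prop (disch := assumption)
  have hnn : ∀ t ∈ Ioo p 1, 0 ≤ abelK s p t := by
    intro t ht
    have ht0 : 0 < t := hp0.trans ht.1
    have : 0 ≤ 1 - t ^ 2 * s ^ 2 := by nlinarith [ht.2, mul_pos ht0 ht0]
    unfold abelK
    positivity
  have hder : ∀ t ∈ Ioo p 1, HasDerivAt (fun t => -(√p)⁻¹ * Real.arcsin (X t)) (abelK s p t) t := by
    intro t ht
    have ht0 : 0 < t := hp0.trans ht.1
    have hM : 0 < (1 - t) * (1 - t * s ^ 2) := mul_pos (by linarith [ht.2]) (by nlinarith [ht.2])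
    have hN : 0 < (t - p) * (1 - p * t * s ^ 2) := by
      refine mul_pos (by linarith [ht.1]) ?_
      have : p * t < 1 := by nlinarith [ht.2]
      nlinarith [mul_pos hp0 ht0]
    set M := (1 - t) * (1 - t * s ^ 2) with hMd
    set N := (t - p) * (1 - p * t * s ^ 2) with hNd
    have hX : 1 - X t ^ 2 = 4 * (M * N) / (p * t ^ 2 * D ^ 2) := by
      simp only [X]
      rw [div_pow, eq_div_iff (by positivity), hMd, hNd]
      have hD0 := hDpos.ne'
      rw [sub_mul, div_mul_eq_mul_div, mul_comm (p * t ^ 2), ← mul_assoc, mul_div_assoc,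
        mul_comm (D ^ 2), mul_assoc, mul_div_assoc]
      field_simp
      rw [hD]
      field_simp
      ring
    have hsq : √(1 - X t ^ 2) = 2 * (√M * √N) / (√p * t * D) := by
      rw [hX, Real.sqrt_eq_iff_mul_self_eq_of_pos (by positivity)]
      have e1 := Real.mul_self_sqrt hM.le
      have e2 := Real.mul_self_sqrt hN.le
      have e3 := Real.mul_self_sqrt hp0.le
      rw [div_mul_div_comm]
      congr 1
      · linear_combination 4 * √N * √N * e1 + 4 * M * e2
      · linear_combination t ^ 2 * D ^ 2 * e3
    have hpos : 0 < 1 - X t ^ 2 := by rw [hX]; positivity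
    have hd1 : HasDerivAt X (2 * (s ^ 2 - 1 / t ^ 2) / D) t := by
      have a1 : HasDerivAt (fun t : ℝ => t * s ^ 2) (1 * s ^ 2) t := (hasDerivAt_id t).mul_const _
      have a2 : HasDerivAt (fun t : ℝ => 1 / t) (-(t ^ 2)⁻¹) t := by
        simpa using hasDerivAt_inv ht0.ne'
      have := ((((a1.fun_add a2).const_mul 2).sub_const (s ^ 2 + 1)).sub_const
        (p * s ^ 2 + 1 / p)).div_const D
      convert! this using 1
      field_simp
      ring
    have hd2 := ((Real.hasDerivAt_arcsin (x := X t) (by intro h; rw [h] at hpos; norm_num at hpos)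
      (by intro h; rw [h] at hpos; norm_num at hpos)).comp t hd1).const_mul (-(√p)⁻¹)
    convert! hd2 using 1
    rw [hsq]
    unfold abelK
    rw [← hMd, ← hNd]
    have q1 : 0 < √M := Real.sqrt_pos.2 hM
    have q2 : 0 < √N := Real.sqrt_pos.2 hN
    have q3 : 0 < √p := Real.sqrt_pos.2 hp0
    field_simp
    ring
  have hint := intervalIntegral.integrableOn_deriv_of_nonneg hcont hder hnn
  have hint' : IntegrableOn (abelK s p) (Ioo p 1) := hint.mono_set Ioo_subset_Ioc_self
  refine ⟨hint', hnn, ?_⟩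
  rw [← integral_Ioc_eq_integral_Ioo, ← intervalIntegral.integral_of_le hp1.le,
    intervalIntegral.integral_eq_sub_of_hasDerivAt_of_le hp1.le hcont hder
      ((intervalIntegrable_iff_integrableOn_Ioc_of_le hp1.le).2 hint)]
  have x1 : X 1 = -1 := by
    simp only [X]; rw [div_eq_iff hDpos.ne', hD]; ring
  have x2 : X p = 1 := by
    simp only [X]; rw [div_eq_iff hDpos.ne', hD]; ring
  rw [x1, x2, Real.arcsin_one, Real.arcsin_neg_one]
  ring

/-! ### Composition of two transforms of exponent -1/2 -/

lemma wt_half {a t : ℝ} (ht : t < 1) : wt (-1 / 2) a t = t ^ (a - 1) * (√(1 - t))⁻¹ := by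
  unfold wt
  rw [show (-1 / 2 : ℝ) = -(1 / 2) by ring, Real.rpow_neg (by linarith), Real.sqrt_eq_rpow]

lemma rpow_neg_half {x : ℝ} (hx : 0 ≤ x) : x ^ (-1 / 2 : ℝ) = (√x)⁻¹ := by
  rw [show (-1 / 2 : ℝ) = -(1 / 2) by ring, Real.rpow_neg hx, Real.sqrt_eq_rpow]

/-- The half-order transform at `ts`, written as an Abel integral over `0 < p < t` by the
substitution `p = tτ`. -/
lemma J1_half_eq {a : ℝ} {φ : ℝ → ℝ} {s t : ℝ} (hs : s ∈ Ioo (-1 : ℝ) 1) (ht : t ∈ Ioo (0 : ℝ) 1) :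
    J1 (-1 / 2) a φ (t * s) = t ^ (1 / 2 - a) * ∫ p in Ioo 0 t,
      p ^ (a - 1) * φ (p * s) * (√((t - p) * (1 - p * t * s ^ 2)))⁻¹ := by
  have h1 := intervalIntegral.integral_comp_mul_left (a := 0) (b := 1)
    (fun p : ℝ => p ^ (a - 1) * φ (p * s) * (√((t - p) * (1 - p * t * s ^ 2)))⁻¹) ht.1.ne'
  rw [mul_zero, mul_one, intervalIntegral.integral_of_le zero_le_one,
    intervalIntegral.integral_of_le ht.1.le, integral_Ioc_eq_integral_Ioo,
    integral_Ioc_eq_integral_Ioo, smul_eq_mul] at h1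
  have h2 : ∀ X : ℝ, X = t * (t⁻¹ * X) := fun X => by field_simp [ht.1.ne']
  rw [h2 (∫ p in Ioo 0 t, _), ← h1, J1, ← mul_assoc, ← integral_const_mul]
  refine setIntegral_congr_fun measurableSet_Ioo fun τ hτ => ?_
  have p1 : 0 < 1 - τ := by linarith [hτ.2]
  have p2 := one_sub_pos (mul_mem_Ioo hs (Ioo_subset_Icc_self ht)) (Ioo_subset_Icc_self hτ)
  rw [wt_half hτ.2, rpow_neg_half p2.le, Real.mul_rpow ht.1.le hτ.1.le,
    show (t - t * τ) * (1 - t * τ * t * s ^ 2) = t * ((1 - τ) * (1 - τ * (t * s) ^ 2)) by ring,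
    Real.sqrt_mul ht.1.le, Real.sqrt_mul p1.le, show t * τ * s = τ * (t * s) by ring,
    Real.rpow_sub ht.1, Real.rpow_sub ht.1, ← Real.sqrt_eq_rpow, Real.rpow_one]
  have q1 := (Real.rpow_pos_of_pos ht.1 a).ne'
  have q2 := (Real.sqrt_pos.2 ht.1).ne'
  have q3 := (Real.sqrt_pos.2 p1).ne'
  have q4 := (Real.sqrt_pos.2 p2).ne'
  have q5 := ht.1.ne'
  field_simp

/-- Composition of two half-order transforms is `π` times the order-`0` transform. -/
lemma J1_comp {a : ℝ} (ha : 1 / 2 < a) {φ : ℝ → ℝ} (hφ : ContinuousOn φ (Ioo (-1) 1)) {s : ℝ}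
    (hs : s ∈ Ioo (-1 : ℝ) 1) :
    J1 (-1 / 2) (a - 1 / 2) (fun σ => (1 - σ ^ 2) * J1 (-1 / 2) a φ σ) s
      = Real.pi * J1 0 (a - 1 / 2) φ s := by
  set m : ℝ → ℝ := fun p => p ^ (a - 1) * φ (p * s) with hm
  -- The double integral over `0 < p < t < 1`; exchanging the order leaves the inner
  -- integral of `abelK` over `p < t < 1`.
  set F : ℝ → ℝ → ℝ := fun p t => (Ioi p).indicator (fun t => m p * abelK s p t) t with hF
  have hφs : ContinuousOn (fun p => φ (p * s)) (Icc 0 1) :=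
    hφ.comp (by fun_prop) (fun t ht => mul_mem_Ioo hs ht)
  have hsl : ∀ p ∈ Ioo (0 : ℝ) 1, Ioo (0 : ℝ) 1 ∩ Ioi p = Ioo p 1 := by
    intro p hp; ext t; simp only [mem_inter_iff, mem_Ioo, mem_Ioi]
    exact ⟨fun h => ⟨h.2, h.1.2⟩, fun h => ⟨⟨hp.1.trans h.1, h.2⟩, h.1⟩⟩
  have hmi : IntegrableOn (fun p => m p * (Real.pi * (√p)⁻¹)) (Ioo (0 : ℝ) 1) := by
    have := (wtmul_int (wt_int (k := 0) (a := a - 1 / 2) (by linarith) (by norm_num)) hφs).const_mul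
      Real.pi
    refine IntegrableOn.congr_fun this ?_ measurableSet_Ioo
    intro p hp
    simp only [wt, hm, Real.rpow_zero, mul_one]
    rw [show a - 1 / 2 - 1 = (a - 1) + (-1 / 2) by ring, Real.rpow_add hp.1, rpow_neg_half hp.1.le]
    ring
  have hmeas : AEStronglyMeasurable (Function.uncurry F)
      ((volume.restrict (Ioo (0 : ℝ) 1)).prod (volume.restrict (Ioo (0 : ℝ) 1))) := by
    have e : Function.uncurry F = {q : ℝ × ℝ | q.1 < q.2}.indicator
        (fun q => m q.1 * abelK s q.1 q.2) := by
      ext ⟨p, t⟩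
      simp [hF, Function.uncurry, indicator]
    rw [e]
    refine AEStronglyMeasurable.indicator ?_ (measurableSet_lt measurable_fst measurable_snd)
    refine AEStronglyMeasurable.mul ?_ ?_
    · refine AEStronglyMeasurable.comp_fst ?_
      refine AEStronglyMeasurable.mul ?_ ?_
      · exact (measurable_id.pow_const (a - 1)).aestronglyMeasurable
      · exact (hφs.mono Ioo_subset_Icc_self).aestronglyMeasurable measurableSet_Ioo
    · unfold abelK
      exact Measurable.aestronglyMeasurable (by fun_prop)
  have hin : ∀ p ∈ Ioo (0 : ℝ) 1, IntegrableOn (F p) (Ioo 0 1) ∧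
      ∫ t in Ioo 0 1, F p t = m p * (Real.pi * (√p)⁻¹) ∧
      ∫ t in Ioo 0 1, ‖F p t‖ = ‖m p‖ * (Real.pi * (√p)⁻¹) := by
    intro p hp
    obtain ⟨i1, i2, i3⟩ := abelK_int hs hp
    refine ⟨?_, ?_, ?_⟩
    · rw [IntegrableOn, hF, integrable_indicator_iff measurableSet_Ioi, IntegrableOn,
        Measure.restrict_restrict measurableSet_Ioi, inter_comm, hsl p hp]
      exact i1.const_mul (m p)
    · simp only [hF]
      rw [setIntegral_indicator measurableSet_Ioi, hsl p hp, integral_const_mul, i3]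
    · simp only [hF, norm_indicator_eq_indicator_norm]
      rw [setIntegral_indicator measurableSet_Ioi, hsl p hp, ← i3, ← integral_const_mul]
      refine setIntegral_congr_fun measurableSet_Ioo fun t ht => ?_
      simp only [norm_mul]
      rw [Real.norm_of_nonneg (i2 t ht)]
  have hFi : Integrable (Function.uncurry F)
      ((volume.restrict (Ioo (0 : ℝ) 1)).prod (volume.restrict (Ioo (0 : ℝ) 1))) := by
    rw [integrable_prod_iff hmeas]
    constructor
    · filter_upwards [ae_restrict_mem measurableSet_Ioo] with p hp
      exact (hin p hp).1
    · refine IntegrableOn.congr_fun hmi.norm ?_ measurableSet_Ioo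
      intro p hp
      beta_reduce
      rw [norm_mul, Real.norm_of_nonneg (r := Real.pi * _) (by positivity)]
      exact (hin p hp).2.2.symm
  have hsw := integral_integral_swap hFi
  have e1 : ∫ p in Ioo (0 : ℝ) 1, ∫ t in Ioo (0 : ℝ) 1, F p t
      = Real.pi * J1 0 (a - 1 / 2) φ s := by
    rw [J1, ← integral_const_mul]
    refine setIntegral_congr_fun measurableSet_Ioo fun p hp => ?_
    rw [(hin p hp).2.1]
    simp only [wt, hm, Real.rpow_zero, mul_one]
    rw [show a - 1 / 2 - 1 = (a - 1) + (-1 / 2) by ring, Real.rpow_add hp.1, rpow_neg_half hp.1.le]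
    ring
  rw [← e1, hsw, J1]
  refine setIntegral_congr_fun measurableSet_Ioo fun t ht => ?_
  have hsl' : Ioo (0 : ℝ) 1 ∩ Iio t = Ioo 0 t := by
    ext p; simp only [mem_inter_iff, mem_Ioo, mem_Iio]
    exact ⟨fun h => ⟨h.1.1, h.2⟩, fun h => ⟨⟨h.1, h.2.trans ht.2⟩, h.2⟩⟩
  have e2 : ∀ p, F p t = (Iio t).indicator (fun p => m p * abelK s p t) p := by
    intro p; simp [hF, indicator]
  have p1 : 0 < 1 - t := by linarith [ht.2]
  have p2 := one_sub_pos hs (Ioo_subset_Icc_self ht)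
  simp only [e2]
  rw [setIntegral_indicator measurableSet_Iio, hsl', J1_half_eq hs ht, wt_half ht.2,
    rpow_neg_half p2.le]
  have e3 : ∀ c X : ℝ, t ^ (a - 1 / 2 - 1) * (√(1 - t))⁻¹ *
      ((1 - (t * s) ^ 2) * (t ^ (1 / 2 - a) * X) * (√(1 - t * s ^ 2))⁻¹) =
      ((1 - t ^ 2 * s ^ 2) / t * (√((1 - t) * (1 - t * s ^ 2)))⁻¹) * X := by
    intro c X
    have : t ^ (a - 1 / 2 - 1) * t ^ (1 / 2 - a) = t⁻¹ := by
      rw [← Real.rpow_add ht.1, ← Real.rpow_neg_one]; congr 1; ring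
    rw [Real.sqrt_mul p1.le, mul_inv]
    linear_combination ((1 - t ^ 2 * s ^ 2) * (√(1 - t))⁻¹ * (√(1 - t * s ^ 2))⁻¹ * X) * this
  rw [e3 0, ← integral_const_mul]
  refine setIntegral_congr_fun measurableSet_Ioo fun p hp => ?_
  simp only [hm, abelK]
  ring

/-! ### Injectivity along rays -/

lemma J1_zero_eq {a : ℝ} {φ : ℝ → ℝ} {s : ℝ} (hs : s ∈ Ioo (0 : ℝ) 1) :
    s ^ a * J1 0 a φ s = ∫ p in (0 : ℝ)..s, p ^ (a - 1) * φ p := by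
  have h1 := intervalIntegral.integral_comp_mul_left (a := 0) (b := 1)
    (fun p : ℝ => p ^ (a - 1) * φ p) hs.1.ne'
  rw [mul_zero, mul_one, intervalIntegral.integral_of_le zero_le_one, integral_Ioc_eq_integral_Ioo,
    smul_eq_mul] at h1
  have h2 : ∀ X : ℝ, X = s * (s⁻¹ * X) := fun X => by field_simp [hs.1.ne']
  rw [h2 (∫ p in (0 : ℝ)..s, _), ← h1, J1, ← integral_const_mul, ← integral_const_mul]
  refine setIntegral_congr_fun measurableSet_Ioo fun t ht => ?_
  simp only [wt, Real.rpow_zero, mul_one]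
  rw [Real.mul_rpow hs.1.le ht.1.le, rpow_pred hs.1, mul_comm t s]
  ring

/-- `s^a J_{0,a} φ` is a primitive of `s^(a-1) φ`. -/
lemma J1_zero_deriv {a : ℝ} (ha : 0 < a) {φ : ℝ → ℝ} (hφ : ContinuousOn φ (Ioo (-1) 1)) {s : ℝ}
    (hs : s ∈ Ioo (0 : ℝ) 1) :
    HasDerivAt (fun s => s ^ a * J1 0 a φ s) (s ^ (a - 1) * φ s) s := by
  have hsub : uIcc 0 s ⊆ Ioo (-1) 1 := by
    rw [uIcc_of_le hs.1.le]
    intro x hx; exact ⟨by linarith [hx.1], by linarith [hx.2, hs.2]⟩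
  have hc : ∀ x ∈ Ioo (0 : ℝ) 1, ContinuousAt (fun p => p ^ (a - 1) * φ p) x := fun x hx =>
    (Real.continuousAt_rpow_const _ _ (Or.inl hx.1.ne')).mul
      (hφ.continuousAt (isOpen_Ioo.mem_nhds ⟨by linarith [hx.1], hx.2⟩))
  have h := intervalIntegral.integral_hasDerivAt_right (f := fun p => p ^ (a - 1) * φ p)
    (a := 0) (b := s)
    ((intervalIntegral.intervalIntegrable_rpow' (by linarith)).mul_continuousOn (hφ.mono hsub))
    (ContinuousAt.stronglyMeasurableAtFilter isOpen_Ioo hc s hs) (hc s hs)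
  refine h.congr_of_eventuallyEq ?_
  filter_upwards [isOpen_Ioo.mem_nhds hs] with x hx
  exact J1_zero_eq hx

lemma inj_zero {a : ℝ} (ha : 0 < a) {φ : ℝ → ℝ} (hφ : ContinuousOn φ (Ioo (-1) 1))
    (h : ∀ s ∈ Ioo (0 : ℝ) 1, J1 0 a φ s = 0) : ∀ s ∈ Ioo (0 : ℝ) 1, φ s = 0 := by
  intro s hs
  have h1 := J1_zero_deriv ha hφ hs
  have h2 : HasDerivAt (fun s => s ^ a * J1 0 a φ s) 0 s := by
    refine (hasDerivAt_const s (0 : ℝ)).congr_of_eventuallyEq ?_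
    filter_upwards [isOpen_Ioo.mem_nhds hs] with x hx
    rw [h x hx, mul_zero]
  have := h1.unique h2
  exact (mul_eq_zero.1 this).resolve_left (Real.rpow_pos_of_pos hs.1 _).ne'

lemma mul_mem_Ioo' {s t : ℝ} (hs : s ∈ Ioo (0 : ℝ) 1) (ht : t ∈ Ioo (0 : ℝ) 1) :
    t * s ∈ Ioo (0 : ℝ) 1 := ⟨mul_pos ht.1 hs.1, by nlinarith [ht.1, ht.2, hs.1, hs.2]⟩

lemma Ioo_sub {s : ℝ} (hs : s ∈ Ioo (0 : ℝ) 1) : s ∈ Ioo (-1 : ℝ) 1 := ⟨by linarith [hs.1], hs.2⟩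

lemma J1_congr {k a : ℝ} {φ ψ : ℝ → ℝ} {s : ℝ} (hs : s ∈ Ioo (0 : ℝ) 1)
    (h : ∀ σ ∈ Ioo (0 : ℝ) 1, φ σ = ψ σ) : J1 k a φ s = J1 k a ψ s := by
  refine setIntegral_congr_fun measurableSet_Ioo fun t ht => ?_
  rw [h _ (mul_mem_Ioo' hs ht)]

lemma J1_zero_fun (k a s : ℝ) : J1 k a (fun _ => 0) s = 0 := by simp [J1]

/-- Injectivity in the case `k = -1/2`: composing with a second transform of that exponent gives
`π J_{0,a-1/2}`, which is injective. -/
lemma inj_half {a : ℝ} (ha : 1 / 2 < a) {φ : ℝ → ℝ} (hφ : ContinuousOn φ (Ioo (-1) 1))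
    (h : ∀ s ∈ Ioo (0 : ℝ) 1, J1 (-1 / 2) a φ s = 0) : ∀ s ∈ Ioo (0 : ℝ) 1, φ s = 0 := by
  refine inj_zero (a := a - 1 / 2) (by linarith) hφ fun s hs => ?_
  have h1 := J1_comp ha hφ (Ioo_sub hs)
  rw [J1_congr (ψ := fun _ => 0) hs (fun σ hσ => by rw [h σ hσ, mul_zero]), J1_zero_fun] at h1
  exact (mul_eq_zero.1 h1.symm).resolve_left Real.pi_ne_zero

/-- One application of the recursion: if `J_{k,a} φ` vanishes on `(0,1)`, so does
`J_{k-1,a+1} φ`. -/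
lemma inj_step {k a : ℝ} (ha : 0 ≤ a) (hk : 0 < k) {φ : ℝ → ℝ}
    (hφ : ContDiffOn ℝ 1 φ (Ioo (-1) 1)) (h0 : a = 0 → φ 0 = 0)
    (h : ∀ s ∈ Ioo (0 : ℝ) 1, J1 k a φ s = 0) :
    ∀ s ∈ Ioo (0 : ℝ) 1, J1 (k - 1) (a + 1) φ s = 0 := by
  intro s hs
  obtain ⟨y', h1, h2⟩ := J1_step ha hk hφ h0 (Ioo_sub hs)
  have h3 : HasDerivAt (J1 k a φ) 0 s := by
    refine (hasDerivAt_const s (0 : ℝ)).congr_of_eventuallyEq ?_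
    filter_upwards [isOpen_Ioo.mem_nhds hs] with x hx
    rw [h x hx]
  rw [h1.unique h3, h s hs, mul_zero, mul_zero, add_zero] at h2
  have : 0 < 1 - s ^ 2 := by nlinarith [hs.1, hs.2]
  exact (mul_eq_zero.1 h2.symm).resolve_left (by positivity)

/-- Injectivity of `J_{j+κ,a}`, by lowering the exponent to `κ` with the recursion. -/
lemma inj_nat {κ : ℝ} (hκ : κ = 0 ∨ κ = -1 / 2) {φ : ℝ → ℝ}
    (hφ : ContDiffOn ℝ 1 φ (Ioo (-1) 1)) (j : ℕ) : ∀ a : ℝ, 1 ≤ a →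
    (∀ s ∈ Ioo (0 : ℝ) 1, J1 (j + κ) a φ s = 0) → ∀ s ∈ Ioo (0 : ℝ) 1, φ s = 0 := by
  induction j with
  | zero =>
    intro a ha h
    rw [Nat.cast_zero, zero_add] at h
    rcases hκ with rfl | rfl
    · exact inj_zero (by linarith) hφ.continuousOn h
    · exact inj_half (by linarith) hφ.continuousOn h
  | succ j ih =>
    intro a ha h
    have hk : 0 < ((j + 1 : ℕ) : ℝ) + κ := by
      push_cast
      have : (0 : ℝ) ≤ j := Nat.cast_nonneg j
      rcases hκ with rfl | rfl <;> linarith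
    have := inj_step (by linarith) hk hφ (fun h => by linarith) h
    refine ih (a + 1) (by linarith) ?_
    convert this using 4
    push_cast; ring

/-- After one step of the recursion the exponent `n/2-2` is `j + κ` with `j` a natural number;
`κ = 0` for even `n` and `κ = -1/2` for odd `n`. -/
lemma exists_kappa {n : ℕ} (hn : 3 ≤ n) : ∃ (j : ℕ) (κ : ℝ), (κ = 0 ∨ κ = -1 / 2) ∧
    (n : ℝ) / 2 - 1 - 1 = j + κ := by
  rcases Nat.even_or_odd' n with ⟨m, rfl | rfl⟩
  · refine ⟨m - 2, 0, Or.inl rfl, ?_⟩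
    rw [Nat.cast_sub (by omega)]; push_cast; ring
  · refine ⟨m - 1, -1 / 2, Or.inr rfl, ?_⟩
    rw [Nat.cast_sub (by omega)]; push_cast; ring

lemma kpos {n : ℕ} (hn : 3 ≤ n) : 0 < (n : ℝ) / 2 - 1 := by
  have : (3 : ℝ) ≤ n := by exact_mod_cast hn
  linarith

/-- Injectivity of the integral transform of the theorem along a ray. -/
lemma inj_main {n : ℕ} (hn : 3 ≤ n) {φ : ℝ → ℝ} (hφ : ContDiffOn ℝ 1 φ (Ioo (-1) 1))
    (h0 : φ 0 = 0) (h : ∀ s ∈ Ioo (0 : ℝ) 1, J1 ((n : ℝ) / 2 - 1) 0 φ s = 0) :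
    ∀ s ∈ Ioo (0 : ℝ) 1, φ s = 0 := by
  obtain ⟨j, κ, hκ, hj⟩ := exists_kappa hn
  have := inj_step le_rfl (kpos hn) hφ (fun _ => h0) h
  rw [hj] at this
  exact inj_nat hκ hφ j _ (by norm_num) this

/-! ### Smooth dependence of parameter integrals -/

/-- Smoothness of `x ↦ ∫_K f(y) F(x,y) dy` for a closed ball `K`, `f` integrable on `K` and
`F` jointly smooth near `s × K`: cut off in `y` and view the integral as a convolution
with parameter, evaluated at `0`. -/
lemma smooth_param {P G : Type*} [NormedAddCommGroup P] [NormedSpace ℝ P] [NormedAddCommGroup G]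
    [InnerProductSpace ℝ G] [FiniteDimensional ℝ G] [MeasurableSpace G] [BorelSpace G]
    {s : Set P} {c : G} {r : ℝ} (hr : 0 < r) {f : G → ℝ}
    (hf : IntegrableOn f (closedBall c r)) {F : P → G → ℝ} {W : Set (P × G)} (hW : IsOpen W)
    (hF : ContDiffOn ℝ ∞ (fun q : P × G => F q.1 q.2) W) (hsW : s ×ˢ closedBall c r ⊆ W) :
    ContDiffOn ℝ ∞ (fun x => ∫ y in closedBall c r, f y * F x y) s := by
  intro x₀ hx₀
  have hK : IsCompact (closedBall c r) := isCompact_closedBall c r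
  obtain ⟨S, T, hS, hT, hxS, hKT, hST⟩ := generalized_tube_lemma (isCompact_singleton (x := x₀)) hK
    hW (fun q hq => hsW ⟨by rw [hq.1]; exact hx₀, hq.2⟩)
  obtain ⟨δ, hδ, hδT⟩ := hK.exists_cthickening_subset_open hT hKT
  rw [cthickening_closedBall hδ.le hr.le] at hδT
  let χ : ContDiffBump c := ⟨r, δ + r, hr, by linarith⟩
  let g : P → G → ℝ := fun x z => χ (-z) * F x (-z)
  have hcv := contDiffOn_convolution_right_with_param (𝕜 := ℝ) (μ := (volume : Measure G))
    (n := (⊤ : ℕ∞)) (f := (closedBall c r).indicator f) (ContinuousLinearMap.mul ℝ ℝ) (g := g)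
    (s := S) (k := (fun z => -z) ⁻¹' closedBall c (δ + r)) hS
    ((Homeomorph.neg G).isClosedEmbedding.isCompact_preimage (isCompact_closedBall c (δ + r)))
    (by
      intro p x _ hx
      have : χ (-x) = 0 := χ.zero_of_le_dist (by
        have : ¬ dist (-x) c ≤ δ + r := hx
        exact (not_le.1 this).le)
      simp [g, this])
    ((hf.integrable_indicator measurableSet_closedBall).locallyIntegrable)
    (by
      rintro ⟨x, z⟩ ⟨hx, -⟩
      refine ContDiffAt.contDiffWithinAt ?_
      by_cases hz : -z ∈ closedBall c (δ + r)
      · have h1 : ContDiffAt ℝ ∞ (fun q : P × G => F q.1 (-q.2)) (x, z) := by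
          have hm : ((x, -z) : P × G) ∈ S ×ˢ T := ⟨hx, hδT hz⟩
          have := hF.contDiffAt (hW.mem_nhds (hST hm))
          have h3 : ContDiffAt ℝ ∞ (fun q : P × G => (q.1, -q.2)) (x, z) := by fun_prop
          exact ContDiffAt.comp (x, z) (g := fun q : P × G => F q.1 q.2) this h3
        have h2 : ContDiffAt ℝ ∞ (fun q : P × G => χ (-q.2)) (x, z) :=
          (χ.contDiff (n := ⊤)).contDiffAt.comp (x, z) (by fun_prop)
        exact h2.mul h1
      · have : (Function.uncurry g) =ᶠ[𝓝 (x, z)] fun _ => 0 := by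
          have hopen : IsOpen {q : P × G | -q.2 ∉ closedBall c (δ + r)} :=
            (isClosed_closedBall.preimage (f := fun q : P × G => -q.2) (by fun_prop)).isOpen_compl
          filter_upwards [hopen.mem_nhds hz] with q hq
          have : χ (-q.2) = 0 := χ.zero_of_le_dist (by
            have : ¬ dist (-q.2) c ≤ δ + r := hq
            exact (not_le.1 this).le)
          simp [g, Function.uncurry, this]
        exact contDiffAt_const.congr_of_eventuallyEq this)
  have h2 : ContDiffOn ℝ ∞ (fun x => convolution ((closedBall c r).indicator f) (g x)
      (ContinuousLinearMap.mul ℝ ℝ) (volume : Measure G) 0) S :=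
    hcv.comp (f := fun x : P => (x, (0 : G))) (by fun_prop) (fun x hx => ⟨hx, mem_univ _⟩)
  refine ContDiffAt.contDiffWithinAt ?_
  refine (h2.contDiffAt (hS.mem_nhds (hxS rfl))).congr_of_eventuallyEq (Eventually.of_forall ?_)
  intro x
  unfold convolution
  beta_reduce
  rw [← integral_indicator measurableSet_closedBall]
  refine integral_congr_ae (Eventually.of_forall fun y => ?_)
  by_cases hy : y ∈ closedBall c r
  · have : χ y = 1 := χ.one_of_mem_closedBall hy
    simp [indicator, hy, g, this]
  · simp [indicator, hy]

/-! ### The transform on the ball and the Euler operator -/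

/-- The transform `J_{k,a}` on functions on `ℝⁿ`. -/
def JE (n : ℕ) (k a : ℝ) (v : E n → ℝ) (x : E n) : ℝ :=
  ∫ t in Ioo (0 : ℝ) 1, wt k a t * (v (t • x) * (1 - t * ‖x‖ ^ 2) ^ k)

/-- The shifted Euler operator `N + a`. -/
def eul (n : ℕ) (a : ℝ) (u : E n → ℝ) (x : E n) : ℝ := fderiv ℝ u x x + a * u x

section
variable {n : ℕ}

lemma ball_pos {x : E n} (hx : x ∈ ball (0 : E n) 1) : 0 < 1 - ‖x‖ ^ 2 := by
  have : ‖x‖ < 1 := by simpa using hx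
  nlinarith [norm_nonneg x]

lemma ball_pos' {x : E n} (hx : x ∈ ball (0 : E n) 1) {t : ℝ} (ht : t ∈ Icc (0 : ℝ) 1) :
    0 < 1 - t * ‖x‖ ^ 2 := by
  have := ball_pos hx
  nlinarith [ht.1, ht.2, sq_nonneg ‖x‖]

lemma smul_mem_ball {x : E n} (hx : x ∈ ball (0 : E n) 1) {t : ℝ} (ht : t ∈ Icc (0 : ℝ) 1) :
    t • x ∈ ball (0 : E n) 1 := by
  have : ‖x‖ < 1 := by simpa using hx
  rw [mem_ball_zero_iff, norm_smul, Real.norm_of_nonneg ht.1]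
  nlinarith [ht.1, ht.2, norm_nonneg x]

lemma ray_mem {ζ : E n} (hζ : ζ ∈ sphere (0 : E n) 1) {s : ℝ} (hs : s ∈ Ioo (-1 : ℝ) 1) :
    s • ζ ∈ ball (0 : E n) 1 := by
  rw [mem_ball_zero_iff, norm_smul, mem_sphere_zero_iff_norm.1 hζ, mul_one]
  exact abs_lt.2 hs

lemma ray_norm {ζ : E n} (hζ : ζ ∈ sphere (0 : E n) 1) (s : ℝ) : ‖s • ζ‖ ^ 2 = s ^ 2 := by
  rw [norm_smul, mem_sphere_zero_iff_norm.1 hζ, mul_one, Real.norm_eq_abs, sq_abs]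

lemma JE_ray {k a : ℝ} (v : E n → ℝ) {ζ : E n} (hζ : ζ ∈ sphere (0 : E n) 1) (s : ℝ) :
    JE n k a v (s • ζ) = J1 k a (fun σ => v (σ • ζ)) s := by
  simp only [JE, J1, ray_norm hζ, smul_smul]

lemma ray_smooth {h : E n → ℝ} {m : WithTop ℕ∞} (hh : ContDiffOn ℝ m h (ball 0 1)) {ζ : E n}
    (hζ : ζ ∈ sphere (0 : E n) 1) : ContDiffOn ℝ m (fun σ : ℝ => h (σ • ζ)) (Ioo (-1) 1) :=
  hh.comp (f := fun σ : ℝ => σ • ζ) (by fun_prop) (fun s hs => ray_mem hζ hs)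

lemma ray_deriv {h : E n → ℝ} (hh : ContDiffOn ℝ 1 h (ball 0 1)) {ζ : E n}
    (hζ : ζ ∈ sphere (0 : E n) 1) {s : ℝ} (hs : s ∈ Ioo (-1 : ℝ) 1) :
    HasDerivAt (fun σ : ℝ => h (σ • ζ)) (fderiv ℝ h (s • ζ) ζ) s := by
  have h1 : HasDerivAt (fun σ : ℝ => σ • ζ) ζ s := by
    simpa using (hasDerivAt_id s).smul_const ζ
  exact (((hh.contDiffAt (isOpen_ball.mem_nhds (ray_mem hζ hs))).differentiableAt
    (by norm_num)).hasFDerivAt).comp_hasDerivAt s h1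

lemma fderiv_smooth {u : E n → ℝ} (hu : ContDiffOn ℝ ∞ u (ball 0 1)) :
    ContDiffOn ℝ ∞ (fderiv ℝ u) (ball 0 1) :=
  hu.fderiv_of_isOpen isOpen_ball (by norm_num)

lemma eul_smooth {a : ℝ} {u : E n → ℝ} (hu : ContDiffOn ℝ ∞ u (ball 0 1)) :
    ContDiffOn ℝ ∞ (eul n a u) (ball 0 1) :=
  ((fderiv_smooth hu).clm_apply contDiffOn_id).add (contDiffOn_const.mul hu)

lemma JE_smooth {k a : ℝ} (ha : 0 < a) (hk : -1 < k) {h : E n → ℝ}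
    (hh : ContDiffOn ℝ ∞ h (ball 0 1)) : ContDiffOn ℝ ∞ (JE n k a h) (ball 0 1) := by
  have hI : closedBall (1 / 2 : ℝ) (1 / 2) = Icc 0 1 := by
    rw [Real.closedBall_eq_Icc]; norm_num
  have hW : IsOpen {q : E n × ℝ | q.2 • q.1 ∈ ball (0 : E n) 1 ∧ 0 < 1 - q.2 * ‖q.1‖ ^ 2} :=
    (isOpen_ball.preimage (f := fun q : E n × ℝ => q.2 • q.1) (by fun_prop)).inter
      (isOpen_lt continuous_const
        (by fun_prop : Continuous fun q : E n × ℝ => 1 - q.2 * ‖q.1‖ ^ 2))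
  have := smooth_param (s := ball (0 : E n) 1) (c := (1 / 2 : ℝ)) (r := 1 / 2) (by norm_num)
    (f := wt k a)
    (by rw [hI, integrableOn_Icc_iff_integrableOn_Ioo]; exact wt_int ha hk)
    (F := fun x t => h (t • x) * (1 - t * ‖x‖ ^ 2) ^ k) hW
    (by
      apply ContDiffOn.mul
      · exact hh.comp (f := fun q : E n × ℝ => q.2 • q.1) (by fun_prop) (fun q hq => hq.1)
      · refine ContDiffOn.rpow_const_of_ne ?_ (fun q hq => hq.2.ne')
        exact contDiffOn_const.sub (contDiffOn_snd.mul (contDiffOn_fst.norm_sq ℝ)))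
    (by
      rintro ⟨x, t⟩ ⟨hx, ht⟩
      rw [hI] at ht
      exact ⟨smul_mem_ball hx ht, ball_pos' hx ht⟩)
  refine this.congr fun x _ => ?_
  rw [hI, integral_Icc_eq_integral_Ioo]
  rfl

/-- `J_{0,b}` inverts the Euler operator `N + b`. -/
lemma J1_eul {b : ℝ} (hb : 0 < b) {u : E n → ℝ} (hu : ContDiffOn ℝ ∞ u (ball 0 1)) {ζ : E n}
    (hζ : ζ ∈ sphere (0 : E n) 1) {s : ℝ} (hs : s ∈ Ioo (-1 : ℝ) 1) :
    J1 0 b (fun σ => eul n b u (σ • ζ)) s = u (s • ζ) := by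
  have hi := J1_integrand (k := 0) (l := 0) hb.le (by norm_num)
    ((ray_smooth (eul_smooth (a := b) hu) hζ).of_le (by norm_num)) (fun h => absurd h hb.ne') hs
  have hT := ftc01 (T := fun t => t ^ b * u ((t * s) • ζ)) ?_ ?_ hi
  · rw [J1, hT]
    simp [Real.zero_rpow hb.ne']
  · exact (Real.continuous_rpow_const hb.le).continuousOn.mul
      ((ray_smooth hu hζ).continuousOn.comp (f := fun t => t * s) (by fun_prop)
        (fun t ht => mul_mem_Ioo hs ht))
  · intro t ht
    have d1 := (ray_deriv (hu.of_le (by norm_num)) hζ (mul_mem_Ioo hs (Ioo_subset_Icc_self ht))).comp t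
      ((hasDerivAt_id t).mul_const s)
    have d2 := (Real.hasDerivAt_rpow_const (p := b) (Or.inl ht.1.ne')).fun_mul d1
    convert! d2 using 1
    simp only [eul, wt, map_smul, smul_eq_mul, Real.rpow_zero, Function.comp, id]
    rw [rpow_pred ht.1 (k := b)]
    ring

/-- Uniqueness for the singular equation `s y' + a y = 0`: the function `s^a y` is constant and
vanishes at `0`. -/
lemma euler_zero {a : ℝ} (ha : 0 ≤ a) {y y' : ℝ → ℝ} (hc : ContinuousOn y (Ioo (-1) 1))
    (h0 : a = 0 → y 0 = 0) (hd : ∀ s ∈ Ioo (0 : ℝ) 1, HasDerivAt y (y' s) s)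
    (he : ∀ s ∈ Ioo (0 : ℝ) 1, s * y' s + a * y s = 0) : ∀ s ∈ Ioo (0 : ℝ) 1, y s = 0 := by
  intro s hs
  have hsub : Icc 0 s ⊆ Ioo (-1) 1 := fun x hx => ⟨by linarith [hx.1], by linarith [hx.2, hs.2]⟩
  have hsub' : ∀ x ∈ Ioo 0 s, x ∈ Ioo (0 : ℝ) 1 := fun x hx => ⟨hx.1, by linarith [hx.2, hs.2]⟩
  obtain ⟨c, hcm, hcs⟩ := exists_hasDerivAt_eq_slope (fun s => s ^ a * y s)
    (fun s => a * s ^ (a - 1) * y s + s ^ a * y' s) hs.1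
    ((Real.continuous_rpow_const ha).continuousOn.mul (hc.mono hsub))
    (fun x hx => (Real.hasDerivAt_rpow_const (Or.inl hx.1.ne')).fun_mul (hd x (hsub' x hx)))
  have e1 : a * c ^ (a - 1) * y c + c ^ a * y' c = 0 := by
    rw [rpow_pred hcm.1 (k := a)]
    linear_combination c ^ (a - 1) * he c (hsub' c hcm)
  have e2 : (0 : ℝ) ^ a * y 0 = 0 := by
    rcases ha.eq_or_lt with rfl | ha
    · rw [h0 rfl, mul_zero]
    · rw [Real.zero_rpow ha.ne', zero_mul]
  rw [e1, e2, sub_zero, sub_zero, eq_comm, div_eq_zero_iff] at hcs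
  rcases hcs with h | h
  · exact (mul_eq_zero.1 h).resolve_left (Real.rpow_pos_of_pos hs.1 a).ne'
  · exact absurd h hs.1.ne'

/-- A preimage of `(N+a)u / (k(1-|x|²))` under `J_{k-1,a+1}` is a preimage of `u`
under `J_{k,a}`. -/
lemma surj_step {k a : ℝ} (ha : 0 ≤ a) (hk : 0 < k) {u h : E n → ℝ}
    (hu : ContDiffOn ℝ ∞ u (ball 0 1)) (hh : ContDiffOn ℝ ∞ h (ball 0 1))
    (hu0 : a = 0 → u 0 = 0) (hh0 : a = 0 → h 0 = 0)
    (hs : ∀ ζ ∈ sphere (0 : E n) 1, ∀ s ∈ Ioo (0 : ℝ) 1,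
      J1 (k - 1) (a + 1) (fun σ => h (σ • ζ)) s = eul n a u (s • ζ) / (k * (1 - ‖s • ζ‖ ^ 2))) :
    ∀ ζ ∈ sphere (0 : E n) 1, ∀ s ∈ Ioo (0 : ℝ) 1,
      J1 k a (fun σ => h (σ • ζ)) s = u (s • ζ) := by
  intro ζ hζ
  have hh1 : ContDiffOn ℝ 1 (fun σ : ℝ => h (σ • ζ)) (Ioo (-1) 1) :=
    (ray_smooth hh hζ).of_le (by norm_num)
  have hh0' : a = 0 → h ((0 : ℝ) • ζ) = 0 := fun h => by rw [zero_smul, hh0 h]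
  have hst := fun (s : ℝ) (hs : s ∈ Ioo (-1 : ℝ) 1) => J1_step ha hk hh1 hh0' hs
  choose! J' hJ1 hJ2 using hst
  have hu1 := fun s (hs : s ∈ Ioo (-1 : ℝ) 1) => ray_deriv (hu.of_le (by norm_num)) hζ hs
  have := euler_zero (a := a) ha
    (y := fun s => J1 k a (fun σ => h (σ • ζ)) s - u (s • ζ))
    (y' := fun s => J' s - fderiv ℝ u (s • ζ) ζ)
    (ContinuousOn.sub (fun s hs => (hJ1 s hs).continuousAt.continuousWithinAt)
      (ray_smooth hu hζ).continuousOn)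
    (fun ha0 => by
      have : J1 k a (fun σ => h (σ • ζ)) 0 = 0 := by
        simp [J1, hh0 ha0]
      rw [this, zero_smul, hu0 ha0, sub_zero])
    (fun s hs => (hJ1 s (Ioo_sub hs)).fun_sub (hu1 s (Ioo_sub hs)))
    (fun s hs' => by
      have e := hJ2 s (Ioo_sub hs')
      rw [hs ζ hζ s hs', ray_norm hζ] at e
      have p : 0 < 1 - s ^ 2 := by nlinarith [hs'.1, hs'.2]
      rw [mul_div_cancel₀ _ (by positivity)] at e
      simp only [eul, map_smul, smul_eq_mul] at e
      beta_reduce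
      linear_combination e)
  intro s hs'
  exact sub_eq_zero.1 (this s hs')

lemma smooth_div {k a : ℝ} (hk : 0 < k) {u : E n → ℝ} (hu : ContDiffOn ℝ ∞ u (ball 0 1)) :
    ContDiffOn ℝ ∞ (fun x => eul n a u x / (k * (1 - ‖x‖ ^ 2))) (ball 0 1) :=
  (eul_smooth hu).div (contDiffOn_const.mul (contDiffOn_const.sub (contDiffOn_id.norm_sq ℝ)))
    (fun _ hx => (mul_pos hk (ball_pos hx)).ne')

end

/-! ### Surjectivity on smooth functions -/

section
variable {n : ℕ}

lemma J1_const_mul (k a c : ℝ) (φ : ℝ → ℝ) (s : ℝ) :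
    J1 k a (fun σ => c * φ σ) s = c * J1 k a φ s := by
  rw [J1, J1, ← integral_const_mul]
  congr 1; ext t; ring

lemma J1_sub {k a : ℝ} {φ ψ : ℝ → ℝ} {s : ℝ} (ha : 0 < a) (hk : -1 < k)
    (hφ : ContinuousOn φ (Ioo (-1) 1)) (hψ : ContinuousOn ψ (Ioo (-1) 1))
    (hs : s ∈ Ioo (-1 : ℝ) 1) :
    J1 k a (fun σ => φ σ - ψ σ) s = J1 k a φ s - J1 k a ψ s := by
  have key : ∀ φ : ℝ → ℝ, ContinuousOn φ (Ioo (-1) 1) →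
      IntegrableOn (fun t => wt k a t * (φ (t * s) * (1 - t * s ^ 2) ^ k)) (Ioo 0 1) := by
    intro φ hφ
    refine wtmul_int (wt_int ha hk) ?_
    refine (hφ.comp (by fun_prop) (fun t ht => mul_mem_Ioo hs ht)).mul ?_
    exact ContinuousOn.rpow_const (by fun_prop) (fun p hp => Or.inl (one_sub_pos hs hp).ne')
  rw [J1, J1, J1, ← integral_sub (key φ hφ) (key ψ hψ)]
  congr 1; ext t; ring

lemma wt_integral_pos {k a : ℝ} (ha : 0 < a) (hk : -1 < k) :
    0 < ∫ t in Ioo (0 : ℝ) 1, wt k a t := by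
  rw [setIntegral_pos_iff_support_of_nonneg_ae
    ((ae_restrict_mem measurableSet_Ioo).mono fun t ht => wt_nonneg ht) (wt_int ha hk)]
  have : Ioo (0 : ℝ) 1 ⊆ Function.support (wt k a) ∩ Ioo 0 1 := by
    intro t ht
    refine ⟨?_, ht⟩
    have : 0 < 1 - t := by linarith [ht.2]
    exact (mul_pos (Real.rpow_pos_of_pos ht.1 _) (Real.rpow_pos_of_pos this _)).ne'
  refine lt_of_lt_of_le ?_ (measure_mono this)
  simp

/-- Uniqueness for `J_{-1/2,b}` with `b > 0`: dividing by `s` raises `b` by one. -/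
lemma inj_half_of_diff {b : ℝ} (hb : 0 < b) {e : ℝ → ℝ} (he : ContinuousOn e (Ioo (-1) 1))
    (he0 : DifferentiableAt ℝ e 0)
    (h : ∀ s ∈ Ico (0 : ℝ) 1, J1 (-1 / 2) b e s = 0) : ∀ s ∈ Ioo (0 : ℝ) 1, e s = 0 := by
  have h00 : e 0 = 0 := by
    have h1 := h 0 (by simp)
    have h2 : J1 (-1 / 2) b e 0 = (∫ t in Ioo (0 : ℝ) 1, wt (-1 / 2) b t) * e 0 := by
      rw [J1, ← integral_mul_const]
      congr 1; ext t; simp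
    rw [h2] at h1
    exact (mul_eq_zero.1 h1).resolve_left (wt_integral_pos hb (by norm_num)).ne'
  have hd : ∀ σ, e σ = σ * dslope e 0 σ := by
    intro σ
    have := sub_smul_dslope e 0 σ
    rw [h00, sub_zero, sub_zero, smul_eq_mul] at this
    exact this.symm
  have hdc : ContinuousOn (dslope e 0) (Ioo (-1) 1) :=
    (continuousOn_dslope (isOpen_Ioo.mem_nhds (by norm_num))).2 ⟨he, he0⟩
  have h3 := inj_half (a := b + 1) (by linarith) hdc (fun s hs => by
    have h4 := h s ⟨hs.1.le, hs.2⟩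
    have h5 : J1 (-1 / 2) b e s = s * J1 (-1 / 2) (b + 1) (dslope e 0) s := by
      rw [J1, J1, ← integral_const_mul]
      refine setIntegral_congr_fun measurableSet_Ioo fun t ht => ?_
      rw [hd, ← wt_succ ht.1]
      ring
    rw [h5] at h4
    exact (mul_eq_zero.1 h4).resolve_left hs.1.ne')
  intro s hs
  rw [hd, h3 s hs, mul_zero]

/-- Surjectivity in the case `k = -1/2`. The preimage is explicit:
`h = π⁻¹ (N+b) J_{-1/2,b}((1-|x|²)u)` with `b = a - 1/2`, as read off from `J1_comp`. -/
lemma surj_half {a : ℝ} (ha : 1 ≤ a) {u : E n → ℝ} (hu : ContDiffOn ℝ ∞ u (ball 0 1)) :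
    ∃ h : E n → ℝ, ContDiffOn ℝ ∞ h (ball 0 1) ∧ ∀ ζ ∈ sphere (0 : E n) 1, ∀ s ∈ Ioo (0 : ℝ) 1,
      J1 (-1 / 2) a (fun σ => h (σ • ζ)) s = u (s • ζ) := by
  set b := a - 1 / 2 with hb
  have hb0 : 0 < b := by linarith
  set u1 : E n → ℝ := fun x => (1 - ‖x‖ ^ 2) * u x with hu1
  have hu1s : ContDiffOn ℝ ∞ u1 (ball 0 1) :=
    (contDiffOn_const.sub (contDiffOn_id.norm_sq ℝ)).mul hu
  have hq := JE_smooth (k := -1 / 2) hb0 (by norm_num) hu1s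
  set q := JE n (-1 / 2) b u1 with hqd
  have hh : ContDiffOn ℝ ∞ (fun x => Real.pi⁻¹ * eul n b q x) (ball 0 1) :=
    contDiffOn_const.mul (eul_smooth hq)
  refine ⟨_, hh, ?_⟩
  intro ζ hζ
  set φ : ℝ → ℝ := fun σ => Real.pi⁻¹ * eul n b q (σ • ζ) with hφ
  have hφs : ContDiffOn ℝ ∞ φ (Ioo (-1) 1) := ray_smooth hh hζ
  have hy : ContDiffOn ℝ ∞ (J1 (-1 / 2) a φ) (Ioo (-1) 1) := by
    refine (ray_smooth (JE_smooth (k := -1 / 2) (a := a) (by linarith) (by norm_num) hh) hζ).congr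
      fun s _ => ?_
    rw [JE_ray _ hζ]
  have hus := ray_smooth hu hζ
  have hs2 : ContDiffOn ℝ ∞ (fun σ : ℝ => 1 - σ ^ 2) (Ioo (-1) 1) := by fun_prop
  -- The weighted error is annihilated by `J_{-1/2,b}`. Here `b` may be as small as `1/2`, which
  -- `inj_half` does not cover, so `inj_half_of_diff` is needed.
  set e : ℝ → ℝ := fun σ => (1 - σ ^ 2) * J1 (-1 / 2) a φ σ - (1 - σ ^ 2) * u (σ • ζ) with he
  have hes : ContDiffOn ℝ ∞ e (Ioo (-1) 1) := (hs2.mul hy).sub (hs2.mul hus)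
  have h0 := inj_half_of_diff hb0 hes.continuousOn
    ((hes.contDiffAt (isOpen_Ioo.mem_nhds (by norm_num))).differentiableAt (by norm_num))
    (fun s hs => by
      have hs' : s ∈ Ioo (-1 : ℝ) 1 := ⟨by linarith [hs.1], hs.2⟩
      rw [he, J1_sub hb0 (by norm_num) (hs2.mul hy).continuousOn (hs2.mul hus).continuousOn hs',
        hb, J1_comp (by linarith) hφs.continuousOn hs', ← hb, hφ, J1_const_mul,
        J1_eul hb0 hq hζ hs', ← mul_assoc, mul_inv_cancel₀ Real.pi_ne_zero, one_mul, hqd,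
        JE_ray _ hζ, hu1]
      simp only [ray_norm hζ, sub_self])
  intro s hs
  have := h0 s hs
  rw [he] at this
  have p : 1 - s ^ 2 ≠ 0 := by nlinarith [hs.1, hs.2]
  have := mul_left_cancel₀ p (sub_eq_zero.1 this)
  exact this

/-- Surjectivity of `J_{j+κ,a}` on smooth functions of the ball. -/
lemma surj_nat {κ : ℝ} (hκ : κ = 0 ∨ κ = -1 / 2) (j : ℕ) : ∀ a : ℝ, 1 ≤ a → ∀ u : E n → ℝ,
    ContDiffOn ℝ ∞ u (ball 0 1) →
    ∃ h : E n → ℝ, ContDiffOn ℝ ∞ h (ball 0 1) ∧ ∀ ζ ∈ sphere (0 : E n) 1, ∀ s ∈ Ioo (0 : ℝ) 1,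
      J1 (j + κ) a (fun σ => h (σ • ζ)) s = u (s • ζ) := by
  induction j with
  | zero =>
    intro a ha u hu
    rw [Nat.cast_zero, zero_add]
    rcases hκ with rfl | rfl
    · exact ⟨_, eul_smooth (a := a) hu, fun ζ hζ s hs => J1_eul (by linarith) hu hζ (Ioo_sub hs)⟩
    · exact surj_half ha hu
  | succ j ih =>
    intro a ha u hu
    have hk : 0 < ((j + 1 : ℕ) : ℝ) + κ := by
      push_cast
      have : (0 : ℝ) ≤ j := Nat.cast_nonneg j
      rcases hκ with rfl | rfl <;> linarith
    obtain ⟨h, hh, hJ⟩ := ih (a + 1) (by linarith) _ (smooth_div (a := a) hk hu)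
    refine ⟨h, hh, surj_step (by linarith) hk hu hh (fun h => by linarith) (fun h => by linarith) ?_⟩
    rw [show ((j + 1 : ℕ) : ℝ) + κ - 1 = j + κ by push_cast; ring]
    exact hJ

/-- Surjectivity of the integral transform of the theorem. -/
lemma surj_main (hn : 3 ≤ n) {u : E n → ℝ} (hu : ContDiffOn ℝ ∞ u (ball 0 1)) (hu0 : u 0 = 0) :
    ∃ v : E n → ℝ, ContDiffOn ℝ ∞ v (ball 0 1) ∧ v 0 = 0 ∧
      ∀ ζ ∈ sphere (0 : E n) 1, ∀ s ∈ Ioo (0 : ℝ) 1,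
        J1 ((n : ℝ) / 2 - 1) 0 (fun σ => v (σ • ζ)) s = u (s • ζ) := by
  obtain ⟨j, κ, hκ, hj⟩ := exists_kappa hn
  have hk := kpos hn
  -- Solving for `N u / (k(1-|x|²))` at exponent `k - 1`, `k = n/2 - 1`, solves for `u` at exponent `k`.
  obtain ⟨v, hv, hJ⟩ := surj_nat hκ j (0 + 1) (by norm_num) _ (smooth_div (a := 0) hk hu)
  rw [← hj] at hJ
  -- At `s = 0` the transform is a positive multiple of `v 0`, and by continuity it equals the
  -- right-hand side `N(u)/(k(1-|x|²))` there, which is `0`.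
  have hv0 : v 0 = 0 := by
    obtain ⟨ζ, hζ⟩ : ∃ ζ : E n, ζ ∈ sphere (0 : E n) 1 :=
      ⟨EuclideanSpace.single ⟨0, by omega⟩ 1, by simp⟩
    have hk1 : -1 < (n : ℝ) / 2 - 1 - 1 := by linarith
    have hb := smooth_div (a := 0) hk hu
    have hc1 : ContinuousAt (fun s => J1 ((n : ℝ) / 2 - 1 - 1) (0 + 1) (fun σ => v (σ • ζ)) s) 0 := by
      have := (ray_smooth (JE_smooth (k := (n : ℝ) / 2 - 1 - 1) (a := 0 + 1) (by norm_num) hk1 hv)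
        hζ).continuousOn.continuousAt (isOpen_Ioo.mem_nhds (x := (0 : ℝ)) (by norm_num))
      simpa only [JE_ray _ hζ] using this
    have hc2 := (ray_smooth hb hζ).continuousOn.continuousAt
      (isOpen_Ioo.mem_nhds (x := (0 : ℝ)) (by norm_num))
    have hlim : J1 ((n : ℝ) / 2 - 1 - 1) (0 + 1) (fun σ => v (σ • ζ)) 0 = 0 := by
      have t1 := hc1.tendsto.mono_left (nhdsWithin_le_nhds (s := Ioi 0))
      have t2 := hc2.tendsto.mono_left (nhdsWithin_le_nhds (s := Ioi 0))
      have t3 := t2.congr' (f₂ := fun s => J1 ((n : ℝ) / 2 - 1 - 1) (0 + 1) (fun σ => v (σ • ζ)) s) (by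
        filter_upwards [Ioo_mem_nhdsGT (show (0 : ℝ) < 1 by norm_num)] with s hs
        exact (hJ ζ hζ s hs).symm)
      rw [tendsto_nhds_unique t1 t3]
      simp [eul]
    have h2 : J1 ((n : ℝ) / 2 - 1 - 1) (0 + 1) (fun σ => v (σ • ζ)) 0 =
        (∫ t in Ioo (0 : ℝ) 1, wt ((n : ℝ) / 2 - 1 - 1) (0 + 1) t) * v 0 := by
      rw [J1, ← integral_mul_const]
      congr 1; ext t; simp
    rw [h2] at hlim
    exact (mul_eq_zero.1 hlim).resolve_left (wt_integral_pos (by norm_num) hk1).ne'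
  refine ⟨v, hv, hv0, surj_step le_rfl hk hu hv (fun _ => hu0) (fun _ => hv0) ?_⟩
  exact hJ

end

/-! ### Derivatives of the transform on the ball -/

section
variable {n : ℕ}

lemma beta_fderiv {t l : ℝ} {x : E n} (h : 0 < 1 - t * ‖x‖ ^ 2) :
    HasFDerivAt (fun y : E n => (1 - t * ‖y‖ ^ 2) ^ l)
      (-(2 * l * t * (1 - t * ‖x‖ ^ 2) ^ (l - 1)) • innerSL ℝ x) x := by
  have h1 := (((hasStrictFDerivAt_norm_sq x).hasFDerivAt.const_mul t).const_sub 1).rpow_const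
    (p := l) (Or.inl h.ne')
  convert! h1 using 1
  ext y
  simp
  ring

lemma beta_cont (l : ℝ) : ContinuousOn (fun p : E n × ℝ => (1 - p.2 * ‖p.1‖ ^ 2) ^ l)
    (ball (0 : E n) 1 ×ˢ Icc (0 : ℝ) 1) :=
  ContinuousOn.rpow_const (by fun_prop) (fun _ hp => Or.inl (ball_pos' hp.1 hp.2).ne')

lemma dil_cont {F : Type*} [TopologicalSpace F] {f : E n → F} (hf : ContinuousOn f (ball 0 1)) :
    ContinuousOn (fun p : E n × ℝ => f (p.2 • p.1)) (ball (0 : E n) 1 ×ˢ Icc (0 : ℝ) 1) :=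
  hf.comp (f := fun p : E n × ℝ => p.2 • p.1) (by fun_prop) (fun _ hp => smul_mem_ball hp.1 hp.2)

lemma dil_fderiv {f : E n → ℝ} (hf : ContDiffOn ℝ ∞ f (ball 0 1)) {t : ℝ} (ht : t ∈ Icc (0 : ℝ) 1)
    {x : E n} (hx : x ∈ ball (0 : E n) 1) :
    HasFDerivAt (fun y : E n => f (t • y)) (t • fderiv ℝ f (t • x)) x := by
  have h1 := ((hf.contDiffAt (isOpen_ball.mem_nhds (smul_mem_ball hx ht))).differentiableAt
    (by norm_num)).hasFDerivAt
  have h2 : HasFDerivAt (fun y : E n => t • y) (t • ContinuousLinearMap.id ℝ (E n)) x :=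
    (hasFDerivAt_id x).const_smul t
  convert! h1.comp x h2 using 1
  ext y
  simp

lemma exists_ray {x : E n} (hx : x ∈ ball (0 : E n) 1) (h0 : x ≠ 0) :
    ∃ ζ ∈ sphere (0 : E n) 1, ∃ s ∈ Ioo (0 : ℝ) 1, x = s • ζ := by
  have hn : 0 < ‖x‖ := norm_pos_iff.2 h0
  refine ⟨‖x‖⁻¹ • x, ?_, ‖x‖, ⟨hn, by simpa using hx⟩, ?_⟩
  · simp [norm_smul, hn.ne']
  · rw [smul_smul, mul_inv_cancel₀ hn.ne', one_smul]

lemma JE_integrand {k l : ℝ} (hk : -1 < k) {v : E n → ℝ} (hv : ContDiffOn ℝ ∞ v (ball 0 1))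
    (hv0 : v 0 = 0) {x : E n} (hx : x ∈ ball (0 : E n) 1) :
    IntegrableOn (fun t => wt k 0 t * (v (t • x) * (1 - t * ‖x‖ ^ 2) ^ l)) (Ioo (0 : ℝ) 1) := by
  rcases eq_or_ne x 0 with rfl | h0
  · simp [hv0]
  · obtain ⟨ζ, hζ, s, hs, rfl⟩ := exists_ray hx h0
    have hr : ContDiffOn ℝ 1 (fun σ : ℝ => v (σ • ζ)) (Ioo (-1) 1) :=
      (ray_smooth hv hζ).of_le (by norm_num)
    have := J1_integrand (l := l) le_rfl hk hr
      (fun _ => by rw [zero_smul, hv0]) (Ioo_sub hs)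
    simpa only [ray_norm hζ, smul_smul] using this

lemma sum_coord (L : E n →L[ℝ] ℝ) (x : E n) :
    ∑ i, x i * L (EuclideanSpace.single i 1) = L x := by
  conv_rhs => rw [← (EuclideanSpace.basisFun (Fin n) ℝ).sum_repr x]
  simp [map_sum]

/-- The derivative of the integrand of `J_{k,0}`, without its weight. -/
def dker (n : ℕ) (k : ℝ) (v : E n → ℝ) (x : E n) (t : ℝ) : E n →L[ℝ] ℝ :=
  ((1 - t * ‖x‖ ^ 2) ^ k) • fderiv ℝ v (t • x)
    - (2 * k * (v (t • x) * (1 - t * ‖x‖ ^ 2) ^ (k - 1))) • innerSL ℝ x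

/-- The gradient of `J_{k,0} v`, by differentiation under the integral sign. The factor `t`
gained by the derivative makes the weight `wt k 1` integrable. -/
lemma JE_fderiv {k : ℝ} (hk : 0 < k) {v : E n → ℝ} (hv : ContDiffOn ℝ ∞ v (ball 0 1))
    (hv0 : v 0 = 0) {x : E n} (hx : x ∈ ball (0 : E n) 1) :
    IntegrableOn (fun t => wt k 1 t • dker n k v x t) (Ioo (0 : ℝ) 1) ∧
    HasFDerivAt (JE n k 0 v) (∫ t in Ioo (0 : ℝ) 1, wt k 1 t • dker n k v x t) x := by
  refine leib isOpen_ball (w := wt k 1) (wt_int one_pos (by linarith))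
    (F := fun x t => wt k 0 t * (v (t • x) * (1 - t * ‖x‖ ^ 2) ^ k)) (G := dker n k v) ?_
    (fun x hx => JE_integrand (by linarith) hv hv0 hx) ?_ hx
  · unfold dker
    have ce : ContinuousOn (fun p : E n × ℝ => innerSL ℝ p.1) (ball (0 : E n) 1 ×ˢ Icc (0 : ℝ) 1) :=
      ((innerSL ℝ).continuous.comp continuous_fst).continuousOn
    have cc : ContinuousOn (fun _ : E n × ℝ => 2 * k) (ball (0 : E n) 1 ×ˢ Icc (0 : ℝ) 1) :=
      continuousOn_const
    have b0 := beta_cont (n := n) k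
    have b1 := beta_cont (n := n) (k - 1)
    exact (b0.smul (dil_cont (fderiv_smooth hv).continuousOn)).sub
      ((cc.mul ((dil_cont hv.continuousOn).mul b1)).smul ce)
  · intro x hx t ht
    have htI := Ioo_subset_Icc_self ht
    have h1 := ((dil_fderiv hv htI hx).mul (beta_fderiv (l := k) (ball_pos' hx htI))).const_mul
      (wt k 0 t)
    convert! h1 using 1
    have : wt k 1 t = wt k 0 t * t := by rw [wt_succ ht.1, zero_add]
    ext y
    simp only [dker, this]
    simp
    ring

lemma dir_smooth {v : E n → ℝ} (hv : ContDiffOn ℝ ∞ v (ball 0 1)) (h : E n) :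
    ContDiffOn ℝ ∞ (fun y => fderiv ℝ v y h) (ball 0 1) :=
  (fderiv_smooth hv).clm_apply contDiffOn_const

/-- The derivative in `x` of `dker n k v x t (e i)`. -/
def ddker (n : ℕ) (k : ℝ) (v : E n → ℝ) (i : Fin n) (x : E n) (t : ℝ) : E n →L[ℝ] ℝ :=
  ((1 - t * ‖x‖ ^ 2) ^ k) • (t • fderiv ℝ (fun y => fderiv ℝ v y (EuclideanSpace.single i 1)) (t • x))
    - (fderiv ℝ v (t • x) (EuclideanSpace.single i 1) *
        (2 * k * t * (1 - t * ‖x‖ ^ 2) ^ (k - 1))) • innerSL ℝ x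
    - (2 * k * (v (t • x) * (1 - t * ‖x‖ ^ 2) ^ (k - 1))) • EuclideanSpace.proj i
    - (2 * k * x i * (1 - t * ‖x‖ ^ 2) ^ (k - 1)) • (t • fderiv ℝ v (t • x))
    + (2 * k * x i * v (t • x) * (2 * (k - 1) * t * (1 - t * ‖x‖ ^ 2) ^ (k - 1 - 1))) • innerSL ℝ x

lemma dker_apply {k : ℝ} {v : E n → ℝ} (i : Fin n) (x : E n) (t : ℝ) :
    dker n k v x t (EuclideanSpace.single i 1) =
      (1 - t * ‖x‖ ^ 2) ^ k * fderiv ℝ v (t • x) (EuclideanSpace.single i 1)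
      - 2 * k * (v (t • x) * (1 - t * ‖x‖ ^ 2) ^ (k - 1)) * x i := by
  simp [dker, EuclideanSpace.inner_single_right]

/-- The second derivatives of `J_{k,0} v`. -/
lemma JE_fderiv2 {k : ℝ} (hk : 0 < k) {v : E n → ℝ} (hv : ContDiffOn ℝ ∞ v (ball 0 1))
    (hv0 : v 0 = 0) (i : Fin n) {x : E n} (hx : x ∈ ball (0 : E n) 1) :
    IntegrableOn (fun t => wt k 1 t • ddker n k v i x t) (Ioo (0 : ℝ) 1) ∧
    HasFDerivAt (fun y => fderiv ℝ (JE n k 0 v) y (EuclideanSpace.single i 1))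
      (∫ t in Ioo (0 : ℝ) 1, wt k 1 t • ddker n k v i x t) x := by
  have key := leib isOpen_ball (w := wt k 1) (wt_int one_pos (by linarith))
    (F := fun x t => wt k 1 t * dker n k v x t (EuclideanSpace.single i 1))
    (G := ddker n k v i) ?_ ?_ ?_ hx
  · refine ⟨key.1, key.2.congr_of_eventuallyEq ?_⟩
    filter_upwards [isOpen_ball.mem_nhds hx] with y hy
    obtain ⟨h1, h2⟩ := JE_fderiv hk hv hv0 hy
    rw [h2.fderiv, ContinuousLinearMap.integral_apply h1]
    simp only [smul_apply, smul_eq_mul]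
  · unfold ddker
    have cx : ContinuousOn (fun p : E n × ℝ => p.1 i) (ball (0 : E n) 1 ×ˢ Icc (0 : ℝ) 1) := by
      fun_prop
    have cv := dil_cont hv.continuousOn
    have cd := dil_cont (fderiv_smooth hv).continuousOn
    have ci := dil_cont (dir_smooth hv (EuclideanSpace.single i 1)).continuousOn
    have cdi := dil_cont (fderiv_smooth (dir_smooth hv (EuclideanSpace.single i 1))).continuousOn
    have b0 := beta_cont (n := n) k
    have b1 := beta_cont (n := n) (k - 1)
    have b2 := beta_cont (n := n) (k - 1 - 1)
    have ce : ContinuousOn (fun p : E n × ℝ => innerSL ℝ p.1) (ball (0 : E n) 1 ×ˢ Icc (0 : ℝ) 1) :=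
      ((innerSL ℝ).continuous.comp continuous_fst).continuousOn
    have c2 : ContinuousOn (fun p : E n × ℝ => p.2) (ball (0 : E n) 1 ×ˢ Icc (0 : ℝ) 1) := by
      fun_prop
    have cc : ∀ c : ℝ, ContinuousOn (fun _ : E n × ℝ => c) (ball (0 : E n) 1 ×ˢ Icc (0 : ℝ) 1) :=
      fun c => continuousOn_const
    refine ((((b0.smul (c2.smul cdi)).sub ((ci.mul (((cc _).mul c2).mul b1)).smul ce)).sub
      (((cc _).mul (cv.mul b1)).smul continuousOn_const)).sub
      ((((cc _).mul cx).mul b1).smul (c2.smul cd))).add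
      (((((cc _).mul cx).mul cv).mul (((cc _).mul c2).mul b2)).smul ce)
  · intro y hy
    obtain ⟨h1, h2⟩ := JE_fderiv hk hv hv0 hy
    refine IntegrableOn.congr_fun (h1.apply_continuousLinearMap (EuclideanSpace.single i 1)) ?_
      measurableSet_Ioo
    intro t ht
    simp
  · intro x hx t ht
    have htI := Ioo_subset_Icc_self ht
    have hp := ball_pos' hx htI
    have h1 := ((beta_fderiv (l := k) hp).mul
      (dil_fderiv (dir_smooth hv (EuclideanSpace.single i 1)) htI hx)).fun_sub
      ((((dil_fderiv hv htI hx).fun_mul (beta_fderiv (l := k - 1) hp)).const_mul (2 * k)).fun_mul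
        (EuclideanSpace.proj i : E n →L[ℝ] ℝ).hasFDerivAt)
    have h2 := h1.const_mul (wt k 1 t)
    simp only [dker_apply]
    convert! h2 using 1
    ext y
    simp [ddker]
    ring

end

/-! ### Intertwining of the two Laplacians -/

section
variable {n : ℕ}

lemma lap_smooth {v : E n → ℝ} (hv : ContDiffOn ℝ ∞ v (ball 0 1)) :
    ContDiffOn ℝ ∞ (lap n v) (ball 0 1) :=
  ContDiffOn.sum fun _ _ => dir_smooth (dir_smooth hv _) _

lemma sum_sq (x : E n) : ∑ i, x i * x i = ‖x‖ ^ 2 := by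
  rw [EuclideanSpace.norm_sq_eq]
  exact Finset.sum_congr rfl fun i _ => by rw [Real.norm_eq_abs, sq_abs, sq]

/-- The trace of the second derivatives: the integrand of `Δ J_{k,0} v`, without its weight. -/
lemma ddker_trace (k : ℝ) (v : E n → ℝ) (x : E n) (t : ℝ) :
    ∑ i, ddker n k v i x t (EuclideanSpace.single i 1) =
      t * lap n v (t • x) * (1 - t * ‖x‖ ^ 2) ^ k
      - 4 * k * t * fderiv ℝ v (t • x) x * (1 - t * ‖x‖ ^ 2) ^ (k - 1)
      - 2 * k * n * v (t • x) * (1 - t * ‖x‖ ^ 2) ^ (k - 1)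
      + 4 * k * (k - 1) * t * ‖x‖ ^ 2 * v (t • x) * (1 - t * ‖x‖ ^ 2) ^ (k - 1 - 1) := by
  have h : ∀ i, ddker n k v i x t (EuclideanSpace.single i 1) =
      (1 - t * ‖x‖ ^ 2) ^ k * t * fderiv ℝ (fun y => fderiv ℝ v y (EuclideanSpace.single i 1))
        (t • x) (EuclideanSpace.single i 1)
      - 4 * k * t * (1 - t * ‖x‖ ^ 2) ^ (k - 1) *
        (x i * fderiv ℝ v (t • x) (EuclideanSpace.single i 1))
      - 2 * k * (v (t • x) * (1 - t * ‖x‖ ^ 2) ^ (k - 1))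
      + 4 * k * (k - 1) * t * v (t • x) * (1 - t * ‖x‖ ^ 2) ^ (k - 1 - 1) * (x i * x i) := by
    intro i
    simp [ddker, EuclideanSpace.inner_single_right]
    ring
  rw [Finset.sum_congr rfl fun i _ => h i, Finset.sum_add_distrib, Finset.sum_sub_distrib,
    Finset.sum_sub_distrib, ← Finset.mul_sum, ← Finset.mul_sum, ← Finset.mul_sum,
    ← Finset.mul_sum, ← Finset.mul_sum, sum_coord, sum_sq, lap]
  simp
  ring

lemma lap_JE {k : ℝ} (hk : 0 < k) {v : E n → ℝ} (hv : ContDiffOn ℝ ∞ v (ball 0 1))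
    (hv0 : v 0 = 0) {x : E n} (hx : x ∈ ball (0 : E n) 1) :
    IntegrableOn (fun t => wt k 1 t * ∑ i, ddker n k v i x t (EuclideanSpace.single i 1))
      (Ioo (0 : ℝ) 1) ∧
    lap n (JE n k 0 v) x =
      ∫ t in Ioo (0 : ℝ) 1, wt k 1 t * ∑ i, ddker n k v i x t (EuclideanSpace.single i 1) := by
  have hi : ∀ i ∈ (Finset.univ : Finset (Fin n)), IntegrableOn
      (fun t => wt k 1 t * ddker n k v i x t (EuclideanSpace.single i 1)) (Ioo (0 : ℝ) 1) := by
    intro i _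
    refine IntegrableOn.congr_fun ((JE_fderiv2 hk hv hv0 i hx).1.apply_continuousLinearMap
      (EuclideanSpace.single i 1)) ?_ measurableSet_Ioo
    intro t ht
    simp
  simp only [Finset.mul_sum]
  refine ⟨integrable_finsetSum _ hi, ?_⟩
  rw [integral_finsetSum _ hi, lap]
  refine Finset.sum_congr rfl fun i _ => ?_
  obtain ⟨h1, h2⟩ := JE_fderiv2 hk hv hv0 i hx
  rw [h2.fderiv, ContinuousLinearMap.integral_apply h1]
  simp only [smul_apply, smul_eq_mul]

lemma Nder_JE {k : ℝ} (hk : 0 < k) {v : E n → ℝ} (hv : ContDiffOn ℝ ∞ v (ball 0 1))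
    (hv0 : v 0 = 0) {x : E n} (hx : x ∈ ball (0 : E n) 1) :
    IntegrableOn (fun t => wt k 1 t * dker n k v x t x) (Ioo (0 : ℝ) 1) ∧
    Nder n (JE n k 0 v) x = ∫ t in Ioo (0 : ℝ) 1, wt k 1 t * dker n k v x t x := by
  obtain ⟨h1, h2⟩ := JE_fderiv hk hv hv0 hx
  refine ⟨IntegrableOn.congr_fun (h1.apply_continuousLinearMap x) (fun t ht => by simp)
    measurableSet_Ioo, ?_⟩
  rw [Nder, h2.fderiv, ContinuousLinearMap.integral_apply h1]
  simp only [smul_apply, smul_eq_mul]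

/-- The intertwining relation: `J_{k,0}` with `k = n/2-1` carries `|x|²Δ` to
`|x|²(1-|x|²)⁻²D`. The difference of the two integrands is the derivative in `t` of
`v(tx) · 4k|x|²/(1-|x|²) · (1-t)^{k+1} (1-t|x|²)^{k-1}`, which vanishes at `t = 0` and `t = 1`. -/
lemma intertwine {k : ℝ} (hk : 0 < k) (hkn : (n : ℝ) = 2 * k + 2) {v : E n → ℝ}
    (hv : ContDiffOn ℝ ∞ v (ball 0 1)) (hv0 : v 0 = 0) {x : E n} (hx : x ∈ ball (0 : E n) 1) :
    ∫ t in Ioo (0 : ℝ) 1,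
      wt k 1 t * (t * ‖x‖ ^ 2 * lap n v (t • x) * (1 - t * ‖x‖ ^ 2) ^ k) =
    ‖x‖ ^ 2 * lap n (JE n k 0 v) x
      + 2 * ((n : ℝ) - 2) * ‖x‖ ^ 2 / (1 - ‖x‖ ^ 2) * Nder n (JE n k 0 v) x := by
  obtain ⟨hi1, e1⟩ := lap_JE hk hv hv0 hx
  obtain ⟨hi2, e2⟩ := Nder_JE hk hv hv0 hx
  have hp := ball_pos hx
  set s := ‖x‖ ^ 2 with hs
  set c := 2 * ((n : ℝ) - 2) * s / (1 - s) with hc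
  have hi0 : IntegrableOn (fun t => wt k 1 t * (t * s * lap n v (t • x) * (1 - t * s) ^ k))
      (Ioo (0 : ℝ) 1) := by
    refine wtmul_int (wt_int one_pos (by linarith)) ?_
    have c1 : ContinuousOn (fun t : ℝ => lap n v (t • x)) (Icc 0 1) :=
      (lap_smooth hv).continuousOn.comp (f := fun t : ℝ => t • x) (by fun_prop)
        (fun t ht => smul_mem_ball hx ht)
    have c2 : ContinuousOn (fun t : ℝ => (1 - t * s) ^ k) (Icc 0 1) :=
      ContinuousOn.rpow_const (by fun_prop) (fun t ht => Or.inl (ball_pos' hx ht).ne')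
    exact ((continuousOn_id.mul continuousOn_const).mul c1).mul c2
  have hi3 := ((hi1.const_mul s).add (hi2.const_mul c)).sub hi0
  have hT := ftc01 (T := fun t => v (t • x) *
      (4 * k * s / (1 - s) * ((1 - t) ^ (k + 1) * (1 - t * s) ^ (k - 1)))) ?_ ?_ hi3
  · rw [integral_sub' ((hi1.const_mul s).add (hi2.const_mul c)) hi0,
      integral_add' (hi1.const_mul s) (hi2.const_mul c), integral_const_mul, integral_const_mul,
      ← e1, ← e2] at hT
    have : (0 : ℝ) ^ (k + 1) = 0 := Real.zero_rpow (by linarith)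
    simp only [zero_smul, hv0, sub_self, this] at hT
    linear_combination -hT
  · have c1 : ContinuousOn (fun t : ℝ => v (t • x)) (Icc 0 1) :=
      hv.continuousOn.comp (f := fun t : ℝ => t • x) (by fun_prop)
        (fun t ht => smul_mem_ball hx ht)
    have c2 : ContinuousOn (fun t : ℝ => (1 - t * s) ^ (k - 1)) (Icc 0 1) :=
      ContinuousOn.rpow_const (by fun_prop) (fun t ht => Or.inl (ball_pos' hx ht).ne')
    have c3 : ContinuousOn (fun t : ℝ => (1 - t) ^ (k + 1)) (Icc 0 1) :=
      ContinuousOn.rpow_const (by fun_prop) (fun t ht => Or.inr (by linarith))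
    exact c1.mul (continuousOn_const.mul (c3.mul c2))
  · intro t ht
    have hq := ball_pos' hx (Ioo_subset_Icc_self ht)
    rw [← hs] at hq
    have ht1 : 0 < 1 - t := by linarith [ht.2]
    have d0 : HasDerivAt (fun t : ℝ => t • x) x t := by
      simpa using (hasDerivAt_id t).smul_const x
    have d1 := (((hv.contDiffAt (isOpen_ball.mem_nhds (smul_mem_ball hx
      (Ioo_subset_Icc_self ht)))).differentiableAt (by norm_num)).hasFDerivAt).comp_hasDerivAt t d0
    have d2 := ((hasDerivAt_id t).const_sub 1).rpow_const (p := k + 1) (Or.inl ht1.ne')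
    have d3 := (((hasDerivAt_id t).mul_const s).const_sub 1).rpow_const (p := k - 1) (Or.inl hq.ne')
    have d4 := d1.fun_mul ((d2.fun_mul d3).const_mul (4 * k * s / (1 - s)))
    convert! d4 using 1
    simp only [Pi.sub_apply, Pi.add_apply, ddker_trace, ← hs, dker, id, Function.comp]
    have w1 : wt k 1 t = (1 - t) ^ k := by simp [wt]
    have r1 : (1 - t) ^ (k + 1) = (1 - t) ^ k * (1 - t) := Real.rpow_add_one ht1.ne' k
    have r2 : (1 - t * s) ^ k = (1 - t * s) ^ (k - 1) * (1 - t * s) := rpow_pred hq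
    have r3 : (1 - t * s) ^ (k - 1) = (1 - t * s) ^ (k - 1 - 1) * (1 - t * s) := rpow_pred hq
    simp only [add_sub_cancel_right, w1, r1, r2, r3, hc, hkn, sub_apply, smul_apply,
      innerSL_apply_apply, real_inner_self_eq_norm_sq, ← hs, smul_eq_mul]
    field_simp
    ring

/-- If `J_{n/2-1,0} v` is `H`-harmonic, then by the intertwining relation the same transform
annihilates `|x|²Δv` on every ray, so `Δv = 0` by injectivity. -/
lemma harmonic_of_JE (hn : 3 ≤ n) {v : E n → ℝ} (hv : ContDiffOn ℝ ∞ v (ball 0 1))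
    (hv0 : v 0 = 0) (hH : HHarmonic n (JE n ((n : ℝ) / 2 - 1) 0 v)) :
    ∀ x ∈ ball (0 : E n) 1, lap n v x = 0 := by
  have hk := kpos hn
  have hl := lap_smooth hv
  have h1 : ∀ x ∈ ball (0 : E n) 1, x ≠ 0 → lap n v x = 0 := by
    intro x hx hx0
    obtain ⟨ζ, hζ, s, hs, rfl⟩ := exists_ray hx hx0
    have := inj_main hn (φ := fun σ => σ ^ 2 * lap n v (σ • ζ)) ?_ (by simp) ?_ s hs
    · exact (mul_eq_zero.1 this).resolve_left (pow_pos hs.1 2).ne'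
    · exact (contDiffOn_id.pow 2).mul ((ray_smooth hl hζ).of_le (by norm_num))
    · intro s hs
      have hb := ray_mem hζ (Ioo_sub hs)
      have e := intertwine hk (by ring) hv hv0 hb
      have e' := hH _ hb
      have hp := ball_pos hb
      rw [ray_norm hζ] at e e' hp
      generalize lap n (JE n ((n : ℝ) / 2 - 1) 0 v) (s • ζ) = L at e e'
      generalize Nder n (JE n ((n : ℝ) / 2 - 1) 0 v) (s • ζ) = N at e e'
      have : s ^ 2 * L + 2 * ((n : ℝ) - 2) * s ^ 2 / (1 - s ^ 2) * N = 0 := by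
        have h2 : s ^ 2 * L + 2 * ((n : ℝ) - 2) * s ^ 2 / (1 - s ^ 2) * N = s ^ 2 / (1 - s ^ 2) ^ 2 *
            ((1 - s ^ 2) ^ 2 * L + 2 * ((n : ℝ) - 2) * (1 - s ^ 2) * N) := by
          field_simp
        rw [h2, e', mul_zero]
      rw [this] at e
      refine Eq.trans ?_ e
      refine setIntegral_congr_fun measurableSet_Ioo fun t ht => ?_
      have : wt ((n : ℝ) / 2 - 1) 1 t = wt ((n : ℝ) / 2 - 1) 0 t * t := by
        rw [wt_succ ht.1, zero_add]
      beta_reduce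
      rw [this, smul_smul]
      ring
  -- The factor `σ²` hides the origin, which is recovered by continuity.
  intro x hx
  rcases eq_or_ne x 0 with rfl | hx0
  · have : Nontrivial (E n) := by
      have : Nonempty (Fin n) := ⟨⟨0, by omega⟩⟩
      infer_instance
    have hc : ContinuousAt (lap n v) 0 := hl.continuousOn.continuousAt (isOpen_ball.mem_nhds hx)
    have ht : Tendsto (lap n v) (𝓝[≠] 0) (𝓝 (lap n v 0)) := hc.mono_left nhdsWithin_le_nhds
    refine tendsto_nhds_unique ht (tendsto_const_nhds.congr' ?_)
    filter_upwards [self_mem_nhdsWithin, mem_nhdsWithin_of_mem_nhds (isOpen_ball.mem_nhds hx)]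
      with y hy1 hy2
    exact (h1 y hy2 hy1).symm
  · exact h1 x hx hx0

end

/-! ### The theorem for smooth functions -/

section
variable {n : ℕ}

/-- The integral in the theorem is the ray transform `J_{n/2-1,0}`. -/
lemma transform_eq (k : ℝ) (v : E n → ℝ) (ζ : E n) {r : ℝ} (hr : r ∈ Ioo (0 : ℝ) 1) :
    ∫ t in (0 : ℝ)..1, v ((r * t) • ζ) * ((1 - t) * (1 - t * r ^ 2)) ^ k / t =
      J1 k 0 (fun σ => v (σ • ζ)) r := by
  rw [intervalIntegral.integral_of_le zero_le_one, integral_Ioc_eq_integral_Ioo, J1]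
  refine setIntegral_congr_fun measurableSet_Ioo fun t ht => ?_
  have h1 : 0 ≤ 1 - t := by linarith [ht.2]
  have h2 : 0 ≤ 1 - t * r ^ 2 := by
    have : r ^ 2 ≤ 1 := by nlinarith [hr.1, hr.2]
    nlinarith [ht.1, ht.2]
  beta_reduce
  rw [Real.mul_rpow h1 h2, wt, zero_sub, Real.rpow_neg_one, mul_comm r t]
  ring

lemma lap_congr {u v : E n → ℝ} (h : ∀ x ∈ ball (0 : E n) 1, u x = v x + u 0) {x : E n}
    (hx : x ∈ ball (0 : E n) 1) : lap n u x = lap n v x ∧ Nder n u x = Nder n v x := by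
  have h1 : ∀ y ∈ ball (0 : E n) 1, fderiv ℝ u y = fderiv ℝ v y := by
    intro y hy
    have : u =ᶠ[𝓝 y] fun z => v z + u 0 := by
      filter_upwards [isOpen_ball.mem_nhds hy] with z hz using h z hz
    rw [this.fderiv_eq, fderiv_add_const]
  refine ⟨?_, by rw [Nder, Nder, h1 x hx]⟩
  unfold lap
  refine Finset.sum_congr rfl fun i _ => ?_
  have : (fun y => fderiv ℝ u y (EuclideanSpace.single i 1)) =ᶠ[𝓝 x]
      fun y => fderiv ℝ v y (EuclideanSpace.single i 1) := by
    filter_upwards [isOpen_ball.mem_nhds hx] with z hz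
    rw [h1 z hz]
  rw [this.fderiv_eq]

/-- The theorem for smooth `u`. -/
lemma smooth_case (hn : 3 ≤ n) {u : E n → ℝ}
    (hu : ContDiffOn ℝ ∞ u (ball (0 : E n) 1)) (hH : HHarmonic n u) :
    ∃ v : E n → ℝ,
      (ContDiffOn ℝ 2 v (ball (0 : E n) 1) ∧ (∀ x ∈ ball (0 : E n) 1, lap n v x = 0) ∧
        v 0 = 0 ∧
        ∀ r ∈ Ico (0 : ℝ) 1, ∀ ζ ∈ sphere (0 : E n) 1,
          u (r • ζ) = u 0 +
            ∫ t in (0 : ℝ)..1,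
              v ((r * t) • ζ) * ((1 - t) * (1 - t * r ^ 2)) ^ ((n : ℝ) / 2 - 1) / t) ∧
      (∀ w : E n → ℝ,
        (ContDiffOn ℝ 2 w (ball (0 : E n) 1) ∧ (∀ x ∈ ball (0 : E n) 1, lap n w x = 0) ∧
          w 0 = 0 ∧
          ∀ r ∈ Ico (0 : ℝ) 1, ∀ ζ ∈ sphere (0 : E n) 1,
            u (r • ζ) = u 0 +
              ∫ t in (0 : ℝ)..1,
                w ((r * t) • ζ) * ((1 - t) * (1 - t * r ^ 2)) ^ ((n : ℝ) / 2 - 1) / t) →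
        EqOn w v (ball (0 : E n) 1)) := by
  obtain ⟨v, hv, hv0, hJ⟩ := surj_main hn (u := fun x => u x - u 0) (hu.sub contDiffOn_const)
    (sub_self _)
  have hk := kpos hn
  have hU : ∀ x ∈ ball (0 : E n) 1, u x = JE n ((n : ℝ) / 2 - 1) 0 v x + u 0 := by
    intro x hx
    rcases eq_or_ne x 0 with rfl | hx0
    · simp [JE, hv0]
    · obtain ⟨ζ, hζ, s, hs, rfl⟩ := exists_ray hx hx0
      rw [JE_ray v hζ, hJ ζ hζ s hs, sub_add_cancel]
  refine ⟨v, ⟨by exact_mod_cast contDiffOn_infty.1 hv 2, ?_, hv0, ?_⟩, ?_⟩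
  · refine harmonic_of_JE hn hv hv0 fun x hx => ?_
    obtain ⟨e1, e2⟩ := lap_congr hU hx
    rw [← e1, ← e2]
    exact hH x hx
  · intro r hr ζ hζ
    rcases hr.1.eq_or_lt with rfl | hr0
    · simp [hv0]
    · rw [transform_eq _ v ζ ⟨hr0, hr.2⟩, hJ ζ hζ r ⟨hr0, hr.2⟩, add_sub_cancel]
  · rintro w ⟨hw, -, hw0, hwJ⟩ x hx
    rcases eq_or_ne x 0 with rfl | hx0
    · rw [hw0, hv0]
    · obtain ⟨ζ, hζ, s, hs, rfl⟩ := exists_ray hx hx0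
      have cw : ContDiffOn ℝ 1 (fun σ : ℝ => w (σ • ζ)) (Ioo (-1) 1) :=
        (ray_smooth hw hζ).of_le (by norm_num)
      have cv : ContDiffOn ℝ 1 (fun σ : ℝ => v (σ • ζ)) (Ioo (-1) 1) :=
        (ray_smooth hv hζ).of_le (by norm_num)
      have := inj_main hn (φ := fun σ => w (σ • ζ) - v (σ • ζ)) (cw.sub cv) (by simp [hw0, hv0]) ?_
        s hs
      · exact sub_eq_zero.1 this
      · intro s hs
        have i1 := J1_integrand (k := (n : ℝ) / 2 - 1) (l := (n : ℝ) / 2 - 1) le_rfl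
          (by linarith) cw (fun _ => by simp [hw0]) (Ioo_sub hs)
        have i2 := J1_integrand (k := (n : ℝ) / 2 - 1) (l := (n : ℝ) / 2 - 1) le_rfl
          (by linarith) cv (fun _ => by simp [hv0]) (Ioo_sub hs)
        have e1 := hwJ s ⟨hs.1.le, hs.2⟩ ζ hζ
        rw [transform_eq _ w ζ hs] at e1
        have e2 := hJ ζ hζ s hs
        have e3 := integral_sub i1 i2
        unfold J1 at e1 e2 ⊢
        have : ∀ t, wt ((n : ℝ) / 2 - 1) 0 t * ((w ((t * s) • ζ) - v ((t * s) • ζ)) *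
            (1 - t * s ^ 2) ^ ((n : ℝ) / 2 - 1)) =
          wt ((n : ℝ) / 2 - 1) 0 t * (w ((t * s) • ζ) * (1 - t * s ^ 2) ^ ((n : ℝ) / 2 - 1)) -
          wt ((n : ℝ) / 2 - 1) 0 t * (v ((t * s) • ζ) * (1 - t * s ^ 2) ^ ((n : ℝ) / 2 - 1)) := by
          intro t; ring
        simp only [this]
        linarith

end

/-! ### The point-pair invariant -/

/-- A point-pair invariant of the hyperbolic ball: `|y-a|²/(1-|y|²)`. Up to the factor
`1-|a|²` it is `sinh²` of half the hyperbolic distance, so its level sets are the hyperbolic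
spheres about `a`. -/
def Pa (n : ℕ) (a y : E n) : ℝ := ‖y - a‖ ^ 2 / (1 - ‖y‖ ^ 2)

/-- The partial derivative of `Pa a` in the `i`-th coordinate. -/
def Pd (n : ℕ) (a : E n) (i : Fin n) (y : E n) : ℝ :=
  2 / (1 - ‖y‖ ^ 2) * (y i - a i + Pa n a y * y i)

/-- The second partial derivative of `Pa a` in the `i`-th coordinate. -/
def Pdd (n : ℕ) (a : E n) (i : Fin n) (y : E n) : ℝ :=
  2 / (1 - ‖y‖ ^ 2) * (1 + Pa n a y) + 4 / (1 - ‖y‖ ^ 2) * (y i * Pd n a i y)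

/-- `Z = P(1-|a|²+P)`, so that `(1-|y|²)²|∇P|² = 4Z` for `P = Pa a`. -/
def Zf (c p : ℝ) : ℝ := p * (c + p)

section
variable {n : ℕ}

lemma delta_fderiv (y : E n) :
    HasFDerivAt (fun y : E n => 1 - ‖y‖ ^ 2) (-(2 • innerSL ℝ y)) y :=
  (hasStrictFDerivAt_norm_sq y).hasFDerivAt.const_sub 1

lemma inv_delta_fderiv {y : E n} (hy : y ∈ ball (0 : E n) 1) :
    HasFDerivAt (fun y : E n => (1 - ‖y‖ ^ 2)⁻¹)
      ((2 * ((1 - ‖y‖ ^ 2) ^ 2)⁻¹) • innerSL ℝ y) y := by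
  have h := (hasDerivAt_inv (ball_pos hy).ne').comp_hasFDerivAt y (delta_fderiv y)
  convert! h using 1
  ext z
  simp
  ring

lemma Pa_fderiv (a : E n) {y : E n} (hy : y ∈ ball (0 : E n) 1) :
    ∃ L : E n →L[ℝ] ℝ, HasFDerivAt (Pa n a) L y ∧
      ∀ i, L (EuclideanSpace.single i 1) = Pd n a i y := by
  have h1 : HasFDerivAt (fun y : E n => ‖y - a‖ ^ 2) (2 • innerSL ℝ (y - a)) y :=
    (hasStrictFDerivAt_norm_sq (y - a)).hasFDerivAt.comp (f := fun y => y - a) y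
      ((hasFDerivAt_id y).sub_const a)
  have hp := (ball_pos hy).ne'
  refine ⟨_, h1.fun_mul (inv_delta_fderiv hy), fun i => ?_⟩
  simp [Pd, Pa, EuclideanSpace.inner_single_right]
  field_simp
  ring

lemma Pd_fderiv (a : E n) (i : Fin n) {y : E n} (hy : y ∈ ball (0 : E n) 1) :
    ∃ L : E n →L[ℝ] ℝ, HasFDerivAt (Pd n a i) L y ∧
      L (EuclideanSpace.single i 1) = Pdd n a i y := by
  obtain ⟨L, hL, hLi⟩ := Pa_fderiv a hy
  have h1 := (EuclideanSpace.proj i : E n →L[ℝ] ℝ).hasFDerivAt (x := y)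
  have h2 := ((inv_delta_fderiv hy).const_mul 2).fun_mul ((h1.sub_const (a i)).fun_add
    (hL.fun_mul h1))
  have hp := (ball_pos hy).ne'
  refine ⟨_, h2, ?_⟩
  simp [hLi, Pdd, Pd, EuclideanSpace.inner_single_right]
  field_simp
  ring

lemma omega_fderiv (l : ℝ) {y : E n} (hy : y ∈ ball (0 : E n) 1) :
    HasFDerivAt (fun y : E n => (1 - ‖y‖ ^ 2) ^ l)
      (-(2 * l * ((1 - ‖y‖ ^ 2) ^ l / (1 - ‖y‖ ^ 2))) • innerSL ℝ y) y := by
  have hp := ball_pos hy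
  have h := (delta_fderiv y).rpow_const (p := l) (Or.inl hp.ne')
  convert! h using 1
  ext z
  rw [rpow_pred hp (k := l)]
  simp
  field_simp

lemma norm_sub_sum (a y : E n) :
    ‖y - a‖ ^ 2 = ‖y‖ ^ 2 - 2 * ∑ i, a i * y i + ‖a‖ ^ 2 := by
  rw [norm_sub_sq_real, PiLp.inner_apply]
  simp

lemma sum_yPd (a : E n) {y : E n} (hy : y ∈ ball (0 : E n) 1) :
    (1 - ‖y‖ ^ 2) * ∑ i, y i * Pd n a i y =
      1 - ‖a‖ ^ 2 + 2 * Pa n a y - (1 - ‖y‖ ^ 2) * (1 + Pa n a y) := by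
  have hp := (ball_pos hy).ne'
  have h : ∀ i, y i * Pd n a i y = 2 / (1 - ‖y‖ ^ 2) *
      ((1 + Pa n a y) * (y i * y i) - a i * y i) := by
    intro i; unfold Pd; ring
  rw [Finset.sum_congr rfl fun i _ => h i, ← Finset.mul_sum, Finset.sum_sub_distrib,
    ← Finset.mul_sum, sum_sq]
  have e := norm_sub_sum a y
  have e2 : Pa n a y * (1 - ‖y‖ ^ 2) = ‖y - a‖ ^ 2 := div_mul_cancel₀ _ hp
  rw [← mul_assoc, mul_div_cancel₀ _ hp]
  linear_combination -(e2 + e)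

/-- `(1-|y|²)²|∇P|² = 4Z`. -/
lemma sum_PdSq (a : E n) {y : E n} (hy : y ∈ ball (0 : E n) 1) :
    (1 - ‖y‖ ^ 2) ^ 2 * ∑ i, Pd n a i y ^ 2 = 4 * Zf (1 - ‖a‖ ^ 2) (Pa n a y) := by
  have hp := (ball_pos hy).ne'
  have h : ∀ i, Pd n a i y ^ 2 = 4 / (1 - ‖y‖ ^ 2) ^ 2 *
      ((1 + Pa n a y) ^ 2 * (y i * y i) - 2 * (1 + Pa n a y) * (a i * y i) + a i * a i) := by
    intro i; unfold Pd; field_simp; ring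
  rw [Finset.sum_congr rfl fun i _ => h i, ← Finset.mul_sum, Finset.sum_add_distrib,
    Finset.sum_sub_distrib, ← Finset.mul_sum, ← Finset.mul_sum, sum_sq, sum_sq]
  have e := norm_sub_sum a y
  have e2 : Pa n a y * (1 - ‖y‖ ^ 2) = ‖y - a‖ ^ 2 := div_mul_cancel₀ _ hp
  rw [← mul_assoc, mul_div_cancel₀ _ (pow_ne_zero 2 hp), Zf]
  linear_combination (-4) * (1 + Pa n a y) * (e2 + e)

/-- `DP = 2n(c+2P)` with `c = 1-|a|²`. -/
lemma sum_Pdd (a : E n) {y : E n} (hy : y ∈ ball (0 : E n) 1) :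
    (1 - ‖y‖ ^ 2) ^ 2 * ∑ i, Pdd n a i y +
      2 * ((n : ℝ) - 2) * (1 - ‖y‖ ^ 2) * ∑ i, y i * Pd n a i y =
    2 * n * (1 - ‖a‖ ^ 2 + 2 * Pa n a y) := by
  have hp := (ball_pos hy).ne'
  simp only [Pdd, Finset.sum_add_distrib, ← Finset.mul_sum]
  have e := sum_yPd a hy
  simp only [Finset.sum_const, Finset.card_univ, Fintype.card_fin, nsmul_eq_mul]
  field_simp
  linear_combination 2 * (n : ℝ) * e

/-- The integral of a directional derivative of a compactly supported function vanishes. -/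
lemma div_zero_int {R : ℝ} (hR : R < 1) {Ψ Ψ' : E n → ℝ} {h : E n}
    (hd : ∀ y ∈ ball (0 : E n) 1, HasLineDerivAt ℝ Ψ (Ψ' y) y h)
    (hc : ContinuousOn Ψ (ball 0 1)) (hc' : ContinuousOn Ψ' (ball 0 1))
    (h0 : ∀ y ∈ ball (0 : E n) 1, R < ‖y‖ → Ψ y = 0) :
    IntegrableOn Ψ' (closedBall (0 : E n) R) ∧ ∫ y in closedBall (0 : E n) R, Ψ' y = 0 := by
  have hsub : closedBall (0 : E n) R ⊆ ball 0 1 := closedBall_subset_ball hR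
  have hi : ∀ {f : E n → ℝ}, ContinuousOn f (ball 0 1) →
      IntegrableOn f (closedBall (0 : E n) R) := fun hf =>
    (hf.mono hsub).integrableOn_compact (isCompact_closedBall _ _)
  refine ⟨hi hc', ?_⟩
  have hm : MeasurableSet (closedBall (0 : E n) R) := measurableSet_closedBall
  have key := integral_bilinear_hasLineDerivAt_right_eq_neg_left_of_integrable
    (μ := (volume : Measure (E n))) (f := fun _ => (1 : ℝ)) (f' := fun _ => (0 : ℝ))
    (g := (closedBall (0 : E n) R).indicator Ψ) (g' := (closedBall (0 : E n) R).indicator Ψ')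
    (v := h) (B := ContinuousLinearMap.mul ℝ ℝ) (W := ℝ) (by simp)
    (by simpa using (hi hc').integrable_indicator hm)
    (by simpa using (hi hc).integrable_indicator hm)
    (fun x _ => by simpa using ((hasFDerivAt_const (𝕜 := ℝ) (1 : ℝ) x).hasLineDerivAt h)) ?_
  · simpa [integral_indicator hm] using key
  · intro y _
    by_cases hy : y ∈ closedBall (0 : E n) R
    · rw [indicator_of_mem hy]
      refine (hd y (hsub hy)).congr_of_eventuallyEq ?_
      filter_upwards [isOpen_ball.mem_nhds (hsub hy)] with z hz
      by_cases hzR : z ∈ closedBall (0 : E n) R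
      · rw [indicator_of_mem hzR]
      · rw [indicator_of_notMem hzR, h0 z hz (by simpa using hzR)]
    · rw [indicator_of_notMem hy]
      have : (closedBall (0 : E n) R).indicator Ψ =ᶠ[𝓝 y] fun _ => 0 := by
        filter_upwards [isClosed_closedBall.isOpen_compl.mem_nhds hy] with z hz
        exact indicator_of_notMem hz _
      have h2 := (hasFDerivAt_const (𝕜 := ℝ) (0 : ℝ) y).hasLineDerivAt h
      exact HasLineDerivAt.congr_of_eventuallyEq (by simpa using h2) this

end

/-! ### Green's formula for radial functions -/

/-- The kernel of a hyperbolic spherical mean about `a` with radial profile `ψ`. -/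
def kern (n : ℕ) (ψ : ℝ → ℝ) (a y : E n) : ℝ :=
  (1 - ‖y‖ ^ 2) ^ (-(n : ℝ)) * (Zf (1 - ‖a‖ ^ 2) (Pa n a y) ^ (1 - (n : ℝ) / 2) * ψ (Pa n a y))

/-- `g = Z^{-n/2}G` and its primitive `f`, in terms of which
`D(f∘P) = 4Zg' + 2n(c+2P)g = 4Z^{1-n/2}G'`. -/
lemma exists_radial (m : ℝ) {c α β : ℝ} (hc : 0 < c) (hα : 0 < α) {G : ℝ → ℝ}
    (hG : ContDiff ℝ 1 G) (hGα : ∀ p ≤ α, G p = 0) (hGβ : ∀ p, β ≤ p → G p = 0) :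
    ∃ f g : ℝ → ℝ, (∀ p, HasDerivAt f (g p) p) ∧ ContDiff ℝ 1 g ∧
      (∀ p, β ≤ p → f p = 0 ∧ g p = 0) ∧
      ∀ p, 4 * Zf c p * deriv g p + 2 * m * (c + 2 * p) * g p =
        4 * (Zf c p ^ (1 - m / 2) * deriv G p) := by
  have hz : ∀ p, 0 < p → 0 < Zf c p := fun p hp => mul_pos hp (by linarith)
  have hZ : ∀ p, HasDerivAt (Zf c) (c + 2 * p) p := by
    intro p
    have := (hasDerivAt_id p).fun_mul ((hasDerivAt_id p).const_add c)
    convert! this using 1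
    simp only [id]; ring
  set g : ℝ → ℝ := fun p => Zf c p ^ (-(m / 2)) * G p with hg
  have hg0 : ∀ p < α, g =ᶠ[𝓝 p] fun _ => 0 := by
    intro p hp
    filter_upwards [Iio_mem_nhds hp] with q hq
    simp [hg, hGα q (le_of_lt hq)]
  have hgs : ContDiff ℝ 1 g := by
    rw [contDiff_iff_contDiffAt]
    intro p
    rcases lt_or_ge p α with hp | hp
    · exact contDiffAt_const.congr_of_eventuallyEq (hg0 p hp)
    · have hZs : ContDiff ℝ 1 (Zf c) := by unfold Zf; fun_prop
      exact (hZs.contDiffAt.rpow_const_of_ne (hz p (hα.trans_le hp)).ne').mul hG.contDiffAt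
  refine ⟨fun p => ∫ t in β..p, g t, g, fun p => ?_, hgs, fun p hp => ⟨?_, ?_⟩, fun p => ?_⟩
  · exact hgs.continuous.integral_hasStrictDerivAt β p |>.hasDerivAt
  · beta_reduce
    rw [intervalIntegral.integral_congr (g := fun _ => (0 : ℝ))]
    · simp
    · intro t ht
      rw [uIcc_of_le hp] at ht
      simp [hg, hGβ t ht.1]
  · simp [hg, hGβ p hp]
  · rcases lt_or_ge p α with hp | hp
    · have h1 : deriv g p = 0 := by rw [(hg0 p hp).deriv_eq]; simp
      have h2 : deriv G p = 0 := by
        have : G =ᶠ[𝓝 p] fun _ => 0 := by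
          filter_upwards [Iio_mem_nhds hp] with q hq using hGα q (le_of_lt hq)
        rw [this.deriv_eq]; simp
      rw [h1, h2, (hg0 p hp).eq_of_nhds]; ring
    · have hp0 := hz p (hα.trans_le hp)
      have d := ((hZ p).rpow_const (p := -(m / 2)) (Or.inl hp0.ne')).fun_mul
        ((hG.differentiable (by norm_num)) p).hasDerivAt
      rw [d.deriv]
      have e1 : Zf c p ^ (1 - m / 2) = Zf c p ^ (-(m / 2)) * Zf c p := by
        rw [← Real.rpow_add_one hp0.ne']; congr 1; ring
      have e2 : Zf c p ^ (-(m / 2)) = Zf c p ^ (-(m / 2) - 1) * Zf c p := rpow_pred hp0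
      simp only [hg, e1]
      rw [e2]
      ring

section
variable {n : ℕ}

lemma Pa_cont (a : E n) : ContinuousOn (Pa n a) (ball 0 1) :=
  fun _ hy => (Pa_fderiv a hy).choose_spec.1.continuousAt.continuousWithinAt

lemma Pd_cont (a : E n) (i : Fin n) : ContinuousOn (Pd n a i) (ball 0 1) :=
  fun _ hy => (Pd_fderiv a i hy).choose_spec.1.continuousAt.continuousWithinAt

lemma inv_delta_cont : ContinuousOn (fun y : E n => (1 - ‖y‖ ^ 2)⁻¹) (ball 0 1) :=
  fun _ hy => (inv_delta_fderiv hy).continuousAt.continuousWithinAt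

lemma Pdd_cont (a : E n) (i : Fin n) : ContinuousOn (Pdd n a i) (ball 0 1) := by
  have h1 := inv_delta_cont (n := n)
  have h2 := Pa_cont a
  have h3 := Pd_cont a i
  have h4 : ContinuousOn (fun y : E n => y i) (ball 0 1) := by fun_prop
  unfold Pdd
  simp only [div_eq_mul_inv]
  exact ((continuousOn_const.mul h1).mul (continuousOn_const.add h2)).add
    ((continuousOn_const.mul h1).mul (h4.mul h3))

/-- Green's formula for an `H`-harmonic `u` and a radial function `f∘P` with compact support. -/
lemma green (a : E n) {R : ℝ} (hR : R < 1) {f g : ℝ → ℝ} {β : ℝ}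
    (hf : ∀ p, HasDerivAt f (g p) p) (hg : ContDiff ℝ 1 g)
    (h0 : ∀ p, β ≤ p → f p = 0 ∧ g p = 0)
    (hK : ∀ y ∈ ball (0 : E n) 1, R < ‖y‖ → β ≤ Pa n a y)
    {u : E n → ℝ} (hu : ContDiffOn ℝ 2 u (ball 0 1)) (hH : HHarmonic n u) :
    ∫ y in closedBall (0 : E n) R, u y * ((1 - ‖y‖ ^ 2) ^ (-(n : ℝ)) *
      (4 * Zf (1 - ‖a‖ ^ 2) (Pa n a y) * deriv g (Pa n a y)
        + 2 * n * (1 - ‖a‖ ^ 2 + 2 * Pa n a y) * g (Pa n a y))) = 0 := by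
  have hu1 : ContDiffOn ℝ 1 (fderiv ℝ u) (ball 0 1) := hu.fderiv_of_isOpen isOpen_ball (by norm_num)
  have hdir : ∀ i : Fin n,
      ContDiffOn ℝ 1 (fun y => fderiv ℝ u y (EuclideanSpace.single i 1)) (ball 0 1) :=
    fun i => hu1.clm_apply contDiffOn_const
  set e : Fin n → E n := fun i => EuclideanSpace.single i 1 with he
  set om : E n → ℝ := fun y => (1 - ‖y‖ ^ 2) ^ (2 - (n : ℝ)) with hom
  -- With `F = f∘P` and `ω = (1-|y|²)^(2-n)`, `Ψ` is the vector field `ω(u∇F - F∇u)`. Since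
  -- `Dw = (1-|y|²)^n div(ω∇w)`, its divergence is `(1-|y|²)^(-n) (u DF - F Du)`.
  set Ψ : Fin n → E n → ℝ := fun i y => om y *
    (u y * (g (Pa n a y) * Pd n a i y) - f (Pa n a y) * fderiv ℝ u y (e i)) with hΨ
  -- `Ψ' i` is the `i`-th partial derivative of `Ψ i`.
  set Ψ' : Fin n → E n → ℝ := fun i y =>
    2 * ((n : ℝ) - 2) * (om y * (1 - ‖y‖ ^ 2)⁻¹) *
      (y i * (u y * (g (Pa n a y) * Pd n a i y) - f (Pa n a y) * fderiv ℝ u y (e i))) +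
    om y * (u y * (deriv g (Pa n a y) * Pd n a i y ^ 2 + g (Pa n a y) * Pdd n a i y)
      - f (Pa n a y) * fderiv ℝ (fun y => fderiv ℝ u y (e i)) y (e i)) with hΨ'
  have hder : ∀ i, ∀ y ∈ ball (0 : E n) 1, ∃ L : E n →L[ℝ] ℝ, HasFDerivAt (Ψ i) L y ∧
      L (e i) = Ψ' i y := by
    intro i y hy
    obtain ⟨L1, hL1, hL1i⟩ := Pa_fderiv a hy
    obtain ⟨L2, hL2, hL2i⟩ := Pd_fderiv a i hy
    have du := ((hu.contDiffAt (isOpen_ball.mem_nhds hy)).differentiableAt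
      (by norm_num)).hasFDerivAt
    have ddu := (((hdir i).contDiffAt (isOpen_ball.mem_nhds hy)).differentiableAt
      (by norm_num)).hasFDerivAt
    have dg := ((hg.differentiable (by norm_num)) (Pa n a y)).hasDerivAt.comp_hasFDerivAt y hL1
    have df := (hf (Pa n a y)).comp_hasFDerivAt y hL1
    have := (omega_fderiv (2 - (n : ℝ)) hy).fun_mul
      ((du.fun_mul (dg.fun_mul hL2)).fun_sub (df.fun_mul ddu))
    refine ⟨_, this, ?_⟩
    simp [hΨ', hom, he, hL1i, hL2i, EuclideanSpace.inner_single_right]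
    ring
  have com : ContinuousOn om (ball 0 1) := fun y hy =>
    (omega_fderiv (2 - (n : ℝ)) hy).continuousAt.continuousWithinAt
  have cP := Pa_cont a
  have cg : ContinuousOn (fun y => g (Pa n a y)) (ball 0 1) := hg.continuous.comp_continuousOn cP
  have cg' : ContinuousOn (fun y => deriv g (Pa n a y)) (ball 0 1) :=
    (hg.continuous_deriv (by norm_num)).comp_continuousOn cP
  have cf : ContinuousOn (fun y => f (Pa n a y)) (ball 0 1) :=
    (continuous_iff_continuousAt.2 fun p => (hf p).continuousAt).comp_continuousOn cP
  have hdiv : ∀ i, IntegrableOn (Ψ' i) (closedBall (0 : E n) R) ∧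
      ∫ y in closedBall (0 : E n) R, Ψ' i y = 0 := by
    intro i
    refine div_zero_int hR (Ψ := Ψ i) (h := e i) ?_ ?_ ?_ ?_
    · intro y hy
      obtain ⟨L, hL, hLi⟩ := hder i y hy
      rw [← hLi]
      exact hL.hasLineDerivAt _
    · intro y hy
      exact (hder i y hy).choose_spec.1.continuousAt.continuousWithinAt
    · have c1 : ContinuousOn (fun y : E n => y i) (ball 0 1) := by fun_prop
      have c2 := (hdir i).continuousOn
      have c3 : ContinuousOn (fun y => fderiv ℝ (fun y => fderiv ℝ u y (e i)) y (e i)) (ball 0 1) :=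
        ((hdir i).continuousOn_fderiv_of_isOpen isOpen_ball (by norm_num)).clm_apply
          continuousOn_const
      have c4 := Pd_cont a i
      have c5 := Pdd_cont a i
      have c6 := inv_delta_cont (n := n)
      have c7 := hu.continuousOn
      exact ((continuousOn_const.mul (com.mul c6)).mul (c1.mul ((c7.mul (cg.mul c4)).sub
        (cf.mul c2)))).add (com.mul ((c7.mul ((cg'.mul (c4.pow 2)).add (cg.mul c5))).sub
        (cf.mul c3)))
    · intro y hy hyR
      obtain ⟨e1, e2⟩ := h0 _ (hK y hy hyR)
      simp [hΨ, e1, e2]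
  have hsum : ∫ y in closedBall (0 : E n) R, ∑ i, Ψ' i y = 0 := by
    rw [integral_finsetSum _ fun i _ => (hdiv i).1]
    exact Finset.sum_eq_zero fun i _ => (hdiv i).2
  rw [← hsum]
  refine setIntegral_congr_fun measurableSet_closedBall fun y hyR => ?_
  have hy : y ∈ ball (0 : E n) 1 := closedBall_subset_ball hR hyR
  have hp := ball_pos hy
  have s1 := sum_PdSq a hy
  have s2 := sum_Pdd a hy
  have s3 := hH y hy
  have s4 := sum_coord (fderiv ℝ u y) y
  have hom1 : om y = (1 - ‖y‖ ^ 2) ^ (-(n : ℝ)) * (1 - ‖y‖ ^ 2) ^ 2 := by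
    have h2 : (1 - ‖y‖ ^ 2) ^ (2 : ℝ) = (1 - ‖y‖ ^ 2) ^ 2 := Real.rpow_two _
    rw [← h2, ← Real.rpow_add hp]
    simp only [hom]
    congr 1; ring
  have hS : ∑ i, Ψ' i y = 2 * ((n : ℝ) - 2) * (om y * (1 - ‖y‖ ^ 2)⁻¹) *
      (u y * g (Pa n a y) * ∑ i, y i * Pd n a i y - f (Pa n a y) * ∑ i, y i * fderiv ℝ u y (e i)) +
      om y * (u y * (deriv g (Pa n a y) * ∑ i, Pd n a i y ^ 2 + g (Pa n a y) * ∑ i, Pdd n a i y)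
        - f (Pa n a y) * lap n u y) := by
    simp only [lap, Finset.mul_sum, ← Finset.sum_sub_distrib, ← Finset.sum_add_distrib]
    refine Finset.sum_congr rfl fun i _ => ?_
    simp only [hΨ', he]
    ring
  rw [hS, hom1, s4]
  rw [Nder] at s3
  have hinv : (1 - ‖y‖ ^ 2) ^ 2 * (1 - ‖y‖ ^ 2)⁻¹ = 1 - ‖y‖ ^ 2 := by field_simp
  generalize (1 - ‖y‖ ^ 2) ^ (-(n : ℝ)) = w
  rw [mul_assoc w, hinv]
  linear_combination w * f (Pa n a y) * s3 - w * u y * deriv g (Pa n a y) * s1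
    - w * u y * g (Pa n a y) * s2

end

/-! ### Mean value property and smoothness -/

/-- A smooth cutoff increasing from `0` to `1` on `[ε, 2ε]`. -/
def Gs (ε p : ℝ) : ℝ := Real.smoothTransition ((p - ε) / ε)

lemma Gs_contDiff (ε : ℝ) : ContDiff ℝ ∞ (Gs ε) :=
  Real.smoothTransition.contDiff.comp (by fun_prop : ContDiff ℝ ∞ fun p : ℝ => (p - ε) / ε)

lemma dGs_contDiff (ε : ℝ) : ContDiff ℝ ∞ (deriv (Gs ε)) :=
  (contDiff_infty_iff_deriv.1 (Gs_contDiff ε)).2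

lemma Gs_zero {ε p : ℝ} (hε : 0 < ε) (hp : p ≤ ε) : Gs ε p = 0 :=
  Real.smoothTransition.zero_of_nonpos (div_nonpos_of_nonpos_of_nonneg (by linarith) hε.le)

lemma Gs_one {ε p : ℝ} (hε : 0 < ε) (hp : 2 * ε ≤ p) : Gs ε p = 1 :=
  Real.smoothTransition.one_of_one_le (by rw [le_div_iff₀ hε]; linarith)

lemma dGs_zero {ε p : ℝ} (hε : 0 < ε) (hp : p < ε) : deriv (Gs ε) p = 0 := by
  have : Gs ε =ᶠ[𝓝 p] fun _ => 0 := by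
    filter_upwards [Iio_mem_nhds hp] with q hq using Gs_zero hε (le_of_lt hq)
  rw [this.deriv_eq]; simp

lemma dGs_zero' {ε p : ℝ} (hε : 0 < ε) (hp : 2 * ε < p) : deriv (Gs ε) p = 0 := by
  have : Gs ε =ᶠ[𝓝 p] fun _ => 1 := by
    filter_upwards [Ioi_mem_nhds hp] with q hq using Gs_one hε (le_of_lt hq)
  rw [this.deriv_eq]; simp

lemma dGs_nonneg {ε : ℝ} (hε : 0 < ε) (p : ℝ) : 0 ≤ deriv (Gs ε) p := by
  refine Monotone.deriv_nonneg fun x y hxy => Real.smoothTransition.monotone ?_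
  gcongr

/-- The cutoff climbs from `0` to `1`, so its derivative is positive somewhere. -/
lemma dGs_pos {ε : ℝ} (hε : 0 < ε) : ∃ p ∈ Ioo ε (2 * ε), 0 < deriv (Gs ε) p := by
  obtain ⟨p, hp, h⟩ := exists_deriv_eq_slope (Gs ε) (a := ε) (b := 2 * ε) (by linarith)
    (Gs_contDiff ε).continuous.continuousOn
    ((Gs_contDiff ε).differentiable (by norm_num)).differentiableOn
  refine ⟨p, hp, ?_⟩
  rw [h, Gs_one hε le_rfl, Gs_zero hε le_rfl]
  apply div_pos <;> linarith

section
variable {n : ℕ}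

lemma Pa_nonneg (a : E n) {y : E n} (hy : y ∈ ball (0 : E n) 1) : 0 ≤ Pa n a y :=
  div_nonneg (sq_nonneg _) (ball_pos hy).le

lemma Pa_ge (a : E n) {y : E n} (hy : y ∈ ball (0 : E n) 1) : ‖y - a‖ ^ 2 ≤ Pa n a y := by
  rw [Pa, le_div_iff₀ (ball_pos hy)]
  nlinarith [sq_nonneg ‖y - a‖, sq_nonneg ‖y‖, mul_nonneg (sq_nonneg ‖y - a‖) (sq_nonneg ‖y‖)]

lemma kern_nonneg {ψ : ℝ → ℝ} (hψ : ∀ p, 0 ≤ ψ p) {a y : E n} (ha : a ∈ ball (0 : E n) 1)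
    (hy : y ∈ ball (0 : E n) 1) : 0 ≤ kern n ψ a y := by
  have h1 := ball_pos ha
  have h2 := ball_pos hy
  have h3 := Pa_nonneg a hy
  have h4 : 0 ≤ Zf (1 - ‖a‖ ^ 2) (Pa n a y) := mul_nonneg h3 (by linarith)
  exact mul_nonneg (Real.rpow_nonneg h2.le _) (mul_nonneg (Real.rpow_nonneg h4 _) (hψ _))

lemma kern_pos {ψ : ℝ → ℝ} {a y : E n} (ha : a ∈ ball (0 : E n) 1)
    (hy : y ∈ ball (0 : E n) 1) (hP : 0 < Pa n a y) (hψ : 0 < ψ (Pa n a y)) :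
    0 < kern n ψ a y := by
  have h1 := ball_pos ha
  have h2 := ball_pos hy
  have h4 : 0 < Zf (1 - ‖a‖ ^ 2) (Pa n a y) := mul_pos hP (by linarith)
  exact mul_pos (Real.rpow_pos_of_pos h2 _) (mul_pos (Real.rpow_pos_of_pos h4 _) hψ)

/-- The kernel is jointly smooth, because `ψ` vanishes near the diagonal, where `Z^(1-n/2)` is
singular. -/
lemma kern_smooth {ψ : ℝ → ℝ} {α : ℝ} (hα : 0 < α) (hψ : ContDiff ℝ ∞ ψ)
    (h0 : ∀ p < α, ψ p = 0) :
    ContDiffOn ℝ ∞ (fun q : E n × E n => kern n ψ q.1 q.2) (ball 0 1 ×ˢ ball 0 1) := by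
  have hP : ContDiffOn ℝ ∞ (fun q : E n × E n => Pa n q.1 q.2) (ball 0 1 ×ˢ ball 0 1) := by
    unfold Pa
    refine ContDiffOn.div ?_ ?_ fun q hq => (ball_pos hq.2).ne'
    · exact (contDiffOn_snd.sub contDiffOn_fst).norm_sq ℝ
    · exact contDiffOn_const.sub (contDiffOn_snd.norm_sq ℝ)
  intro q hq
  have hW : ball (0 : E n) 1 ×ˢ ball (0 : E n) 1 ∈ 𝓝 q :=
    (isOpen_ball.prod isOpen_ball).mem_nhds hq
  have hPq := hP.contDiffAt hW
  refine ContDiffAt.contDiffWithinAt ?_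
  rcases lt_or_ge (Pa n q.1 q.2) α with h | h
  · have : (fun q : E n × E n => kern n ψ q.1 q.2) =ᶠ[𝓝 q] fun _ => 0 := by
      filter_upwards [hPq.continuousAt.eventually (Iio_mem_nhds h)] with z hz
      simp [kern, h0 _ hz]
    exact contDiffAt_const.congr_of_eventuallyEq this
  · have h1 := ball_pos hq.1
    have h2 := ball_pos hq.2
    have h4 : Zf (1 - ‖q.1‖ ^ 2) (Pa n q.1 q.2) ≠ 0 :=
      (mul_pos (hα.trans_le h) (by linarith)).ne'
    have hZ : ContDiffAt ℝ ∞ (fun q : E n × E n => Zf (1 - ‖q.1‖ ^ 2) (Pa n q.1 q.2)) q :=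
      hPq.mul ((contDiffAt_const.sub (contDiffAt_fst.norm_sq ℝ)).add hPq)
    have hd : ContDiffAt ℝ ∞ (fun q : E n × E n => 1 - ‖q.2‖ ^ 2) q :=
      contDiffAt_const.sub (contDiffAt_snd.norm_sq ℝ)
    exact (hd.rpow_const_of_ne h2.ne').mul ((hZ.rpow_const_of_ne h4).mul
      (hψ.contDiffAt.comp q hPq))

lemma kernG_smooth {η : ℝ} (hη : 0 < η) :
    ContDiffOn ℝ ∞ (fun q : E n × E n => kern n (deriv (Gs η)) q.1 q.2) (ball 0 1 ×ˢ ball 0 1) :=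
  kern_smooth hη (dGs_contDiff η) fun _ hp => dGs_zero hη hp

lemma kernG_cont {η : ℝ} (hη : 0 < η) {a : E n} (ha : a ∈ ball (0 : E n) 1) :
    ContinuousOn (kern n (deriv (Gs η)) a) (ball 0 1) :=
  (kernG_smooth hη).continuousOn.comp (f := fun y : E n => (a, y)) (by fun_prop)
    fun _ hy => ⟨ha, hy⟩

/-- The weighted mean with kernel `kern n (deriv (Gs ε)) a` does not depend on `ε`. -/
lemma invariance {a : E n} (ha : a ∈ ball (0 : E n) 1) {R : ℝ} (hR : R < 1) {η ε : ℝ}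
    (hε : 0 < ε) (hεη : ε ≤ η) (hK : ∀ y ∈ ball (0 : E n) 1, R < ‖y‖ → 2 * η ≤ Pa n a y)
    {u : E n → ℝ} (hu : ContDiffOn ℝ 2 u (ball 0 1)) (hH : HHarmonic n u) :
    ∫ y in closedBall (0 : E n) R, u y * kern n (deriv (Gs η)) a y =
      ∫ y in closedBall (0 : E n) R, u y * kern n (deriv (Gs ε)) a y := by
  have hη := hε.trans_le hεη
  have hG : ContDiff ℝ 1 (fun p => Gs η p - Gs ε p) :=
    ((Gs_contDiff η).sub (Gs_contDiff ε)).of_le (by norm_num)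
  -- The two cutoffs agree for `P ≤ ε` and for `P ≥ 2η`, so their difference has a profile `f`
  -- of compact support, to which Green's formula applies.
  obtain ⟨f, g, hf, hg, h0, hfg⟩ := exists_radial (n : ℝ) (ball_pos ha) hε hG (β := 2 * η)
    (fun p hp => by rw [Gs_zero hε hp, Gs_zero hη (hp.trans hεη), sub_zero])
    (fun p hp => by rw [Gs_one hη hp, Gs_one hε (by linarith), sub_self])
  have key := green a hR hf hg h0 hK hu hH
  have hi : ∀ {δ : ℝ}, 0 < δ → IntegrableOn (fun y => u y * kern n (deriv (Gs δ)) a y)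
      (closedBall (0 : E n) R) := fun hδ =>
    ((hu.continuousOn.mul (kernG_cont hδ ha)).mono (closedBall_subset_ball hR)).integrableOn_compact
      (isCompact_closedBall _ _)
  rw [← sub_eq_zero, ← integral_sub (hi hη) (hi hε)]
  have h4 : ∀ y, u y * ((1 - ‖y‖ ^ 2) ^ (-(n : ℝ)) *
      (4 * Zf (1 - ‖a‖ ^ 2) (Pa n a y) * deriv g (Pa n a y)
        + 2 * n * (1 - ‖a‖ ^ 2 + 2 * Pa n a y) * g (Pa n a y))) =
      4 * (u y * kern n (deriv (Gs η)) a y - u y * kern n (deriv (Gs ε)) a y) := by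
    intro y
    have hd : ∀ δ p, DifferentiableAt ℝ (Gs δ) p := fun δ =>
      (Gs_contDiff δ).differentiable (by norm_num)
    rw [hfg, deriv_fun_sub (hd _ _) (hd _ _), kern, kern]
    ring
  simp only [h4, integral_const_mul] at key
  linarith

/-- Mean value property of `H`-harmonic functions. By invariance the radial weight may be
concentrated as closely around `a` as desired. -/
lemma mean_value {a : E n} (ha : a ∈ ball (0 : E n) 1) {R : ℝ} (hR : R < 1) {η : ℝ}
    (hη : 0 < η) (hK : ∀ y ∈ ball (0 : E n) 1, R < ‖y‖ → 2 * η ≤ Pa n a y)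
    {u : E n → ℝ} (hu : ContDiffOn ℝ 2 u (ball 0 1)) (hH : HHarmonic n u) :
    ∫ y in closedBall (0 : E n) R, u y * kern n (deriv (Gs η)) a y =
      u a * ∫ y in closedBall (0 : E n) R, kern n (deriv (Gs η)) a y := by
  have hsub : closedBall (0 : E n) R ⊆ ball 0 1 := closedBall_subset_ball hR
  have hi : ∀ {f : E n → ℝ}, ContinuousOn f (ball 0 1) →
      IntegrableOn f (closedBall (0 : E n) R) := fun hf =>
    (hf.mono hsub).integrableOn_compact (isCompact_closedBall _ _)
  have hv : ContDiffOn ℝ 2 (fun y => u y - u a) (ball 0 1) := hu.sub contDiffOn_const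
  have hHv : HHarmonic n (fun y => u y - u a) := by
    intro x hx
    have := hH x hx
    simpa only [lap, Nder, fderiv_sub_const] using this
  have hH1 : HHarmonic n (fun _ => (1 : ℝ)) := by
    intro x hx
    simp [lap, Nder]
  set M := ∫ y in closedBall (0 : E n) R, kern n (deriv (Gs η)) a y with hM
  have hM0 : 0 ≤ M := setIntegral_nonneg measurableSet_closedBall fun y hy =>
    kern_nonneg (dGs_nonneg hη) ha (hsub hy)
  have key : ∀ w > 0, |∫ y in closedBall (0 : E n) R, (u y - u a) * kern n (deriv (Gs η)) a y| ≤
      w * M := by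
    intro w hw
    have hc := hu.continuousOn.continuousAt (isOpen_ball.mem_nhds ha)
    obtain ⟨δ, hδ, hδw⟩ := Metric.continuousAt_iff.1 hc w hw
    -- The weight lives on `P ≤ 2ε`, and `|y-a|² ≤ P`, so `ε ≤ δ²/4` forces `|y-a| < δ`.
    have hε : 0 < min η (δ ^ 2 / 4) := lt_min hη (by positivity)
    have hεη : min η (δ ^ 2 / 4) ≤ η := min_le_left _ _
    have hεδ : min η (δ ^ 2 / 4) ≤ δ ^ 2 / 4 := min_le_right _ _
    generalize min η (δ ^ 2 / 4) = ε at hε hεη hεδ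
    have e1 : M = ∫ y in closedBall (0 : E n) R, kern n (deriv (Gs ε)) a y := by
      simpa using invariance ha hR hε hεη hK contDiffOn_const hH1
    rw [invariance ha hR hε hεη hK hv hHv, e1, ← integral_const_mul,
      ← Real.norm_eq_abs]
    refine norm_integral_le_of_norm_le
      (hi (f := fun y => w * kern n (deriv (Gs ε)) a y)
        (continuousOn_const.mul (kernG_cont hε ha))) ?_
    filter_upwards [ae_restrict_mem measurableSet_closedBall] with y hyR
    have hy := hsub hyR
    have hk := kern_nonneg (dGs_nonneg hε) ha hy
    rw [norm_mul, Real.norm_of_nonneg hk]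
    rcases lt_or_ge (2 * ε) (Pa n a y) with hp | hp
    · simp [kern, dGs_zero' hε hp]
    · refine mul_le_mul_of_nonneg_right ?_ hk
      have h1 := Pa_ge a hy
      refine (hδw ?_).le
      rw [dist_eq_norm]
      nlinarith [norm_nonneg (y - a)]
  have hI : ∫ y in closedBall (0 : E n) R, (u y - u a) * kern n (deriv (Gs η)) a y = 0 := by
    by_contra hne
    have hpos := abs_pos.2 hne
    generalize ∫ y in closedBall (0 : E n) R, (u y - u a) * kern n (deriv (Gs η)) a y = I
      at key hpos
    have := key (|I| / (2 * (M + 1))) (by positivity)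
    rw [div_mul_eq_mul_div, le_div_iff₀ (by positivity)] at this
    nlinarith
  have hk := kernG_cont hη ha
  simp only [sub_mul] at hI
  rw [integral_sub (hi (f := fun y => u y * kern n (deriv (Gs η)) a y) (hu.continuousOn.mul hk))
    (hi (f := fun y => u a * kern n (deriv (Gs η)) a y) (continuousOn_const.mul hk)),
    integral_const_mul] at hI
  linarith

/-- The total mass of the kernel is positive: moving away from `a` along a segment of length `τ`,
`P` runs from `0` to at least `τ²`, so by continuity it takes a value at which the profile is
positive. -/
lemma kernG_int_pos (hn : 0 < n) {a : E n} (ha : a ∈ ball (0 : E n) 1) {R τ : ℝ} (hR : R < 1)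
    (hτ : 0 < τ) (haR : ‖a‖ + τ < R) :
    0 < ∫ y in closedBall (0 : E n) R, kern n (deriv (Gs (τ ^ 2 / 2))) a y := by
  have hη : 0 < τ ^ 2 / 2 := by positivity
  have hsub : closedBall (0 : E n) R ⊆ ball 0 1 := closedBall_subset_ball hR
  set e : E n := EuclideanSpace.single ⟨0, hn⟩ 1 with he
  have hen : ‖e‖ = 1 := by simp [he]
  have hseg : ∀ t ∈ Icc (0 : ℝ) τ, a + t • e ∈ ball (0 : E n) R := by
    intro t ht
    have h1 : ‖a + t • e‖ ≤ ‖a‖ + t := by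
      refine (norm_add_le _ _).trans ?_
      rw [norm_smul, hen, Real.norm_of_nonneg ht.1, mul_one]
    rw [mem_ball_zero_iff]
    linarith [ht.2]
  have hball : ball (0 : E n) R ⊆ closedBall 0 R := ball_subset_closedBall
  obtain ⟨p, hp, hpos⟩ := dGs_pos hη
  have hcP : ContinuousOn (fun t : ℝ => Pa n a (a + t • e)) (Icc 0 τ) :=
    (Pa_cont a).comp (by fun_prop) fun t ht => hsub (hball (hseg t ht))
  obtain ⟨t, ht, htp⟩ := intermediate_value_Icc hτ.le hcP (show p ∈ Icc _ _ by
    refine ⟨?_, ?_⟩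
    · simp [Pa]; linarith [hp.1]
    · have := Pa_ge a (hsub (hball (hseg τ ⟨hτ.le, le_rfl⟩)))
      rw [add_sub_cancel_left, norm_smul, hen, mul_one, Real.norm_of_nonneg hτ.le] at this
      linarith [hp.2])
  have hy := hseg t ht
  have hkp : 0 < kern n (deriv (Gs (τ ^ 2 / 2))) a (a + t • e) :=
    kern_pos ha (hsub (hball hy)) (by simp only at htp; rw [htp]; linarith [hp.1])
      (by simp only at htp; rwa [htp])
  have hc := kernG_cont hη ha
  have hkn : ∀ y ∈ closedBall (0 : E n) R, 0 ≤ kern n (deriv (Gs (τ ^ 2 / 2))) a y :=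
    fun y hy => kern_nonneg (dGs_nonneg hη) ha (hsub hy)
  rw [setIntegral_pos_iff_support_of_nonneg_ae]
  · have hev : Function.support (kern n (deriv (Gs (τ ^ 2 / 2))) a) ∩ closedBall (0 : E n) R ∈
        𝓝 (a + t • e) := by
      filter_upwards [(hc.continuousAt (isOpen_ball.mem_nhds (hsub (hball hy)))).eventually
        (Ioi_mem_nhds hkp), isOpen_ball.mem_nhds hy] with z hz hzR
      exact ⟨(ne_of_gt hz), hball hzR⟩
    exact Measure.measure_pos_of_mem_nhds _ hev
  · filter_upwards [ae_restrict_mem measurableSet_closedBall] with y hy using hkn y hy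
  · exact (hc.mono hsub).integrableOn_compact (isCompact_closedBall _ _)

/-- `H`-harmonic functions of class `C²` are smooth: locally `u` is the quotient of
`∫ u(y)k(a,y)dy` by `∫ k(a,y)dy` with a smooth kernel `k`. -/
lemma regularity (hn : 0 < n) {u : E n → ℝ} (hu : ContDiffOn ℝ 2 u (ball 0 1))
    (hH : HHarmonic n u) : ContDiffOn ℝ ∞ u (ball 0 1) := by
  intro x hx
  rw [mem_ball_zero_iff] at hx
  obtain ⟨ρ, hρ, hρ1⟩ := exists_between hx
  have hρ0 : 0 < ρ := (norm_nonneg x).trans_lt hρ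
  -- For `|a| < ρ` the support of the kernel, contained in `P ≤ τ²`, stays inside the ball of
  -- radius `R`, because `ρ + τ < R`.
  set τ := (1 - ρ) / 4 with hτd
  set R := (1 + ρ) / 2 with hRd
  have hτ : 0 < τ := by rw [hτd]; linarith
  have hR : R < 1 := by rw [hRd]; linarith
  have hR0 : 0 < R := by rw [hRd]; linarith
  have hRτ : ρ + τ < R := by rw [hτd, hRd]; linarith
  have hη : 0 < τ ^ 2 / 2 := by positivity
  have hsub : closedBall (0 : E n) R ⊆ ball 0 1 := closedBall_subset_ball hR
  have hsubρ : ball (0 : E n) ρ ⊆ ball 0 1 := ball_subset_ball hρ1.le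
  have hint : ∀ f : E n → ℝ, ContinuousOn f (ball 0 1) →
      ContDiffOn ℝ ∞ (fun a => ∫ y in closedBall (0 : E n) R,
        f y * kern n (deriv (Gs (τ ^ 2 / 2))) a y) (ball 0 ρ) := fun f hf =>
    smooth_param hR0 ((hf.mono hsub).integrableOn_compact (isCompact_closedBall _ _))
      (isOpen_ball.prod isOpen_ball) (kernG_smooth hη) (prod_mono hsubρ hsub)
  have hpos : ∀ a ∈ ball (0 : E n) ρ,
      0 < ∫ y in closedBall (0 : E n) R, 1 * kern n (deriv (Gs (τ ^ 2 / 2))) a y := by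
    intro a ha
    simp only [one_mul]
    exact kernG_int_pos hn (hsubρ ha) hR hτ (by rw [mem_ball_zero_iff] at ha; linarith)
  have hq := (hint u hu.continuousOn).div (hint (fun _ => 1) continuousOn_const)
    fun a ha => (hpos a ha).ne'
  refine ContDiffAt.contDiffWithinAt ?_
  have hxρ : x ∈ ball (0 : E n) ρ := by simpa using hρ
  refine (hq.contDiffAt (isOpen_ball.mem_nhds hxρ)).congr_of_eventuallyEq ?_
  filter_upwards [isOpen_ball.mem_nhds hxρ] with a ha
  simp only [Pi.div_apply]
  rw [eq_div_iff (hpos a ha).ne']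
  simp only [one_mul]
  refine (mean_value (hsubρ ha) hR hη ?_ hu hH).symm
  intro y hy hyR
  rw [mem_ball_zero_iff] at ha
  have h1 := Pa_ge a hy
  have h2 : τ ≤ ‖y - a‖ := by linarith [norm_sub_norm_le y a]
  nlinarith

end

/-! ### The theorem -/

/-- For every `H`-harmonic `u` on `B_n` there is a unique Euclidean harmonic
`v` on `B_n` with `v(0) = 0` such that
`u(rζ) = u(0) + ∫_0^1 v(rtζ)[(1−t)(1−tr²)]^{n/2−1} dt/t` for all `0 ≤ r < 1`, `ζ ∈ S^{n-1}`. -/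
theorem stmt14 (n : ℕ) (hn : 3 ≤ n) (u : E n → ℝ)
    (hu : ContDiffOn ℝ 2 u (ball (0 : E n) 1)) (hH : HHarmonic n u) :
    ∃ v : E n → ℝ,
      (ContDiffOn ℝ 2 v (ball (0 : E n) 1) ∧ (∀ x ∈ ball (0 : E n) 1, lap n v x = 0) ∧
        v 0 = 0 ∧
        ∀ r ∈ Ico (0 : ℝ) 1, ∀ ζ ∈ sphere (0 : E n) 1,
          u (r • ζ) = u 0 +
            ∫ t in (0 : ℝ)..1,
              v ((r * t) • ζ) * ((1 - t) * (1 - t * r ^ 2)) ^ ((n : ℝ) / 2 - 1) / t) ∧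
      (∀ w : E n → ℝ,
        (ContDiffOn ℝ 2 w (ball (0 : E n) 1) ∧ (∀ x ∈ ball (0 : E n) 1, lap n w x = 0) ∧
          w 0 = 0 ∧
          ∀ r ∈ Ico (0 : ℝ) 1, ∀ ζ ∈ sphere (0 : E n) 1,
            u (r • ζ) = u 0 +
              ∫ t in (0 : ℝ)..1,
                w ((r * t) • ζ) * ((1 - t) * (1 - t * r ^ 2)) ^ ((n : ℝ) / 2 - 1) / t) →
        EqOn w v (ball (0 : E n) 1)) := by
  exact smooth_case hn (regularity (by omega) hu hH) hH
end
end

section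
/- There exists a constant c_n > 0, depending only on n, such that the function η(r,s) := c_n (1−r²)(1−r²s²)^{2−n}[(1−s)(1−sr²)]^{n/2−2} s^{n/2−1} on [0,1)×(0,1) satisfies: (i) P_e(rζ,ξ) = ∫_0^1 η(r,s) P_h(rsζ,ξ) ds for all 0 ≤ r < 1 and all ζ,ξ ∈ S^{n-1}; (ii) there is a constant C (depending only on n) with ∫_0^1 η(r,s) ds ≤ C for every r ∈ [0,1). -/
/-!
Write `A = |rζ-ξ|²`, `N(s) = (1-s)(1-sr²)` and `D(s) = |rsζ-ξ|²`. Expanding the squared norms gives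
`D(s) = N(s) + A s`. Hence `v(s) = N(s)/D(s)` maps `[0,1]` to `[0,1]` with `v(0) = 1`, `v(1) = 0`,
`1 - v = A s / D` and `v' = -A (1-r²s²)/D²`. Collecting powers (`power_identity`),
`η(r,s) P_h(rsζ,ξ) = c (1-r²) A^(-n/2) · v^(n/2-2) (1-v)^(n/2-1) · (-v')`,
so the integral equals `c B(n/2-1, n/2) · (1-r²)/|rζ-ξ|ⁿ`; the right constant is
`c = 1 / B(n/2-1, n/2)` (`poisson_repr`). The substitution is carried out by differentiating the
incomplete Beta integral composed with `v`, which also yields integrability since the derivative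
has a sign.

For the uniform bound, `1-r²s ≤ 1-r²s²` and `s ≤ 1` give
`η(r,s) ≤ c (1-r²)(1-s)^(n/2-2) (1-r²s)^(-n/2)`, and with `w = (1-s)/(1-r²s)` the right-hand side is
`-c w^(n/2-2) w'`, of integral `c/(n/2-1)` (`etaKer_integral_le`).
-/


open MeasureTheory Metric Filter Topology Set
open scoped ContDiff ENNReal NNReal

noncomputable section

/-- The kernel `η(r,s) = c (1−r²)(1−r²s²)^{2−n}[(1−s)(1−sr²)]^{n/2−2} s^{n/2−1}`. -/
noncomputable def etaKer (n : ℕ) (c r s : ℝ) : ℝ :=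
  c * (1 - r ^ 2) * (1 - r ^ 2 * s ^ 2) ^ ((2 : ℝ) - (n : ℝ)) *
    ((1 - s) * (1 - s * r ^ 2)) ^ ((n : ℝ) / 2 - 2) * s ^ ((n : ℝ) / 2 - 1)

/-! ### Improper integrals and the incomplete Beta integral -/

/-- Fundamental theorem of calculus on `[0,1]` for a nonnegative derivative on the open interval:
integrability up to the endpoints comes for free. -/
lemma ftc_nonneg {F f : ℝ → ℝ} (hc : ContinuousOn F (Icc 0 1))
    (hd : ∀ s ∈ Ioo (0 : ℝ) 1, HasDerivAt F (f s) s) (h0 : ∀ s ∈ Ioo (0 : ℝ) 1, 0 ≤ f s) :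
    IntervalIntegrable f volume 0 1 ∧ ∫ s in (0 : ℝ)..1, f s = F 1 - F 0 := by
  have hi : IntervalIntegrable f volume 0 1 := by
    rw [intervalIntegrable_iff_integrableOn_Ioc_of_le zero_le_one]
    exact intervalIntegral.integrableOn_deriv_of_nonneg hc hd h0
  exact ⟨hi, intervalIntegral.integral_eq_sub_of_hasDerivAt_of_le zero_le_one hc hd hi⟩

/-- The density `v^p (1-v)^(p+1)` of the Beta distribution. -/
def betaDens (p v : ℝ) : ℝ := v ^ p * (1 - v) ^ (p + 1)

lemma betaDens_intervalIntegrable {p : ℝ} (hp : -1 < p) :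
    IntervalIntegrable (betaDens p) volume 0 1 := by
  refine (intervalIntegral.intervalIntegrable_rpow' hp).mul_continuousOn ?_
  exact ContinuousOn.rpow_const (by fun_prop) (fun x _ => Or.inr (by linarith))

lemma betaDens_pos {p v : ℝ} (hv : v ∈ Ioo (0 : ℝ) 1) : 0 < betaDens p v :=
  mul_pos (Real.rpow_pos_of_pos hv.1 _) (Real.rpow_pos_of_pos (by linarith [hv.2]) _)

/-- The incomplete Beta integral. -/
def incBeta (p x : ℝ) : ℝ := ∫ v in (0 : ℝ)..x, betaDens p v

lemma incBeta_zero (p : ℝ) : incBeta p 0 = 0 := by simp [incBeta]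

lemma incBeta_one_pos {p : ℝ} (hp : -1 < p) : 0 < incBeta p 1 :=
  intervalIntegral.intervalIntegral_pos_of_pos_on (betaDens_intervalIntegrable hp)
    (fun _ hv => betaDens_pos hv) zero_lt_one

lemma incBeta_continuousOn {p : ℝ} (hp : -1 < p) : ContinuousOn (incBeta p) (Icc 0 1) := by
  have h := (intervalIntegrable_iff_integrableOn_Icc_of_le (zero_le_one' ℝ)).1
    (betaDens_intervalIntegrable hp)
  have := intervalIntegral.continuousOn_primitive_interval (a := (0 : ℝ)) (b := 1)
    (f := betaDens p) (μ := volume) (by rwa [uIcc_of_le zero_le_one])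
  rwa [uIcc_of_le zero_le_one] at this

lemma incBeta_hasDerivAt {p v : ℝ} (hp : -1 < p) (hv : v ∈ Ioo (0 : ℝ) 1) :
    HasDerivAt (incBeta p) (betaDens p v) v := by
  have hco : ∀ x ∈ Ioo (0 : ℝ) 1, ContinuousAt (betaDens p) x := fun x hx =>
    (continuousAt_id.rpow_const (Or.inl hx.1.ne')).mul
      ((continuousAt_const.sub continuousAt_id).rpow_const (Or.inr (by linarith)))
  refine intervalIntegral.integral_hasDerivAt_right ?_ ?_ (hco v hv)
  · refine (betaDens_intervalIntegrable hp).mono_set ?_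
    rw [uIcc_of_le hv.1.le, uIcc_of_le zero_le_one]
    exact Icc_subset_Icc le_rfl hv.2.le
  · exact ContinuousAt.stronglyMeasurableAtFilter isOpen_Ioo hco v hv

/-! ### The integral representation of the Euclidean Poisson kernel -/

/-- Regrouping of powers: up to the factor `A^(-(p+2))`, the integrand is the Beta density at
`v = N/D` times `|v'| = A K / D²`. Here `n = 2p + 4`, and `1 - v = A s / D`. -/
lemma power_identity {n : ℕ} (hn : 3 ≤ n) {A K N D s : ℝ} (hA : 0 < A) (hK : 0 < K) (hN : 0 < N)
    (hD : 0 < D) (hs : 0 < s) (h : D = N + A * s) :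
    K ^ ((2 : ℝ) - n) * N ^ ((n : ℝ) / 2 - 2) * s ^ ((n : ℝ) / 2 - 1) * (K / D) ^ (n - 1) =
      A ^ (-((n : ℝ) / 2)) * (betaDens ((n : ℝ) / 2 - 2) (N / D) * (A * K / D ^ 2)) := by
  have h1 : 1 - N / D = A * s / D := by rw [h] at hD ⊢; field_simp; ring
  have hcast : ((n - 1 : ℕ) : ℝ) = (n : ℝ) - 1 := by push_cast [show 1 ≤ n by omega]; ring
  have eK : K ^ ((2 : ℝ) - n) * K ^ (n - 1) = K := by
    rw [← Real.rpow_natCast, hcast, ← Real.rpow_add hK]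
    ring_nf; exact Real.rpow_one K
  have eA : A ^ (-((n : ℝ) / 2)) * (A ^ ((n : ℝ) / 2 - 1) * A) = 1 := by
    nth_rewrite 3 [← Real.rpow_one A]
    rw [← Real.rpow_add hA, ← Real.rpow_add hA]
    ring_nf; exact Real.rpow_zero A
  have eD : D ^ ((n : ℝ) / 2 - 2) * D ^ ((n : ℝ) / 2 - 1) * D ^ 2 = D ^ (n - 1) := by
    rw [← Real.rpow_natCast D (n - 1), hcast, ← Real.rpow_natCast D 2, ← Real.rpow_add hD,
      ← Real.rpow_add hD]
    congr 1; push_cast; ring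
  rw [betaDens, h1, Real.div_rpow hN.le hD.le, show (n : ℝ) / 2 - 2 + 1 = (n : ℝ) / 2 - 1 by ring,
    Real.div_rpow (by positivity) hD.le, Real.mul_rpow hA.le hs.le, div_pow, ← eD]
  have q1 := (Real.rpow_pos_of_pos hD ((n : ℝ) / 2 - 2)).ne'
  have q2 := (Real.rpow_pos_of_pos hD ((n : ℝ) / 2 - 1)).ne'
  calc _ = (K ^ ((2 : ℝ) - n) * K ^ (n - 1)) * (N ^ ((n : ℝ) / 2 - 2) * s ^ ((n : ℝ) / 2 - 1)) /
        (D ^ ((n : ℝ) / 2 - 2) * D ^ ((n : ℝ) / 2 - 1) * D ^ 2) := by ring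
    _ = (A ^ (-((n : ℝ) / 2)) * (A ^ ((n : ℝ) / 2 - 1) * A)) * K *
        (N ^ ((n : ℝ) / 2 - 2) * s ^ ((n : ℝ) / 2 - 1)) /
        (D ^ ((n : ℝ) / 2 - 2) * D ^ ((n : ℝ) / 2 - 1) * D ^ 2) := by rw [eK, eA]; ring
    _ = _ := by field_simp

lemma poisson_repr {n : ℕ} (hn : 3 ≤ n) {r : ℝ} (hr : r ∈ Ico (0 : ℝ) 1) {ζ ξ : E n}
    (hζ : ‖ζ‖ = 1) (hξ : ‖ξ‖ = 1) {c : ℝ} (hc : c * incBeta ((n : ℝ) / 2 - 2) 1 = 1) :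
    Pe n (r • ζ) ξ = ∫ s in (0 : ℝ)..1, etaKer n c r s * Ph n ((r * s) • ζ) ξ := by
  obtain ⟨hr0, hr1⟩ := hr
  have hm : (3 : ℝ) ≤ n := by exact_mod_cast hn
  have hp : (-1 : ℝ) < (n : ℝ) / 2 - 2 := by linarith
  have hr2 : r ^ 2 < 1 := by nlinarith
  have hne : 0 < ‖r • ζ - ξ‖ := by
    have := norm_sub_norm_le ξ (r • ζ)
    rw [norm_smul, hζ, hξ, Real.norm_of_nonneg hr0, norm_sub_rev] at this
    linarith
  set A := ‖r • ζ - ξ‖ ^ 2 with hAdef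
  have hA : 0 < A := by positivity
  set N : ℝ → ℝ := fun s => (1 - s) * (1 - s * r ^ 2) with hN
  set D : ℝ → ℝ := fun s => N s + A * s with hD
  have hnorm : ∀ t : ℝ, ‖t • ζ - ξ‖ ^ 2 = t ^ 2 - 2 * t * inner ℝ ζ ξ + 1 := fun t => by
    rw [norm_sub_sq_real, norm_smul, hζ, hξ, real_inner_smul_left, mul_one, Real.norm_eq_abs,
      sq_abs]
    ring
  have hDs : ∀ s, ‖(r * s) • ζ - ξ‖ ^ 2 = D s := fun s => by
    simp only [hD, hN, hAdef, hnorm]; ring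
  have hN0 : ∀ s ∈ Icc (0 : ℝ) 1, 0 ≤ N s := fun s hs =>
    mul_nonneg (by linarith [hs.2]) (by nlinarith [hs.1, hs.2, sq_nonneg r])
  have hNpos : ∀ s ∈ Ioo (0 : ℝ) 1, 0 < N s := fun s hs =>
    mul_pos (by linarith [hs.2]) (by nlinarith [hs.1, hs.2, sq_nonneg r])
  have hD0 : ∀ s ∈ Icc (0 : ℝ) 1, 0 < D s := fun s hs => by
    rcases hs.1.eq_or_lt with h | h
    · simp [hD, hN, ← h]
    · have := hN0 s hs
      have := mul_pos hA h
      simp only [hD]; linarith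
  have hv : ∀ s ∈ Icc (0 : ℝ) 1, N s / D s ∈ Icc (0 : ℝ) 1 := fun s hs =>
    ⟨div_nonneg (hN0 s hs) (hD0 s hs).le, (div_le_one (hD0 s hs)).2
      (by simp only [hD]; nlinarith [mul_nonneg hA.le hs.1])⟩
  have hv' : ∀ s ∈ Ioo (0 : ℝ) 1, N s / D s ∈ Ioo (0 : ℝ) 1 := fun s hs =>
    ⟨div_pos (hNpos s hs) (hD0 s ⟨hs.1.le, hs.2.le⟩), (div_lt_one (hD0 s ⟨hs.1.le, hs.2.le⟩)).2
      (by simp only [hD]; linarith [mul_pos hA hs.1])⟩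
  have hK : ∀ s ∈ Ioo (0 : ℝ) 1, 0 < 1 - r ^ 2 * s ^ 2 := fun s hs => by
    have : s ^ 2 < 1 := by nlinarith [hs.1, hs.2]
    nlinarith [sq_nonneg r, sq_nonneg s]
  have hcpos : 0 < c := by
    have := incBeta_one_pos hp
    by_contra! h
    nlinarith
  have hint : ∀ s ∈ Ioo (0 : ℝ) 1, etaKer n c r s * Ph n ((r * s) • ζ) ξ =
      c * (1 - r ^ 2) * A ^ (-((n : ℝ) / 2)) * (betaDens ((n : ℝ) / 2 - 2) (N s / D s) *
        (A * (1 - r ^ 2 * s ^ 2) / D s ^ 2)) := fun s hs => by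
    have := power_identity hn hA (hK s hs) (hNpos s hs) (hD0 s ⟨hs.1.le, hs.2.le⟩) hs.1 rfl
    rw [mul_assoc _ (A ^ (-((n : ℝ) / 2))), ← this, etaKer, Ph, hDs, norm_smul, hζ, mul_one,
      Real.norm_eq_abs, sq_abs, mul_pow]
    ring
  have key := ftc_nonneg
    (F := fun s => -(c * (1 - r ^ 2) * A ^ (-((n : ℝ) / 2)) *
      incBeta ((n : ℝ) / 2 - 2) (N s / D s)))
    (f := fun s => etaKer n c r s * Ph n ((r * s) • ζ) ξ) ?_ ?_ ?_
  · rw [key.2]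
    have e1 : N 1 / D 1 = 0 := by simp [hN]
    have e0 : N 0 / D 0 = 1 := by simp [hN, hD]
    have hpow : A ^ (-((n : ℝ) / 2)) = (‖r • ζ - ξ‖ ^ n)⁻¹ := by
      rw [Real.rpow_neg hA.le, hAdef, ← Real.rpow_natCast _ 2, ← Real.rpow_mul hne.le,
        ← Real.rpow_natCast _ n]
      congr 2; push_cast; ring
    rw [e1, e0, incBeta_zero, hpow, Pe, norm_smul, hζ, mul_one, Real.norm_eq_abs, sq_abs]
    linear_combination (-(1 - r ^ 2) * (‖r • ζ - ξ‖ ^ n)⁻¹) * hc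
  · have hq : ContinuousOn (fun s => N s / D s) (Icc 0 1) :=
      ContinuousOn.div (by fun_prop) (by fun_prop) (fun s hs => (hD0 s hs).ne')
    exact (continuousOn_const.mul ((incBeta_continuousOn hp).comp hq hv)).neg
  · intro s hs
    have hDne := (hD0 s ⟨hs.1.le, hs.2.le⟩).ne'
    have dN : HasDerivAt N (-(1 - s * r ^ 2) - (1 - s) * r ^ 2) s := by
      have := ((hasDerivAt_id s).const_sub 1).mul (((hasDerivAt_id s).mul_const (r ^ 2)).const_sub 1)
      exact this.congr_deriv (by simp; ring)
    have dD : HasDerivAt D (-(1 - s * r ^ 2) - (1 - s) * r ^ 2 + A) s :=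
      (dN.add ((hasDerivAt_id s).const_mul A)).congr_deriv (by simp)
    have dv := dN.div dD hDne
    have := (((incBeta_hasDerivAt hp (hv' s hs)).comp s dv).const_mul
      (c * (1 - r ^ 2) * A ^ (-((n : ℝ) / 2)))).neg
    refine this.congr_deriv ?_
    rw [hint s hs]
    have : (-(1 - s * r ^ 2) - (1 - s) * r ^ 2) * D s
        - N s * (-(1 - s * r ^ 2) - (1 - s) * r ^ 2 + A) = -(A * (1 - r ^ 2 * s ^ 2)) := by
      simp only [hD, hN]; ring
    rw [this]; ring
  · intro s hs
    rw [hint s hs]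
    have := (betaDens_pos (p := (n : ℝ) / 2 - 2) (hv' s hs)).le
    have := (hK s hs).le
    have : 0 ≤ 1 - r ^ 2 := by linarith
    positivity

/-! ### The uniform bound for the integral of the kernel -/

/-- Since `1 - r²s ≤ 1 - r²s²` and `s ≤ 1`, the kernel is dominated by the derivative of
`-c/(n/2-1) · ((1-s)/(1-r²s))^(n/2-1)`, whose total increment does not depend on `r`. -/
lemma etaKer_integral_le {n : ℕ} (hn : 3 ≤ n) {r c : ℝ} (hc : 0 < c) (hr : r ∈ Ico (0 : ℝ) 1) :
    ∫ s in (0 : ℝ)..1, etaKer n c r s ≤ c / ((n : ℝ) / 2 - 1) := by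
  obtain ⟨hr0, hr1⟩ := hr
  have hm : (3 : ℝ) ≤ n := by exact_mod_cast hn
  have hr2 : r ^ 2 < 1 := by nlinarith
  have hq : 0 < (n : ℝ) / 2 - 1 := by linarith
  have hM : ∀ s ∈ Icc (0 : ℝ) 1, 0 < 1 - s * r ^ 2 := fun s hs => by
    nlinarith [hs.1, hs.2, sq_nonneg r]
  have hMK : ∀ s ∈ Icc (0 : ℝ) 1, 1 - s * r ^ 2 ≤ 1 - r ^ 2 * s ^ 2 := fun s hs => by
    nlinarith [mul_nonneg (mul_nonneg hs.1 (sub_nonneg.2 hs.2)) (sq_nonneg r)]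
  have h1r : 0 < 1 - r ^ 2 := by linarith
  have key := ftc_nonneg
    (F := fun s => -(c / ((n : ℝ) / 2 - 1) * ((1 - s) / (1 - s * r ^ 2)) ^ ((n : ℝ) / 2 - 1)))
    (f := fun s => c * (((1 - s) / (1 - s * r ^ 2)) ^ ((n : ℝ) / 2 - 2) *
      ((1 - r ^ 2) / (1 - s * r ^ 2) ^ 2))) ?_ ?_ ?_
  · calc ∫ s in (0 : ℝ)..1, etaKer n c r s ≤ ∫ s in (0 : ℝ)..1, c *
          (((1 - s) / (1 - s * r ^ 2)) ^ ((n : ℝ) / 2 - 2) *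
            ((1 - r ^ 2) / (1 - s * r ^ 2) ^ 2)) := by
          rw [intervalIntegral.integral_of_le zero_le_one,
            intervalIntegral.integral_of_le zero_le_one]
          -- Only the dominating function needs to be known integrable.
          refine integral_mono_of_nonneg ?_
            ((intervalIntegrable_iff_integrableOn_Ioc_of_le zero_le_one).1 key.1) ?_
          · refine (ae_restrict_iff' measurableSet_Ioc).2 (.of_forall fun s hs => ?_)
            have h1 := (hM s ⟨hs.1.le, hs.2⟩)
            have h2 := hMK s ⟨hs.1.le, hs.2⟩
            have h3 : 0 ≤ 1 - s := by linarith [hs.2]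
            have h4 : 0 ≤ 1 - r ^ 2 * s ^ 2 := by linarith
            have h5 := hs.1.le
            simp only [Pi.zero_apply, etaKer]
            positivity
          · refine (ae_restrict_iff' measurableSet_Ioc).2 (.of_forall fun s hs => ?_)
            have h1 := (hM s ⟨hs.1.le, hs.2⟩)
            have h2 := hMK s ⟨hs.1.le, hs.2⟩
            have h3 : 0 ≤ 1 - s := by linarith [hs.2]
            have b1 : (1 - r ^ 2 * s ^ 2) ^ ((2 : ℝ) - n) ≤ (1 - s * r ^ 2) ^ ((2 : ℝ) - n) :=
              Real.rpow_le_rpow_of_nonpos h1 h2 (by linarith)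
            have b2 : s ^ ((n : ℝ) / 2 - 1) ≤ 1 := Real.rpow_le_one hs.1.le hs.2 hq.le
            have e : (1 - s * r ^ 2) ^ ((2 : ℝ) - n) * (1 - s * r ^ 2) ^ ((n : ℝ) / 2 - 2) *
                (1 - s * r ^ 2) ^ ((n : ℝ) / 2 - 2) * (1 - s * r ^ 2) ^ 2 = 1 := by
              rw [← Real.rpow_natCast (1 - s * r ^ 2) 2, ← Real.rpow_add h1, ← Real.rpow_add h1,
                ← Real.rpow_add h1]
              push_cast; ring_nf; exact Real.rpow_zero _
            simp only [etaKer]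
            calc _ ≤ c * (1 - r ^ 2) * (1 - s * r ^ 2) ^ ((2 : ℝ) - n) *
                  ((1 - s) * (1 - s * r ^ 2)) ^ ((n : ℝ) / 2 - 2) * 1 := by
                  have := hs.1.le
                  gcongr
              _ = _ := by
                  have e1 := (Real.rpow_pos_of_pos h1 ((n : ℝ) / 2 - 2)).ne'
                  rw [Real.mul_rpow h3 h1.le, Real.div_rpow h3 h1.le, div_mul_div_comm,
                    ← mul_div_assoc, eq_div_iff (by positivity)]
                  linear_combination (c * (1 - r ^ 2) * (1 - s) ^ ((n : ℝ) / 2 - 2)) * e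
      _ = _ := by
          rw [key.2]
          simp [Real.zero_rpow hq.ne']
  · refine (continuousOn_const.mul (ContinuousOn.rpow_const ?_ fun _ _ => Or.inr hq.le)).neg
    exact ContinuousOn.div (by fun_prop) (by fun_prop) (fun s hs => (hM s hs).ne')
  · intro s hs
    have hMs := hM s ⟨hs.1.le, hs.2.le⟩
    have h3 : 0 < 1 - s := by linarith [hs.2]
    have dv := ((hasDerivAt_id s).const_sub 1).div
      (((hasDerivAt_id s).mul_const (r ^ 2)).const_sub 1) hMs.ne'
    have := ((dv.rpow_const (p := (n : ℝ) / 2 - 1) (Or.inl (div_pos h3 hMs).ne')).const_mul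
      (c / ((n : ℝ) / 2 - 1))).neg
    refine this.congr_deriv ?_
    simp only [id, Pi.div_apply, show (n : ℝ) / 2 - 1 - 1 = (n : ℝ) / 2 - 2 by ring]
    generalize (n : ℝ) / 2 - 1 = q at hq
    field_simp
    ring
  · intro s hs
    have hMs := hM s ⟨hs.1.le, hs.2.le⟩
    have h3 : 0 < 1 - s := by linarith [hs.2]
    positivity

/-- There is a constant `c_n > 0` such that the kernel
`η(r,s) = c_n(1−r²)(1−r²s²)^{2−n}[(1−s)(1−sr²)]^{n/2−2}s^{n/2−1}` satisfies
(i) `P_e(rζ,ξ) = ∫_0^1 η(r,s)P_h(rsζ,ξ)ds` for all `0 ≤ r < 1`, `ζ,ξ ∈ S^{n-1}`, and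
(ii) `∫_0^1 η(r,s)ds ≤ C` for a constant `C = C(n)` and every `r ∈ [0,1)`. -/
theorem stmt15 (n : ℕ) (hn : 3 ≤ n) :
    ∃ c : ℝ, 0 < c ∧
      (∀ r ∈ Ico (0 : ℝ) 1, ∀ ζ ∈ sphere (0 : E n) 1, ∀ ξ ∈ sphere (0 : E n) 1,
        Pe n (r • ζ) ξ = ∫ s in (0 : ℝ)..1, etaKer n c r s * Ph n ((r * s) • ζ) ξ) ∧
      (∃ C : ℝ, ∀ r ∈ Ico (0 : ℝ) 1, (∫ s in (0 : ℝ)..1, etaKer n c r s) ≤ C) := by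
  have hm : (3 : ℝ) ≤ n := by exact_mod_cast hn
  have hB := incBeta_one_pos (p := (n : ℝ) / 2 - 2) (by linarith)
  have hc := inv_pos.2 hB
  refine ⟨_, hc, fun r hr ζ hζ ξ hξ => ?_, _, fun r hr => etaKer_integral_le hn hc hr⟩
  exact poisson_repr hn hr (by simpa using hζ) (by simpa using hξ) (inv_mul_cancel₀ hB.ne')
end
end

section
/- Let η(r,s) = c_n (1−r²)(1−r²s²)^{2−n}[(1−s)(1−sr²)]^{n/2−2} s^{n/2−1} be the kernel for which P_e(rζ,ξ) = ∫_0^1 η(r,s)P_h(rsζ,ξ)ds. Let μ be a finite signed Borel measure on S^{n-1}, and set u = P_h[μ], v = P_e[μ]. Then v(rζ) = ∫_0^1 η(r,s) u(rsζ) ds for all 0 ≤ r < 1 and ζ ∈ S^{n-1}; moreover there is a constant C depending only on n such that M[v](ζ) ≤ C·M[u](ζ) for every ζ ∈ S^{n-1}, and hence for every 0 < p < ∞, ‖M[v]‖_{L^p(S^{n-1},σ)} ≤ C‖M[u]‖_{L^p(S^{n-1},σ)}. -/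
/-!
The identity `v(rζ) = ∫₀¹ η(r,s) u(rsζ) ds` is the kernel identity integrated against the measures,
by Fubini: for fixed `r < 1` the hyperbolic Poisson kernel is bounded along the segment
`{rsζ : 0 < s ≤ 1}`, and `η(r,·)` is integrable.

The maximal inequality follows once `∫₀¹ η(r,s) ds` is bounded uniformly in `r`. Put
`w = (1-s)/(1-rs)` and `a = n/2 - 2 > -1`. From `1 - rs ≤ 1 - sr² ≤ 2(1 - rs)` and
`1 - r²s² ≥ 1 - rs` one gets `η(r,s) ≤ 2c·max(1,2^a)·(1-r)(1-rs)⁻² w^a` (`etaKer_le`), and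
`(1-r)(1-rs)⁻² = -dw/ds`, so that the majorant is an exact derivative, with integral
`2c·max(1,2^a)/(a+1)` (`etaKer_integrable_and_bound`). The `L^p` inequality is obtained by
integrating the pointwise one.
-/

open MeasureTheory Metric Filter Topology Set
open scoped ContDiff ENNReal NNReal

noncomputable section

/-- The radial maximal function `M[u](ζ) = sup_{0<t<1} |u(tζ)|`, valued in `ℝ≥0∞`. -/
noncomputable def radMax (n : ℕ) (u : E n → ℝ) (ζ : E n) : ℝ≥0∞ :=
  ⨆ t ∈ Ioo (0 : ℝ) 1, (‖u (t • ζ)‖₊ : ℝ≥0∞)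

/-- The `L^p(S^{n-1},σ)` (quasi-)norm of the radial maximal function of `u`. -/
noncomputable def radMaxLp (n : ℕ) (p : ℝ) (u : E n → ℝ) : ℝ≥0∞ :=
  (∫⁻ ζ, radMax n u ζ ^ p ∂(sphMeasure n)) ^ (1 / p)

/-- The Möbius variable `w = (1-s)/(1-rs)` satisfies `dw/ds = -(1-r)/(1-rs)²`. -/
lemma hasDerivAt_moebius {r s : ℝ} (h : 1 - r * s ≠ 0) :
    HasDerivAt (fun s : ℝ => (1 - s) / (1 - r * s)) (-((1 - r) / (1 - r * s) ^ 2)) s := by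
  have h1 : HasDerivAt (fun s : ℝ => 1 - s) (-1) s := by
    simpa using (hasDerivAt_id s).const_sub 1
  have h2 : HasDerivAt (fun s : ℝ => 1 - r * s) (-r) s := by
    simpa using ((hasDerivAt_id s).const_mul r).const_sub 1
  refine (h1.div h2 h).congr_deriv ?_
  ring

lemma one_sub_mul_pos {r s : ℝ} (hr : r ∈ Ico (0 : ℝ) 1) (hs : s ∈ Icc (0 : ℝ) 1) :
    0 < 1 - r * s := by
  nlinarith [hr.1, hr.2, hs.1, hs.2, mul_nonneg hr.1 (sub_nonneg.2 hs.2)]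

/-- The majorant of `η(r,·)` is integrable with integral `1/(a+1)`, independently of `r`. -/
lemma majorant_integral {a r : ℝ} (ha : -1 < a) (hr : r ∈ Ico (0 : ℝ) 1) :
    IntervalIntegrable (fun s : ℝ => (1 - r) / (1 - r * s) ^ 2 * ((1 - s) / (1 - r * s)) ^ a)
      volume 0 1 ∧
    ∫ s in (0 : ℝ)..1, (1 - r) / (1 - r * s) ^ 2 * ((1 - s) / (1 - r * s)) ^ a = 1 / (a + 1) := by
  have ha' : 0 < a + 1 := by linarith
  set F : ℝ → ℝ := fun s => -(((1 - s) / (1 - r * s)) ^ (a + 1) / (a + 1)) with hF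
  have hcont : ContinuousOn F (Icc 0 1) := by
    have : ContinuousOn (fun s : ℝ => (1 - s) / (1 - r * s)) (Icc 0 1) :=
      ContinuousOn.div (by fun_prop) (by fun_prop) fun s hs => (one_sub_mul_pos hr hs).ne'
    exact ((this.rpow_const fun _ _ => Or.inr ha'.le).div_const _).neg
  have hderiv : ∀ s ∈ Ioo (0 : ℝ) 1, HasDerivAt F
      ((1 - r) / (1 - r * s) ^ 2 * ((1 - s) / (1 - r * s)) ^ a) s := by
    intro s hs
    have hp := one_sub_mul_pos hr (Ioo_subset_Icc_self hs)
    have hw : 0 < (1 - s) / (1 - r * s) := div_pos (by linarith [hs.2]) hp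
    refine ((((hasDerivAt_moebius hp.ne').rpow_const (p := a + 1)
      (Or.inl hw.ne')).div_const (a + 1)).neg).congr_deriv ?_
    rw [add_sub_cancel_right]
    field_simp
  have hnn : ∀ s ∈ Ioo (0 : ℝ) 1,
      0 ≤ (1 - r) / (1 - r * s) ^ 2 * ((1 - s) / (1 - r * s)) ^ a := by
    intro s hs
    have hp := one_sub_mul_pos hr (Ioo_subset_Icc_self hs)
    have h1 : 0 ≤ 1 - r := by linarith [hr.2]
    have h2 : 0 ≤ 1 - s := by linarith [hs.2]
    positivity
  have hint : IntervalIntegrable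
      (fun s : ℝ => (1 - r) / (1 - r * s) ^ 2 * ((1 - s) / (1 - r * s)) ^ a) volume 0 1 :=
    (intervalIntegrable_iff_integrableOn_Ioc_of_le zero_le_one).2
      (intervalIntegral.integrableOn_deriv_of_nonneg hcont hderiv hnn)
  refine ⟨hint, ?_⟩
  rw [intervalIntegral.integral_eq_sub_of_hasDerivAt_of_le zero_le_one hcont hderiv hint]
  simp [hF, Real.zero_rpow ha'.ne']

lemma etaKer_nonneg {n : ℕ} {c r s : ℝ} (hc : 0 < c) (hr : r ∈ Ico (0 : ℝ) 1)
    (hs : s ∈ Ioo (0 : ℝ) 1) : 0 ≤ etaKer n c r s := by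
  have hr0 := hr.1
  have hs0 := hs.1
  have hp := one_sub_mul_pos hr (Ioo_subset_Icc_self hs)
  have h1 : 0 ≤ 1 - r ^ 2 := by nlinarith [hr.2]
  have h2 : 0 ≤ 1 - r ^ 2 * s ^ 2 := by nlinarith [mul_nonneg hr0 hs0.le]
  have h3 : 0 ≤ 1 - s := by linarith [hs.2]
  have h4 : 0 ≤ 1 - s * r ^ 2 := by nlinarith [hs.2]
  unfold etaKer
  positivity

/-- The pointwise majorant of `η`, from `1 - rs ≤ 1 - sr² ≤ 2(1 - rs)`. The factor `max 1 (2^a)`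
covers both signs of the exponent `a = n/2 - 2`. -/
lemma etaKer_le {n : ℕ} (hn : 3 ≤ n) {c r s : ℝ} (hc : 0 < c) (hr : r ∈ Ico (0 : ℝ) 1)
    (hs : s ∈ Ioo (0 : ℝ) 1) :
    etaKer n c r s ≤ 2 * c * max 1 ((2 : ℝ) ^ ((n : ℝ) / 2 - 2)) *
      ((1 - r) / (1 - r * s) ^ 2 * ((1 - s) / (1 - r * s)) ^ ((n : ℝ) / 2 - 2)) := by
  have hn' : (3 : ℝ) ≤ n := by exact_mod_cast hn
  have hr0 := hr.1
  have hr1 := hr.2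
  have hs0 := hs.1
  have hs1 := hs.2
  have hp := one_sub_mul_pos hr (Ioo_subset_Icc_self hs)
  have hrs : 0 ≤ r * s := mul_nonneg hr0 hs0.le
  have h1r : 0 < 1 - r := by linarith
  have h1s : 0 < 1 - s := by linarith
  have hq : 1 - r * s ≤ 1 - s * r ^ 2 := by nlinarith
  have hq2 : 1 - s * r ^ 2 ≤ 2 * (1 - r * s) := by nlinarith
  set a : ℝ := (n : ℝ) / 2 - 2 with ha
  set K : ℝ := max 1 ((2 : ℝ) ^ a) with hK
  have hK0 : 0 < K := lt_max_of_lt_left one_pos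
  have e1 : 1 - r ^ 2 ≤ 2 * (1 - r) := by nlinarith
  have e1' : 0 ≤ 1 - r ^ 2 := by nlinarith
  have e2 : (1 - r ^ 2 * s ^ 2) ^ ((2 : ℝ) - (n : ℝ)) ≤ (1 - r * s) ^ ((2 : ℝ) - (n : ℝ)) :=
    Real.rpow_le_rpow_of_nonpos hp (by nlinarith) (by linarith)
  have e3 : (1 - s * r ^ 2) ^ a ≤ K * (1 - r * s) ^ a := by
    rcases le_total 0 a with h | h
    · calc (1 - s * r ^ 2) ^ a ≤ (2 * (1 - r * s)) ^ a :=
            Real.rpow_le_rpow (hp.le.trans hq) hq2 h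
        _ = 2 ^ a * (1 - r * s) ^ a := Real.mul_rpow zero_le_two hp.le
        _ ≤ _ := by gcongr; exact le_max_right _ _
    · calc (1 - s * r ^ 2) ^ a ≤ 1 * (1 - r * s) ^ a := by
            rw [one_mul]; exact Real.rpow_le_rpow_of_nonpos hp hq h
        _ ≤ _ := by gcongr; exact le_max_left _ _
  have e4 : s ^ ((n : ℝ) / 2 - 1) ≤ 1 := Real.rpow_le_one hs0.le hs1.le (by linarith)
  -- the exponents combine because `(2 - n) + 2a = -2`
  have e5 : (1 - r * s) ^ ((2 : ℝ) - (n : ℝ)) * (1 - r * s) ^ a =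
      ((1 - r * s) ^ 2)⁻¹ * ((1 - r * s) ^ a)⁻¹ := by
    rw [← Real.rpow_add hp, ← Real.rpow_natCast, ← Real.rpow_neg hp.le, ← Real.rpow_neg hp.le,
      ← Real.rpow_add hp]
    congr 1
    rw [ha]
    push_cast
    ring
  unfold etaKer
  rw [← ha, Real.mul_rpow h1s.le (hp.le.trans hq), Real.div_rpow h1s.le hp.le]
  have hA : 0 ≤ (1 - s) ^ a := Real.rpow_nonneg h1s.le _
  have hB' : 0 ≤ (1 - r ^ 2 * s ^ 2) ^ ((2 : ℝ) - (n : ℝ)) :=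
    Real.rpow_nonneg (by nlinarith) _
  have hB : 0 ≤ (1 - r * s) ^ ((2 : ℝ) - (n : ℝ)) := Real.rpow_nonneg hp.le _
  have hD : 0 ≤ (1 - s * r ^ 2) ^ a := Real.rpow_nonneg (hp.le.trans hq) _
  have hE : 0 ≤ s ^ ((n : ℝ) / 2 - 1) := Real.rpow_nonneg hs0.le _
  have hG : 0 ≤ (1 - r * s) ^ a := Real.rpow_nonneg hp.le _
  calc _ ≤ c * (2 * (1 - r)) * (1 - r * s) ^ ((2 : ℝ) - (n : ℝ)) *
        ((1 - s) ^ a * (K * (1 - r * s) ^ a)) * 1 := by gcongr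
    _ = 2 * c * K * (1 - r) * (1 - s) ^ a *
        ((1 - r * s) ^ ((2 : ℝ) - (n : ℝ)) * (1 - r * s) ^ a) := by ring
    _ = _ := by rw [e5]; ring

lemma etaKer_measurable (n : ℕ) (c r : ℝ) : Measurable (etaKer n c r) := by
  unfold etaKer
  fun_prop

lemma ae_Ioc_mem_Ioo : ∀ᵐ s ∂(volume.restrict (Ioc (0 : ℝ) 1)), s ∈ Ioo (0 : ℝ) 1 := by
  rw [← restrict_Ioo_eq_restrict_Ioc]
  exact ae_restrict_mem measurableSet_Ioo

/-- `η(r,·)` has total mass bounded uniformly in `r`. -/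
lemma etaKer_integrable_and_bound {n : ℕ} (hn : 3 ≤ n) {c r : ℝ} (hc : 0 < c)
    (hr : r ∈ Ico (0 : ℝ) 1) :
    IntervalIntegrable (etaKer n c r) volume 0 1 ∧
    ∫ s in (0 : ℝ)..1, etaKer n c r s ≤
      2 * c * max 1 ((2 : ℝ) ^ ((n : ℝ) / 2 - 2)) * (1 / ((n : ℝ) / 2 - 2 + 1)) := by
  have hn' : (3 : ℝ) ≤ n := by exact_mod_cast hn
  obtain ⟨h1, h2⟩ := majorant_integral (a := (n : ℝ) / 2 - 2) (by linarith) hr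
  have h3 := h1.const_mul (2 * c * max 1 ((2 : ℝ) ^ ((n : ℝ) / 2 - 2)))
  have hint : IntervalIntegrable (etaKer n c r) volume 0 1 := by
    refine h3.mono_fun (etaKer_measurable n c r).aestronglyMeasurable ?_
    rw [uIoc_of_le zero_le_one]
    filter_upwards [ae_Ioc_mem_Ioo] with s hs
    rw [Real.norm_of_nonneg (etaKer_nonneg hc hr hs)]
    exact (etaKer_le hn hc hr hs).trans (le_abs_self _)
  refine ⟨hint, ?_⟩
  rw [← h2, ← intervalIntegral.integral_const_mul]
  exact intervalIntegral.integral_mono_on_of_le_Ioo zero_le_one hint h3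
    fun s hs => etaKer_le hn hc hr hs

/-- `P_h` is bounded by `(1-r)^{-2(n-1)}` on the ball of radius `r < 1`, uniformly in the boundary
point. -/
lemma Ph_norm_le {n : ℕ} {r : ℝ} (hr : r < 1) {x ξ : E n} (hx : ‖x‖ ≤ r) (hξ : ‖ξ‖ = 1) :
    ‖Ph n x ξ‖ ≤ (1 / (1 - r) ^ 2) ^ (n - 1) := by
  unfold Ph
  have hx0 := norm_nonneg x
  have h1 : 1 - r ≤ ‖x - ξ‖ := by
    have := norm_sub_norm_le ξ x
    rw [norm_sub_rev] at this
    linarith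
  have h2 : 0 < 1 - r := by linarith
  have h3 : 0 ≤ 1 - ‖x‖ ^ 2 := by nlinarith
  have h4 : 1 - ‖x‖ ^ 2 ≤ 1 := by nlinarith
  rw [Real.norm_of_nonneg (by positivity)]
  gcongr

lemma ae_mem_sphere {n : ℕ} {μ : Measure (E n)} (h : μ (sphere (0 : E n) 1)ᶜ = 0) :
    ∀ᵐ ξ ∂μ, ξ ∈ sphere (0 : E n) 1 := by
  rwa [ae_iff]

/-- The kernel `η(r,s) P_h(rsζ,ξ)` is integrable on the product, which justifies Fubini. -/
lemma integrable_prod {n : ℕ} (hn : 3 ≤ n) {c r : ℝ} (hc : 0 < c) (hr : r ∈ Ico (0 : ℝ) 1)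
    {ζ : E n} (hζ : ζ ∈ sphere (0 : E n) 1) (μ : Measure (E n)) [IsFiniteMeasure μ]
    (hμ : μ (sphere (0 : E n) 1)ᶜ = 0) :
    Integrable (fun q : ℝ × E n => etaKer n c r q.1 * Ph n ((r * q.1) • ζ) q.2)
      ((volume.restrict (Ioc (0 : ℝ) 1)).prod μ) := by
  have h1 : Integrable (etaKer n c r) (volume.restrict (Ioc (0 : ℝ) 1)) :=
    (intervalIntegrable_iff_integrableOn_Ioc_of_le zero_le_one).1
      (etaKer_integrable_and_bound hn hc hr).1
  have h2 : Integrable (fun q : ℝ × E n => etaKer n c r q.1)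
      ((volume.restrict (Ioc (0 : ℝ) 1)).prod μ) := h1.comp_fst μ
  refine h2.mul_bdd (c := (1 / (1 - r) ^ 2) ^ (n - 1)) ?_ ?_
  · unfold Ph
    apply Measurable.aestronglyMeasurable
    fun_prop
  · have hA : ∀ᵐ q ∂((volume.restrict (Ioc (0 : ℝ) 1)).prod μ), q.1 ∈ Ioc (0 : ℝ) 1 :=
      Measure.quasiMeasurePreserving_fst.ae (ae_restrict_mem measurableSet_Ioc)
    have hB : ∀ᵐ q ∂((volume.restrict (Ioc (0 : ℝ) 1)).prod μ), q.2 ∈ sphere (0 : E n) 1 :=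
      Measure.quasiMeasurePreserving_snd.ae (ae_mem_sphere hμ)
    filter_upwards [hA, hB] with q hq1 hq2
    refine Ph_norm_le hr.2 ?_ (by simpa using hq2)
    rw [norm_smul, mem_sphere_zero_iff_norm.1 hζ, mul_one,
      Real.norm_of_nonneg (mul_nonneg hr.1 hq1.1.le)]
    nlinarith [hr.1, hq1.2]

/-- The integral representation for a positive measure, together with the integrability of the
integrand. -/
lemma Pe_integral_eq {n : ℕ} (hn : 3 ≤ n) {c r : ℝ} (hc : 0 < c)
    (hr : r ∈ Ico (0 : ℝ) 1) {ζ : E n} (hζ : ζ ∈ sphere (0 : E n) 1)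
    (hker : ∀ ξ ∈ sphere (0 : E n) 1,
      Pe n (r • ζ) ξ = ∫ s in (0 : ℝ)..1, etaKer n c r s * Ph n ((r * s) • ζ) ξ)
    (μ : Measure (E n)) [IsFiniteMeasure μ] (hμ : μ (sphere (0 : E n) 1)ᶜ = 0) :
    IntervalIntegrable (fun s => etaKer n c r s * ∫ ξ, Ph n ((r * s) • ζ) ξ ∂μ) volume 0 1 ∧
    ∫ ξ, Pe n (r • ζ) ξ ∂μ =
      ∫ s in (0 : ℝ)..1, etaKer n c r s * ∫ ξ, Ph n ((r * s) • ζ) ξ ∂μ := by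
  have hI := integrable_prod hn hc hr hζ μ hμ
  constructor
  · rw [intervalIntegrable_iff_integrableOn_Ioc_of_le zero_le_one]
    have := hI.integral_prod_left
    simp only [integral_const_mul] at this
    exact this
  · have h1 : ∫ ξ, Pe n (r • ζ) ξ ∂μ =
        ∫ ξ, (∫ s in Ioc (0 : ℝ) 1, etaKer n c r s * Ph n ((r * s) • ζ) ξ) ∂μ := by
      refine integral_congr_ae ?_
      filter_upwards [ae_mem_sphere hμ] with ξ hξ
      rw [hker ξ hξ, intervalIntegral.integral_of_le zero_le_one]
    rw [h1, intervalIntegral.integral_of_le zero_le_one, ← integral_integral_swap hI]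
    simp only [integral_const_mul]

lemma smul_mem_unitBall {n : ℕ} {t : ℝ} (ht : t ∈ Ico (0 : ℝ) 1) {ζ : E n}
    (hζ : ζ ∈ sphere (0 : E n) 1) : t • ζ ∈ ball (0 : E n) 1 := by
  rw [mem_ball_zero_iff, norm_smul, mem_sphere_zero_iff_norm.1 hζ, mul_one,
    Real.norm_of_nonneg ht.1]
  exact ht.2

/-- Averaging against `η` costs at most a factor `D` in the radial maximal function when every
`η(r,·)` has mass at most `D`. -/
lemma radMax_le {n : ℕ} (hn : 3 ≤ n) {c D : ℝ} (hc : 0 < c) (hD : 0 < D)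
    (hbound : ∀ r ∈ Ico (0 : ℝ) 1, ∫ s in (0 : ℝ)..1, etaKer n c r s ≤ D)
    {u v : E n → ℝ} {ζ : E n}
    (hrep : ∀ r ∈ Ico (0 : ℝ) 1,
      v (r • ζ) = ∫ s in (0 : ℝ)..1, etaKer n c r s * u ((r * s) • ζ)) :
    radMax n v ζ ≤ ENNReal.ofReal D * radMax n u ζ := by
  by_cases htop : radMax n u ζ = ⊤
  · rw [htop, ENNReal.mul_top (by simpa using hD)]
    exact le_top
  have hu : ∀ t ∈ Ioo (0 : ℝ) 1, ‖u (t • ζ)‖ ≤ (radMax n u ζ).toReal := by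
    intro t ht
    have : (‖u (t • ζ)‖₊ : ℝ≥0∞) ≤ radMax n u ζ :=
      le_iSup₂ (f := fun t (_ : t ∈ Ioo (0 : ℝ) 1) => (‖u (t • ζ)‖₊ : ℝ≥0∞)) t ht
    simpa using ENNReal.toReal_mono htop this
  refine iSup₂_le fun r hr => ?_
  have hr' : r ∈ Ico (0 : ℝ) 1 := Ioo_subset_Ico_self hr
  have hv : ‖v (r • ζ)‖ ≤ D * (radMax n u ζ).toReal := by
    rw [hrep r hr']
    have hint := (etaKer_integrable_and_bound hn hc hr').1
    calc _ ≤ ∫ s in (0 : ℝ)..1, etaKer n c r s * (radMax n u ζ).toReal := by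
          refine intervalIntegral.norm_integral_le_of_norm_le zero_le_one ?_ (hint.mul_const _)
          rw [← ae_restrict_iff' measurableSet_Ioc]
          filter_upwards [ae_Ioc_mem_Ioo] with s hs
          have h0 := etaKer_nonneg (n := n) hc hr' hs
          rw [norm_mul, Real.norm_of_nonneg h0]
          exact mul_le_mul_of_nonneg_left
            (hu _ ⟨mul_pos hr.1 hs.1, by nlinarith [hr.1, hr.2, hs.1, hs.2]⟩) h0
      _ = (∫ s in (0 : ℝ)..1, etaKer n c r s) * (radMax n u ζ).toReal :=
          intervalIntegral.integral_mul_const _ _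
      _ ≤ _ := by gcongr; exact hbound r hr'
  rw [← ENNReal.ofReal_toReal htop, ← ENNReal.ofReal_mul hD.le, ← enorm_eq_nnnorm,
    ← ofReal_norm]
  exact ENNReal.ofReal_le_ofReal hv

lemma radMaxLp_le {n : ℕ} {C : ℝ≥0∞} (hC : C ≠ ⊤) {u v : E n → ℝ}
    (h : ∀ ζ ∈ sphere (0 : E n) 1, radMax n v ζ ≤ C * radMax n u ζ) {p : ℝ} (hp : 0 < p) :
    radMaxLp n p v ≤ C * radMaxLp n p u := by
  have hae : ∀ᵐ ζ ∂(sphMeasure n), ζ ∈ sphere (0 : E n) 1 :=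
    Measure.ae_smul_measure (ae_restrict_mem isClosed_sphere.measurableSet) _
  have hCp : C ^ p ≠ ⊤ := ENNReal.rpow_ne_top_of_nonneg hp.le hC
  unfold radMaxLp
  calc _ ≤ (∫⁻ ζ, C ^ p * radMax n u ζ ^ p ∂(sphMeasure n)) ^ (1 / p) := by
        refine ENNReal.rpow_le_rpow (lintegral_mono_ae ?_) (by positivity)
        filter_upwards [hae] with ζ hζ
        rw [← ENNReal.mul_rpow_of_nonneg _ _ hp.le]
        exact ENNReal.rpow_le_rpow (h ζ hζ) hp.le
    _ = _ := by
        rw [lintegral_const_mul' _ _ hCp, ENNReal.mul_rpow_of_nonneg _ _ (by positivity),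
          ← ENNReal.rpow_mul, mul_one_div_cancel hp.ne', ENNReal.rpow_one]

/-- Let `η` (with constant `c`) be the kernel with
`P_e(rζ,ξ) = ∫_0^1 η(r,s)P_h(rsζ,ξ)ds`. For a finite signed measure `μ = μp − μm` on
`S^{n-1}`, let `u = P_h[μ]`, `v = P_e[μ]`. Then `v(rζ) = ∫_0^1 η(r,s)u(rsζ)ds`; moreover
there is `C = C(n)` with `M[v] ≤ C·M[u]` pointwise on `S^{n-1}`, hence
`‖M[v]‖_{L^p} ≤ C‖M[u]‖_{L^p}` for every `0 < p < ∞`. -/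
theorem stmt16 (n : ℕ) (hn : 3 ≤ n) (c : ℝ) (hc : 0 < c)
    (hker : ∀ r ∈ Ico (0 : ℝ) 1, ∀ ζ ∈ sphere (0 : E n) 1, ∀ ξ ∈ sphere (0 : E n) 1,
      Pe n (r • ζ) ξ = ∫ s in (0 : ℝ)..1, etaKer n c r s * Ph n ((r * s) • ζ) ξ) :
    ∃ C : ℝ≥0∞, 0 < C ∧ C ≠ ⊤ ∧
      ∀ μp μm : Measure (E n), IsFiniteMeasure μp → IsFiniteMeasure μm →
        μp (sphere (0 : E n) 1)ᶜ = 0 → μm (sphere (0 : E n) 1)ᶜ = 0 →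
        ∀ u v : E n → ℝ,
        (∀ x ∈ ball (0 : E n) 1, u x = (∫ ξ, Ph n x ξ ∂μp) - ∫ ξ, Ph n x ξ ∂μm) →
        (∀ x ∈ ball (0 : E n) 1, v x = (∫ ξ, Pe n x ξ ∂μp) - ∫ ξ, Pe n x ξ ∂μm) →
        (∀ r ∈ Ico (0 : ℝ) 1, ∀ ζ ∈ sphere (0 : E n) 1,
          v (r • ζ) = ∫ s in (0 : ℝ)..1, etaKer n c r s * u ((r * s) • ζ)) ∧
        (∀ ζ ∈ sphere (0 : E n) 1, radMax n v ζ ≤ C * radMax n u ζ) ∧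
        (∀ p : ℝ, 0 < p → radMaxLp n p v ≤ C * radMaxLp n p u) := by
  have hn' : (3 : ℝ) ≤ n := by exact_mod_cast hn
  set D : ℝ := 2 * c * max 1 ((2 : ℝ) ^ ((n : ℝ) / 2 - 2)) * (1 / ((n : ℝ) / 2 - 2 + 1)) with hDdef
  have hD : 0 < D := by
    have h1 : 0 < max 1 ((2 : ℝ) ^ ((n : ℝ) / 2 - 2)) := lt_max_of_lt_left one_pos
    have h2 : 0 < (n : ℝ) / 2 - 2 + 1 := by linarith
    positivity
  refine ⟨ENNReal.ofReal D, by simpa using hD, ENNReal.ofReal_ne_top, ?_⟩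
  intro μp μm _ _ hp hm u v hu hv
  have hrep : ∀ r ∈ Ico (0 : ℝ) 1, ∀ ζ ∈ sphere (0 : E n) 1,
      v (r • ζ) = ∫ s in (0 : ℝ)..1, etaKer n c r s * u ((r * s) • ζ) := by
    intro r hr ζ hζ
    obtain ⟨ip, ep⟩ := Pe_integral_eq hn hc hr hζ (hker r hr ζ hζ) μp hp
    obtain ⟨im, em⟩ := Pe_integral_eq hn hc hr hζ (hker r hr ζ hζ) μm hm
    rw [hv _ (smul_mem_unitBall hr hζ), ep, em, ← intervalIntegral.integral_sub ip im]
    refine intervalIntegral.integral_congr fun s hs => ?_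
    rw [uIcc_of_le zero_le_one] at hs
    have hrs : r * s ∈ Ico (0 : ℝ) 1 :=
      ⟨mul_nonneg hr.1 hs.1, by linarith [one_sub_mul_pos hr hs]⟩
    simp only [hu _ (smul_mem_unitBall hrs hζ), mul_sub]
  have hmax : ∀ ζ ∈ sphere (0 : E n) 1, radMax n v ζ ≤ ENNReal.ofReal D * radMax n u ζ :=
    fun ζ hζ => radMax_le hn hc hD (fun r hr => (etaKer_integrable_and_bound hn hc hr).2)
      fun r hr => hrep r hr ζ hζ
  exact ⟨hrep, hmax, fun p hp0 => radMaxLp_le ENNReal.ofReal_ne_top hmax hp0⟩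
end
end
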